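/- arXiv:1812.05580 — 4 statements merged into one kernel-verified Lean document; each statement's English description precedes it below -/
import Mathlib

section
/- For every complex number q with |q| < 1, the sum over all nonnegative integers j of q^(2j^2) · (-q^(2j+1); q)_∞ / ((q^2; q^2)_j) equals the product over all positive integers j with j not congruent to 0, 3, or -3 modulo 7 of 1/(1 - q^j). -/
/-- The finite q-Pochhammer symbol `(a; q)_n = ∏_{h=0}^{n-1} (1 - a q^h)`. -/
noncomputable def qPoch (a q : ℂ) (n : ℕ) : ℂ := ∏ h ∈ Finset.range n, (1 - a * q ^ h)

/-- The infinite q-Pochhammer symbol `(a; q)_∞ = ∏_{h=0}^{∞} (1 - a q^h)`. -/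
noncomputable def qPochInf (a q : ℂ) : ℂ := ∏' h : ℕ, (1 - a * q ^ h)

/-!
For a two-sided sequence `α` consider `B(m, n) = ∑ r, α_r / ((Q; Q)_{m-r} (Q; Q)_{n+r})`. The
`q`-Pascal rule expresses `(1 - Q ^ (m + n + 1)) * B(m + 1, n)` as the same kind of sum at `(m, n)`,
for a modified sequence. When `Q = q ^ 2` and `α_r = (-1) ^ r * q ^ (3 r (r-1) / 2 + r)`, the
modification only multiplies the sum by a factor, after the reflection `r ↦ -r` in the step
`(n, n) → (n + 1, n)`, and with part of it cancelling under `r ↦ 1 - r` in the step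
`(n + 1, n) → (n + 1, n + 1)`. Hence `B(n, n) = (q; q²)_n / (q²; q²)_{2n}`, and up to the constant
`(-q; q)_∞` the summand of the identity is `Q ^ (n²) * B(n, n)`.

By the `q`-Vandermonde sum, summing `Q ^ (n²) * B(n, n)` over `n` amounts to replacing `α_r` by
`Q ^ (r²) * α_r` and letting `m` and `n` tend to infinity: this is the weak form of Bailey's lemma.
Here it turns a theta series in base `q ^ 3` into one in base `q ^ 7`, to which the Jacobi triple
product applies. The triple product itself is the limit of the same sum `B(m, n)` when `Q` is the
base of the theta series, where the recurrence is first order for all `m` and `n`.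
-/

open Filter Topology

theorem qPoch_zero (a q : ℂ) : qPoch a q 0 = 1 := by simp [qPoch]

theorem qPoch_succ (a q : ℂ) (n : ℕ) : qPoch a q (n + 1) = qPoch a q n * (1 - a * q ^ n) :=
  Finset.prod_range_succ _ _

theorem qPoch_add (a q : ℂ) (m n : ℕ) :
    qPoch a q (m + n) = qPoch a q m * qPoch (a * q ^ m) q n := by
  simp only [qPoch, Finset.prod_range_add, pow_add, mul_assoc]

theorem qPoch_mul_qPoch_neg (a q : ℂ) (n : ℕ) :
    qPoch a q n * qPoch (-a) q n = qPoch (a ^ 2) (q ^ 2) n := by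
  rw [qPoch, qPoch, qPoch, ← Finset.prod_mul_distrib]
  refine Finset.prod_congr rfl fun h _ => ?_
  ring

theorem qPoch_mul_eq_prod (a q : ℂ) (N n : ℕ) :
    qPoch a q (N * n) = ∏ i ∈ Finset.range N, qPoch (a * q ^ i) (q ^ N) n := by
  induction n with
  | zero => simp [qPoch_zero]
  | succ n ih =>
    simp only [Nat.mul_succ, qPoch_add a q (N * n) N, ih, qPoch_succ, Finset.prod_mul_distrib]
    congr 1
    refine Finset.prod_congr rfl fun i _ => ?_
    ring

theorem norm_pow_lt_one {q : ℂ} (hq : ‖q‖ < 1) {n : ℕ} (hn : n ≠ 0) : ‖q ^ n‖ < 1 := by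
  simpa only [norm_pow] using pow_lt_one₀ (norm_nonneg q) hq hn

section RootsOfUnity

variable {Q : ℂ}

theorem not_isOfFinOrder_of_norm_lt_one (hQ : ‖Q‖ < 1) : ¬IsOfFinOrder Q :=
  fun h => hQ.ne h.norm_eq_one

theorem one_sub_pow_ne_zero (hQ : ¬IsOfFinOrder Q) {n : ℕ} (hn : 0 < n) : 1 - Q ^ n ≠ 0 :=
  fun h => hQ (isOfFinOrder_iff_pow_eq_one.mpr ⟨n, hn, (sub_eq_zero.mp h).symm⟩)

theorem qPoch_self_ne_zero (hQ : ¬IsOfFinOrder Q) (n : ℕ) : qPoch Q Q n ≠ 0 :=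
  Finset.prod_ne_zero_iff.mpr fun h _ => by
    simpa only [pow_succ'] using one_sub_pow_ne_zero hQ h.succ_pos

end RootsOfUnity

/-- The reciprocal `1 / (Q; Q)_n` of the q-factorial, extended by zero to `n < 0`. This is the
extension for which `(1 - Q ^ n) / (Q; Q)_n = 1 / (Q; Q)_{n-1}` holds for all integers `n`. -/
noncomputable def qFactInv (Q : ℂ) (n : ℤ) : ℂ := if n < 0 then 0 else (qPoch Q Q n.toNat)⁻¹

section qFactInv

variable {Q : ℂ}

theorem qFactInv_of_neg (Q : ℂ) {n : ℤ} (hn : n < 0) : qFactInv Q n = 0 := if_pos hn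

theorem qFactInv_natCast (Q : ℂ) (n : ℕ) : qFactInv Q n = (qPoch Q Q n)⁻¹ := by simp [qFactInv]

theorem qFactInv_zero (Q : ℂ) : qFactInv Q 0 = 1 := by simp [qFactInv, qPoch_zero]

theorem nonneg_of_qFactInv_ne_zero {n : ℤ} (h : qFactInv Q n ≠ 0) : 0 ≤ n :=
  not_lt.mp fun hn => h (qFactInv_of_neg Q hn)

theorem one_sub_zpow_mul_qFactInv (hQ : ¬IsOfFinOrder Q) (n : ℤ) :
    (1 - Q ^ n) * qFactInv Q n = qFactInv Q (n - 1) := by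
  rcases lt_trichotomy n 0 with hn | rfl | hn
  · rw [qFactInv_of_neg Q hn, qFactInv_of_neg Q (by omega), mul_zero]
  · rw [qFactInv_of_neg Q (n := 0 - 1) (by norm_num), zpow_zero, sub_self, zero_mul]
  · obtain ⟨m, rfl⟩ : ∃ m : ℕ, n = (m + 1 : ℕ) := ⟨(n - 1).toNat, by omega⟩
    have hm : 1 - Q ^ (m + 1) ≠ 0 := one_sub_pow_ne_zero hQ m.succ_pos
    rw [zpow_natCast, qFactInv_natCast, qPoch_succ, ← pow_succ', mul_inv,
      mul_left_comm, mul_inv_cancel₀ hm, mul_one, Nat.cast_succ, add_sub_cancel_right,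
      qFactInv_natCast]

theorem eq_mul_qFactInv_of_one_sub_zpow_mul_eq (hQ : ¬IsOfFinOrder Q) {n : ℤ} (hn : 0 ≤ n)
    {x y : ℂ} (h : (1 - Q ^ (n + 1)) * x = y * qFactInv Q n) : x = y * qFactInv Q (n + 1) := by
  have hne : 1 - Q ^ (n + 1) ≠ 0 := by
    lift n to ℕ using hn
    exact_mod_cast one_sub_pow_ne_zero hQ n.succ_pos
  have hrec := one_sub_zpow_mul_qFactInv hQ (n + 1)
  rw [add_sub_cancel_right] at hrec
  exact mul_left_cancel₀ hne (by rw [h, ← hrec, mul_left_comm])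

theorem qFactInv_mul_pascal (hQ₀ : Q ≠ 0) (hQ : ¬IsOfFinOrder Q) (a b : ℤ) :
    (1 - Q ^ (a + b)) * (qFactInv Q a * qFactInv Q b) =
      qFactInv Q (a - 1) * qFactInv Q b + Q ^ a * (qFactInv Q a * qFactInv Q (b - 1)) := by
  rw [← one_sub_zpow_mul_qFactInv hQ a, ← one_sub_zpow_mul_qFactInv hQ b, zpow_add₀ hQ₀]
  ring

end qFactInv

/-- The bilateral Bailey transform `∑ r, α_r / ((Q; Q)_{m-r} (Q; Q)_{n+r})`, whose terms vanish
unless `-n ≤ r ≤ m`. Its diagonal values `m = n` are the `β_n` of the Bailey pair `(α, β)` relative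
to `1`; the off-diagonal ones make the recurrences in `m` and `n` first order. -/
noncomputable def baileySum (Q : ℂ) (α : ℤ → ℂ) (m n : ℤ) : ℂ :=
  ∑' r : ℤ, α r * (qFactInv Q (m - r) * qFactInv Q (n + r))

section baileySum

variable {Q : ℂ}

theorem summable_baileySum (Q : ℂ) (α : ℤ → ℂ) (m n : ℤ) :
    Summable fun r : ℤ => α r * (qFactInv Q (m - r) * qFactInv Q (n + r)) := by
  refine summable_of_ne_finset_zero (s := Finset.Icc (-n) m) fun r hr => ?_
  contrapose! hr
  have hm := nonneg_of_qFactInv_ne_zero (left_ne_zero_of_mul (right_ne_zero_of_mul hr))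
  have hn := nonneg_of_qFactInv_ne_zero (right_ne_zero_of_mul (right_ne_zero_of_mul hr))
  exact Finset.mem_Icc.mpr ⟨by omega, by omega⟩

theorem baileySum_add (Q : ℂ) (α γ : ℤ → ℂ) (m n : ℤ) :
    baileySum Q (fun r => α r + γ r) m n = baileySum Q α m n + baileySum Q γ m n := by
  simp only [baileySum, add_mul]
  exact (summable_baileySum Q α m n).tsum_add (summable_baileySum Q γ m n)

theorem baileySum_const_mul (Q c : ℂ) (α : ℤ → ℂ) (m n : ℤ) :
    baileySum Q (fun r => c * α r) m n = c * baileySum Q α m n := by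
  simp only [baileySum, mul_assoc, tsum_mul_left]

theorem baileySum_comp_add (Q : ℂ) (α : ℤ → ℂ) (m n k : ℤ) :
    baileySum Q (fun r => α (r + k)) m n = baileySum Q α (m + k) (n - k) := by
  rw [baileySum, baileySum,
    ← (Equiv.addRight k).tsum_eq fun r => α r * (qFactInv Q (m + k - r) * qFactInv Q (n - k + r))]
  refine tsum_congr fun r => ?_
  rw [Equiv.coe_addRight, show m + k - (r + k) = m - r by ring,
    show n - k + (r + k) = n + r by ring]

theorem baileySum_comp_neg (Q : ℂ) (α : ℤ → ℂ) (m n : ℤ) :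
    baileySum Q (fun r => α (-r)) m n = baileySum Q α n m := by
  rw [baileySum, baileySum, ← (Equiv.neg ℤ).tsum_eq]
  refine tsum_congr fun r => ?_
  rw [Equiv.neg_apply, neg_neg, sub_neg_eq_add, ← sub_eq_add_neg, mul_comm (qFactInv Q (m + r))]

theorem baileySum_zero_zero (Q : ℂ) (α : ℤ → ℂ) : baileySum Q α 0 0 = α 0 := by
  rw [baileySum, tsum_eq_single 0]
  · simp [qFactInv_zero]
  · intro r hr
    rcases lt_or_gt_of_ne hr with h | h
    · rw [qFactInv_of_neg Q (n := 0 + r) (by omega), mul_zero, mul_zero]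
    · rw [qFactInv_of_neg Q (n := 0 - r) (by omega), zero_mul, mul_zero]

theorem baileySum_of_neg (Q : ℂ) (α : ℤ → ℂ) {m n : ℤ} (h : m + n < 0) : baileySum Q α m n = 0 := by
  refine (tsum_congr fun r => ?_).trans tsum_zero
  rcases lt_or_ge m r with hr | hr
  · rw [qFactInv_of_neg Q (n := m - r) (by omega), zero_mul, mul_zero]
  · rw [qFactInv_of_neg Q (n := n + r) (by omega), mul_zero, mul_zero]

theorem baileySum_succ_left (hQ₀ : Q ≠ 0) (hQ : ¬IsOfFinOrder Q) (α : ℤ → ℂ) (m n : ℤ) :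
    (1 - Q ^ (m + n + 1)) * baileySum Q α (m + 1) n =
      baileySum Q (fun r => α r + Q ^ (m - r) * α (r + 1)) m n := by
  have hpascal (r : ℤ) : (1 - Q ^ (m + n + 1)) *
      (α r * (qFactInv Q (m + 1 - r) * qFactInv Q (n + r))) =
        α r * (qFactInv Q (m - r) * qFactInv Q (n + r)) +
          Q ^ (m + 1 - r) * α r * (qFactInv Q (m + 1 - r) * qFactInv Q (n - 1 + r)) := by
    have h := qFactInv_mul_pascal hQ₀ hQ (m + 1 - r) (n + r)
    rw [show m + 1 - r + (n + r) = m + n + 1 by ring, show m + 1 - r - 1 = m - r by ring,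
      show n + r - 1 = n - 1 + r by ring] at h
    linear_combination α r * h
  calc (1 - Q ^ (m + n + 1)) * baileySum Q α (m + 1) n
      = baileySum Q α m n + baileySum Q (fun r => Q ^ (m + 1 - r) * α r) (m + 1) (n - 1) := by
        simp only [baileySum]
        rw [← tsum_mul_left, tsum_congr hpascal]
        exact (summable_baileySum Q α m n).tsum_add (summable_baileySum Q _ (m + 1) (n - 1))
    _ = baileySum Q α m n + baileySum Q (fun r => Q ^ (m - r) * α (r + 1)) m n := by
        rw [← baileySum_comp_add]
        simp only [add_sub_add_right_eq_sub]
    _ = baileySum Q (fun r => α r + Q ^ (m - r) * α (r + 1)) m n := (baileySum_add ..).symm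

theorem baileySum_succ_right (hQ₀ : Q ≠ 0) (hQ : ¬IsOfFinOrder Q) (α : ℤ → ℂ) (m n : ℤ) :
    (1 - Q ^ (m + n + 1)) * baileySum Q α m (n + 1) =
      baileySum Q (fun r => α r + Q ^ (n + r) * α (r - 1)) m n := by
  rw [← baileySum_comp_neg, add_comm m n, baileySum_succ_left hQ₀ hQ, ← baileySum_comp_neg]
  congr 1
  funext r
  rw [neg_neg, sub_neg_eq_add, neg_add, neg_neg, ← sub_eq_add_neg]

theorem baileySum_succ_self_eq_zero {α : ℤ → ℂ} (hα : ∀ r, α (1 - r) = -α r) (n : ℤ) :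
    baileySum Q α (n + 1) n = 0 := by
  have h : baileySum Q α (n + 1) n = -baileySum Q α (n + 1) n :=
    calc baileySum Q α (n + 1) n
        = baileySum Q (fun r => α (-(r + -1))) (n + 1) n := by
          rw [baileySum_comp_add Q (fun r => α (-r)), baileySum_comp_neg, add_neg_cancel_right,
            sub_neg_eq_add]
      _ = baileySum Q (fun r => -1 * α r) (n + 1) n := by
          congr 1
          funext r
          rw [show -(r + -1) = 1 - r by ring, hα, neg_one_mul]
      _ = -baileySum Q α (n + 1) n := by rw [baileySum_const_mul, neg_one_mul]
  exact self_eq_neg.mp h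

theorem baileySum_qVandermonde (hQ₀ : Q ≠ 0) (hQ : ¬IsOfFinOrder Q) (m s : ℤ) :
    baileySum Q (fun i => Q ^ (i ^ 2 + s * i) * qFactInv Q (i + s)) m 0 =
      qFactInv Q (m + s) * qFactInv Q m := by
  rcases lt_or_ge m 0 with hm | hm
  · rw [baileySum_of_neg Q _ (by omega), qFactInv_of_neg Q hm, mul_zero]
  lift m to ℕ using hm with M
  induction M generalizing s with
  | zero => simp [baileySum_zero_zero, qFactInv_zero]
  | succ M ih =>
    rw [Nat.cast_succ]
    refine eq_mul_qFactInv_of_one_sub_zpow_mul_eq hQ M.cast_nonneg ?_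
    have hweight (i : ℤ) :
        Q ^ (M - i) * (Q ^ ((i + 1) ^ 2 + s * (i + 1)) * qFactInv Q (i + 1 + s)) =
          Q ^ (M + 1 + s) * (Q ^ (i ^ 2 + (s + 1) * i) * qFactInv Q (i + (s + 1))) := by
      rw [← mul_assoc, ← mul_assoc, ← zpow_add₀ hQ₀, ← zpow_add₀ hQ₀]
      ring_nf
    have hrec := baileySum_succ_left hQ₀ hQ (fun i => Q ^ (i ^ 2 + s * i) * qFactInv Q (i + s)) M 0
    simp only [hweight, add_zero] at hrec
    rw [baileySum_add, baileySum_const_mul, ih, ih] at hrec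
    have hfact := one_sub_zpow_mul_qFactInv hQ (M + 1 + s)
    rw [show (M : ℤ) + 1 + s - 1 = M + s by ring] at hfact
    rw [show (M : ℤ) + (s + 1) = M + 1 + s by ring] at hrec
    linear_combination hrec - qFactInv Q M * hfact

theorem sum_pow_sq_mul_qFactInv (hQ₀ : Q ≠ 0) (hQ : ¬IsOfFinOrder Q) (L : ℕ) (r : ℤ) :
    ∑ j ∈ Finset.range (L + 1),
        Q ^ (j ^ 2) * qFactInv Q (L - j) * (qFactInv Q (j - r) * qFactInv Q (j + r)) =
      Q ^ (r ^ 2) * (qFactInv Q (L - r) * qFactInv Q (L + r)) := by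
  have hvandermonde : baileySum Q (fun i => Q ^ (i ^ 2 + 2 * r * i) * qFactInv Q (i + 2 * r))
      (L - r) 0 = qFactInv Q (L + r) * qFactInv Q (L - r) := by
    rw [baileySum_qVandermonde hQ₀ hQ, show (L : ℤ) - r + 2 * r = L + r by ring]
  have hterm (j : ℤ) :
      Q ^ (j ^ 2) * qFactInv Q (L - j) * (qFactInv Q (j - r) * qFactInv Q (j + r)) =
        Q ^ (r ^ 2) * (Q ^ ((j + -r) ^ 2 + 2 * r * (j + -r)) * qFactInv Q (j + -r + 2 * r) *
          (qFactInv Q (L - j) * qFactInv Q (-r + j))) := by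
    rw [show j ^ 2 = r ^ 2 + ((j + -r) ^ 2 + 2 * r * (j + -r)) by ring, zpow_add₀ hQ₀,
      show j + -r + 2 * r = j + r by ring, show -r + j = j - r by ring]
    ring
  calc ∑ j ∈ Finset.range (L + 1),
        Q ^ (j ^ 2) * qFactInv Q (L - j) * (qFactInv Q (j - r) * qFactInv Q (j + r))
      = ∑' j : ℤ, Q ^ (j ^ 2) * qFactInv Q (L - j) * (qFactInv Q (j - r) * qFactInv Q (j + r)) := by
        rw [tsum_eq_sum (s := (Finset.range (L + 1)).map Nat.castEmbedding), Finset.sum_map]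
        · simp only [Nat.castEmbedding_apply]
          norm_cast
        · intro j hj
          contrapose! hj
          have hjL := nonneg_of_qFactInv_ne_zero (right_ne_zero_of_mul (left_ne_zero_of_mul hj))
          have hjr := nonneg_of_qFactInv_ne_zero (left_ne_zero_of_mul (right_ne_zero_of_mul hj))
          have hjr' := nonneg_of_qFactInv_ne_zero (right_ne_zero_of_mul (right_ne_zero_of_mul hj))
          exact Finset.mem_map.mpr ⟨j.toNat, Finset.mem_range.mpr (by omega),
            Int.toNat_of_nonneg (by omega)⟩
    _ = Q ^ (r ^ 2) * baileySum Q
          (fun j => Q ^ ((j + -r) ^ 2 + 2 * r * (j + -r)) * qFactInv Q (j + -r + 2 * r))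
          L (-r) := by
        rw [baileySum, ← tsum_mul_left]
        exact tsum_congr hterm
    _ = Q ^ (r ^ 2) * (qFactInv Q (L - r) * qFactInv Q (L + r)) := by
        rw [baileySum_comp_add Q (fun i => Q ^ (i ^ 2 + 2 * r * i) * qFactInv Q (i + 2 * r)),
          sub_self, ← sub_eq_add_neg, hvandermonde, mul_comm (qFactInv Q (L + r))]

theorem sum_pow_sq_mul_baileySum (hQ₀ : Q ≠ 0) (hQ : ¬IsOfFinOrder Q) (α : ℤ → ℂ) (L : ℕ) :
    ∑ j ∈ Finset.range (L + 1), Q ^ (j ^ 2) * qFactInv Q (L - j) * baileySum Q α j j =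
      baileySum Q (fun r => Q ^ (r ^ 2) * α r) L L := by
  simp only [baileySum, ← tsum_mul_left]
  rw [← Summable.tsum_finsetSum fun (j : ℕ) _ => (summable_baileySum Q α j j).mul_left _]
  refine tsum_congr fun r => ?_
  rw [mul_right_comm, ← sum_pow_sq_mul_qFactInv hQ₀ hQ, Finset.sum_mul]
  exact Finset.sum_congr rfl fun j _ => by ring

end baileySum

/-- The coefficients `(-1)^r p^(r(r-1)/2) z^r` of Jacobi's theta series. -/
noncomputable def thetaCoeff (p z : ℂ) (r : ℤ) : ℂ := (-1) ^ r * p ^ (r * (r - 1) / 2) * z ^ r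

section thetaCoeff

variable {p z : ℂ}

theorem thetaCoeff_zero (p z : ℂ) : thetaCoeff p z 0 = 1 := by simp [thetaCoeff]

theorem thetaCoeff_ne_zero (hp : p ≠ 0) (hz : z ≠ 0) (r : ℤ) : thetaCoeff p z r ≠ 0 :=
  mul_ne_zero (mul_ne_zero (zpow_ne_zero _ (by norm_num)) (zpow_ne_zero _ hp)) (zpow_ne_zero _ hz)

theorem thetaCoeff_add_one (hp : p ≠ 0) (hz : z ≠ 0) (r : ℤ) :
    thetaCoeff p z (r + 1) = -(p ^ r * z) * thetaCoeff p z r := by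
  have hexp : (r + 1) * (r + 1 - 1) / 2 = r + r * (r - 1) / 2 := by
    rw [show (r + 1) * (r + 1 - 1) = r * (r - 1) + r * 2 by ring,
      Int.add_mul_ediv_right _ _ two_ne_zero, add_comm]
  rw [thetaCoeff, thetaCoeff, hexp, zpow_add₀ hp, zpow_add_one₀ hz, zpow_add_one₀ (by norm_num)]
  ring

theorem thetaCoeff_sub_one (hp : p ≠ 0) (hz : z ≠ 0) (r : ℤ) :
    thetaCoeff p z (r - 1) = -(p ^ (1 - r) / z) * thetaCoeff p z r := by
  have h := thetaCoeff_add_one hp hz (r - 1)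
  rw [sub_add_cancel] at h
  have hpow : p ^ (1 - r) * p ^ (r - 1) = 1 := by
    rw [← zpow_add₀ hp, show 1 - r + (r - 1) = 0 by ring, zpow_zero]
  rw [h]
  field_simp
  linear_combination -thetaCoeff p z (r - 1) * hpow

theorem thetaCoeff_mul (p z w : ℂ) (r : ℤ) :
    thetaCoeff p (z * w) r = w ^ r * thetaCoeff p z r := by
  rw [thetaCoeff, thetaCoeff, mul_zpow]
  ring

theorem thetaCoeff_neg (hp : p ≠ 0) (z : ℂ) (r : ℤ) :
    thetaCoeff p z (-r) = thetaCoeff p (p / z) r := by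
  have hexp : -r * (-r - 1) / 2 = r * (r - 1) / 2 + r := by
    rw [show -r * (-r - 1) = r * (r - 1) + r * 2 by ring, Int.add_mul_ediv_right _ _ two_ne_zero]
  rw [thetaCoeff, thetaCoeff, hexp, zpow_add₀ hp, div_zpow, zpow_neg, zpow_neg, ← inv_zpow,
    inv_neg_one]
  ring

theorem zpow_sq_mul_thetaCoeff {x : ℂ} (hx : x ≠ 0) (p z : ℂ) (r : ℤ) :
    x ^ (r ^ 2) * thetaCoeff p z r = thetaCoeff (p * x ^ 2) (z * x) r := by
  have hexp : r ^ 2 = 2 * (r * (r - 1) / 2) + r := by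
    rw [Int.mul_ediv_cancel' (Int.even_mul_pred_self r).two_dvd]
    ring
  rw [thetaCoeff_mul, thetaCoeff, thetaCoeff, mul_zpow, hexp, zpow_add₀ hx, zpow_mul]
  norm_cast
  ring

theorem summable_thetaCoeff_natCast (hp₀ : p ≠ 0) (hp : ‖p‖ < 1) (hz : z ≠ 0) :
    Summable fun n : ℕ => thetaCoeff p z n := by
  refine summable_of_ratio_test_tendsto_lt_one zero_lt_one
    (Eventually.of_forall fun n => thetaCoeff_ne_zero hp₀ hz n) ?_
  have hratio (n : ℕ) :
      ‖p‖ ^ n * ‖z‖ = ‖thetaCoeff p z (n + 1 : ℕ)‖ / ‖thetaCoeff p z n‖ := by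
    rw [Nat.cast_succ, thetaCoeff_add_one hp₀ hz, ← norm_div,
      mul_div_cancel_right₀ _ (thetaCoeff_ne_zero hp₀ hz n), norm_neg, norm_mul, zpow_natCast,
      norm_pow]
  have hlim : Tendsto (fun n : ℕ => ‖p‖ ^ n * ‖z‖) atTop (𝓝 (0 * ‖z‖)) :=
    (tendsto_pow_atTop_nhds_zero_of_lt_one (norm_nonneg p) hp).mul_const _
  rw [zero_mul] at hlim
  exact hlim.congr hratio

theorem summable_thetaCoeff (hp₀ : p ≠ 0) (hp : ‖p‖ < 1) (hz : z ≠ 0) :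
    Summable (thetaCoeff p z) := by
  refine .of_nat_of_neg (summable_thetaCoeff_natCast hp₀ hp hz) ?_
  simp only [thetaCoeff_neg hp₀]
  exact summable_thetaCoeff_natCast hp₀ hp (div_ne_zero hp₀ hz)

theorem baileySum_thetaCoeff_succ_left (hp₀ : p ≠ 0) (hp : ¬IsOfFinOrder p) (hz : z ≠ 0)
    (m n : ℤ) : (1 - p ^ (m + n + 1)) * baileySum p (thetaCoeff p z) (m + 1) n =
      (1 - z * p ^ m) * baileySum p (thetaCoeff p z) m n := by
  rw [baileySum_succ_left hp₀ hp, ← baileySum_const_mul]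
  congr 1
  funext r
  have hpow : p ^ (m - r) * p ^ r = p ^ m := by rw [← zpow_add₀ hp₀, sub_add_cancel]
  rw [thetaCoeff_add_one hp₀ hz]
  linear_combination -z * thetaCoeff p z r * hpow

theorem baileySum_thetaCoeff_swap (hp₀ : p ≠ 0) (z : ℂ) (m n : ℤ) :
    baileySum p (thetaCoeff p z) m n = baileySum p (thetaCoeff p (p / z)) n m := by
  simp only [← baileySum_comp_neg p (thetaCoeff p z), thetaCoeff_neg hp₀]

theorem baileySum_thetaCoeff (hp₀ : p ≠ 0) (hp : ¬IsOfFinOrder p) (hz : z ≠ 0) (m n : ℕ) :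
    baileySum p (thetaCoeff p z) m n = qPoch z p m * qPoch (p / z) p n * qFactInv p (m + n) := by
  have hstep {w y : ℂ} (hw : w ≠ 0) {k l : ℕ}
      (h : baileySum p (thetaCoeff p w) k l = y * qFactInv p (k + l)) :
      baileySum p (thetaCoeff p w) (k + 1) l = y * (1 - w * p ^ k) * qFactInv p (k + l + 1) := by
    refine eq_mul_qFactInv_of_one_sub_zpow_mul_eq hp (by positivity) ?_
    rw [baileySum_thetaCoeff_succ_left hp₀ hp hw, h, zpow_natCast]
    ring
  induction m with
  | zero =>
    induction n with
    | zero => simp [baileySum_zero_zero, thetaCoeff_zero, qPoch_zero, qFactInv_zero]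
    | succ n ih =>
      rw [baileySum_thetaCoeff_swap hp₀, add_comm (Nat.cast 0 : ℤ)] at ih ⊢
      rw [Nat.cast_succ, hstep (div_ne_zero hp₀ hz) ih, qPoch_succ (p / z), add_right_comm]
      ring
  | succ m ih =>
    rw [Nat.cast_succ, hstep hz ih, qPoch_succ, add_right_comm]
    ring

section Cube

variable {q : ℂ}

theorem thetaCoeff_cube_neg (hq₀ : q ≠ 0) (r : ℤ) :
    thetaCoeff (q ^ 3) q (-r) = q ^ r * thetaCoeff (q ^ 3) q r := by
  rw [thetaCoeff_neg (pow_ne_zero 3 hq₀), show q ^ 3 / q = q * q by field_simp, thetaCoeff_mul]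

theorem baileySum_thetaCoeff_cube_succ_left (hq₀ : q ≠ 0) (hq : ¬IsOfFinOrder q) (n : ℕ) :
    (1 - (q ^ 2) ^ (n + n + 1 : ℤ)) * baileySum (q ^ 2) (thetaCoeff (q ^ 3) q) (n + 1) n =
      (1 - q * (q ^ 2) ^ n) * baileySum (q ^ 2) (thetaCoeff (q ^ 3) q) n n := by
  have hreflect (r : ℤ) : (q ^ 2) ^ (n - -r) * thetaCoeff (q ^ 3) q (-r + 1) =
      -(q * (q ^ 2) ^ n) * thetaCoeff (q ^ 3) q r := by
    have hpow : (q ^ 2) ^ (n - -r) * (q ^ 3) ^ (-r) * q ^ r = (q ^ 2) ^ n := by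
      simp only [← zpow_natCast, ← zpow_mul, ← zpow_add₀ hq₀]
      congr 1
      push_cast
      ring
    rw [thetaCoeff_add_one (pow_ne_zero 3 hq₀) hq₀, thetaCoeff_cube_neg hq₀]
    linear_combination -q * thetaCoeff (q ^ 3) q r * hpow
  rw [baileySum_succ_left (pow_ne_zero 2 hq₀) fun h => hq (h.of_pow two_ne_zero), baileySum_add,
    ← baileySum_comp_neg _ fun r => (q ^ 2) ^ (n - r) * thetaCoeff (q ^ 3) q (r + 1)]
  simp only [hreflect, baileySum_const_mul]
  ring

theorem baileySum_thetaCoeff_cube_succ_right (hq₀ : q ≠ 0) (hq : ¬IsOfFinOrder q) (n : ℕ) :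
    (1 - (q ^ 2) ^ (n + 1 + n + 1 : ℤ)) *
        baileySum (q ^ 2) (thetaCoeff (q ^ 3) q) (n + 1) (n + 1) =
      baileySum (q ^ 2) (thetaCoeff (q ^ 3) q) (n + 1) n := by
  have hodd (r : ℤ) : (q ^ 2) ^ (n + (1 - r)) * thetaCoeff (q ^ 3) q (1 - r - 1) =
      -((q ^ 2) ^ (n + r) * thetaCoeff (q ^ 3) q (r - 1)) := by
    have hpow : (q ^ 2) ^ (n + (1 - r)) * q ^ r = (q ^ 2) ^ (n + r) * ((q ^ 3) ^ (1 - r) / q) := by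
      rw [mul_div_assoc', eq_div_iff hq₀, ← zpow_one q]
      simp only [← zpow_natCast, ← zpow_mul, ← zpow_add₀ hq₀]
      congr 1
      push_cast
      ring
    rw [show 1 - r - 1 = -r by ring, thetaCoeff_cube_neg hq₀,
      thetaCoeff_sub_one (pow_ne_zero 3 hq₀) hq₀]
    linear_combination thetaCoeff (q ^ 3) q r * hpow
  rw [baileySum_succ_right (pow_ne_zero 2 hq₀) fun h => hq (h.of_pow two_ne_zero), baileySum_add,
    baileySum_succ_self_eq_zero
      (α := fun r => (q ^ 2) ^ (n + r) * thetaCoeff (q ^ 3) q (r - 1)) hodd,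
    add_zero]

theorem baileySum_thetaCoeff_cube (hq₀ : q ≠ 0) (hq : ¬IsOfFinOrder q) (n : ℕ) :
    baileySum (q ^ 2) (thetaCoeff (q ^ 3) q) n n =
      qPoch q (q ^ 2) n * qFactInv (q ^ 2) (n + n) := by
  have hQ : ¬IsOfFinOrder (q ^ 2) := fun h => hq (h.of_pow two_ne_zero)
  induction n with
  | zero => simp [baileySum_zero_zero, thetaCoeff_zero, qPoch_zero, qFactInv_zero]
  | succ n ih =>
    have hoff : baileySum (q ^ 2) (thetaCoeff (q ^ 3) q) (n + 1) n =
        qPoch q (q ^ 2) (n + 1) * qFactInv (q ^ 2) (n + n + 1) := by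
      refine eq_mul_qFactInv_of_one_sub_zpow_mul_eq hQ (by positivity) ?_
      rw [baileySum_thetaCoeff_cube_succ_left hq₀ hq, ih, qPoch_succ]
      ring
    rw [Nat.cast_succ, ← add_assoc]
    refine eq_mul_qFactInv_of_one_sub_zpow_mul_eq hQ (by positivity) ?_
    rw [baileySum_thetaCoeff_cube_succ_right hq₀ hq, hoff, add_right_comm]

end Cube

end thetaCoeff

section Limits

variable {a q Q : ℂ}

theorem summable_norm_neg_mul_pow (a : ℂ) (hq : ‖q‖ < 1) :
    Summable fun h : ℕ => ‖-(a * q ^ h)‖ := by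
  simp only [norm_neg, norm_mul, norm_pow]
  exact (summable_geometric_of_lt_one (norm_nonneg q) hq).mul_left _

theorem multipliable_one_sub_mul_pow (a : ℂ) (hq : ‖q‖ < 1) :
    Multipliable fun h : ℕ => 1 - a * q ^ h := by
  simpa only [sub_eq_add_neg] using
    multipliable_one_add_of_summable (summable_norm_neg_mul_pow a hq)

theorem qPochInf_zero_right (a : ℂ) : qPochInf a 0 = 1 - a := by
  rw [qPochInf, tprod_eq_mulSingle 0]
  · simp
  · intro h hh
    simp [hh]

theorem tendsto_qPoch (a : ℂ) (hq : ‖q‖ < 1) : Tendsto (qPoch a q) atTop (𝓝 (qPochInf a q)) :=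
  (multipliable_one_sub_mul_pow a hq).tendsto_prod_tprod_nat

theorem qPochInf_ne_zero (ha : ‖a‖ < 1) (hq : ‖q‖ < 1) : qPochInf a q ≠ 0 := by
  have hfactor (h : ℕ) : 1 + -(a * q ^ h) ≠ 0 := by
    have hlt : ‖a * q ^ h‖ < 1 := by
      rw [norm_mul, norm_pow]
      exact mul_lt_one_of_nonneg_of_lt_one_left (norm_nonneg a) ha
        (pow_le_one₀ (norm_nonneg q) hq.le)
    rw [← sub_eq_add_neg, sub_ne_zero]
    rintro heq
    simp [← heq] at hlt
  simpa only [qPochInf, sub_eq_add_neg] using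
    tprod_one_add_ne_zero_of_summable hfactor (summable_norm_neg_mul_pow a hq)

theorem qPoch_mul_qPochInf (a : ℂ) (hq : ‖q‖ < 1) (n : ℕ) :
    qPoch a q n * qPochInf (a * q ^ n) q = qPochInf a q := by
  refine tendsto_nhds_unique ((tendsto_qPoch (a * q ^ n) hq).const_mul _) ?_
  simp only [← qPoch_add, add_comm n]
  exact (tendsto_qPoch a hq).comp (tendsto_add_atTop_nat n)

theorem qPochInf_mul_qPochInf_neg (a : ℂ) (hq : ‖q‖ < 1) :
    qPochInf a q * qPochInf (-a) q = qPochInf (a ^ 2) (q ^ 2) := by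
  refine tendsto_nhds_unique ((tendsto_qPoch a hq).mul (tendsto_qPoch (-a) hq)) ?_
  simp only [qPoch_mul_qPoch_neg]
  exact tendsto_qPoch _ (norm_pow_lt_one hq two_ne_zero)

theorem qPochInf_eq_prod (a : ℂ) (hq : ‖q‖ < 1) {N : ℕ} (hN : N ≠ 0) :
    qPochInf a q = ∏ i ∈ Finset.range N, qPochInf (a * q ^ i) (q ^ N) := by
  have hqN : ‖q ^ N‖ < 1 := norm_pow_lt_one hq hN
  refine tendsto_nhds_unique
    ((tendsto_qPoch a hq).comp (tendsto_id.const_mul_atTop' (Nat.pos_of_ne_zero hN))) ?_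
  simp only [Function.comp_def, id_eq, qPoch_mul_eq_prod]
  exact tendsto_finsetProd _ fun i _ => tendsto_qPoch (a * q ^ i) hqN

theorem tendsto_qFactInv (hQ : ‖Q‖ < 1) : Tendsto (qFactInv Q) atTop (𝓝 (qPochInf Q Q)⁻¹) := by
  rw [← Nat.map_cast_int_atTop, tendsto_map'_iff]
  simp only [Function.comp_def, qFactInv_natCast]
  exact (tendsto_qPoch Q hQ).inv₀ (qPochInf_ne_zero hQ hQ)

theorem exists_norm_qPoch_le (a : ℂ) (hq : ‖q‖ < 1) : ∃ C, ∀ n, ‖qPoch a q n‖ ≤ C := by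
  obtain ⟨C, hC⟩ := (tendsto_qPoch a hq).norm.bddAbove_range
  exact ⟨C, fun n => hC ⟨n, rfl⟩⟩

theorem exists_norm_qFactInv_le (hQ : ‖Q‖ < 1) : ∃ C, ∀ n, ‖qFactInv Q n‖ ≤ C := by
  obtain ⟨C, hC⟩ := ((tendsto_qFactInv hQ).comp tendsto_natCast_atTop_atTop).norm.bddAbove_range
  have hC_nat (n : ℕ) : ‖qFactInv Q n‖ ≤ C := hC ⟨n, rfl⟩
  refine ⟨C, fun n => ?_⟩
  rcases lt_or_ge n 0 with hn | hn
  · rw [qFactInv_of_neg Q hn, norm_zero]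
    exact (norm_nonneg _).trans (hC_nat 0)
  · lift n to ℕ using hn
    exact hC_nat n

theorem tendsto_qFactInv_sub (hQ : ‖Q‖ < 1) (k : ℤ) :
    Tendsto (fun L : ℕ => qFactInv Q (L - k)) atTop (𝓝 (qPochInf Q Q)⁻¹) :=
  (tendsto_qFactInv hQ).comp (tendsto_atTop_add_const_right _ (-k) tendsto_natCast_atTop_atTop)

theorem tendsto_baileySum (hQ : ‖Q‖ < 1) {α : ℤ → ℂ} (hα : Summable α) :
    Tendsto (fun L : ℕ => baileySum Q α L L) atTop
      (𝓝 ((∑' r, α r) * ((qPochInf Q Q)⁻¹ * (qPochInf Q Q)⁻¹))) := by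
  obtain ⟨C, hC⟩ := exists_norm_qFactInv_le hQ
  rw [← tsum_mul_right]
  refine tendsto_tsum_of_dominated_convergence (hα.norm.mul_right (C * C)) (fun r => ?_)
    (Eventually.of_forall fun L r => ?_)
  · have hadd := tendsto_qFactInv_sub hQ (-r)
    simp only [sub_neg_eq_add] at hadd
    exact ((tendsto_qFactInv_sub hQ r).mul hadd).const_mul _
  · rw [norm_mul, norm_mul]
    gcongr
    exacts [(norm_nonneg _).trans (hC 0), hC _, hC _]

theorem summable_pow_sq_mul (hq : ‖q‖ < 1) {b : ℕ → ℂ} {C : ℝ} (hb : ∀ j, ‖b j‖ ≤ C) :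
    Summable fun j : ℕ => q ^ (j ^ 2) * b j := by
  refine .of_norm_bounded ((summable_geometric_of_lt_one (norm_nonneg q) hq).mul_right C)
    fun j => ?_
  rw [norm_mul, norm_pow]
  exact mul_le_mul (pow_le_pow_of_le_one (norm_nonneg q) hq.le (Nat.le_self_pow two_ne_zero j))
    (hb j) (norm_nonneg _) (by positivity)

theorem tsum_pow_sq_mul_baileySum (hQ₀ : Q ≠ 0) (hQ : ‖Q‖ < 1) {α : ℤ → ℂ}
    (hα : Summable fun r : ℤ => Q ^ (r ^ 2) * α r)
    (hβ : Summable fun j : ℕ => Q ^ (j ^ 2) * baileySum Q α j j) :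
    ∑' j : ℕ, Q ^ (j ^ 2) * baileySum Q α j j =
      (qPochInf Q Q)⁻¹ * ∑' r : ℤ, Q ^ (r ^ 2) * α r := by
  obtain ⟨C, hC⟩ := exists_norm_qFactInv_le hQ
  have hfinite (L : ℕ) : ∑' j : ℕ, Q ^ (j ^ 2) * baileySum Q α j j * qFactInv Q (L - j) =
      baileySum Q (fun r => Q ^ (r ^ 2) * α r) L L := by
    rw [← sum_pow_sq_mul_baileySum hQ₀ (not_isOfFinOrder_of_norm_lt_one hQ),
      tsum_eq_sum (s := Finset.range (L + 1)) fun j hj => ?_]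
    · exact Finset.sum_congr rfl fun j _ => mul_right_comm _ _ _
    · rw [Finset.mem_range] at hj
      rw [qFactInv_of_neg Q (by omega), mul_zero]
  have hlim : Tendsto (fun L : ℕ => baileySum Q (fun r => Q ^ (r ^ 2) * α r) L L) atTop
      (𝓝 ((∑' j : ℕ, Q ^ (j ^ 2) * baileySum Q α j j) * (qPochInf Q Q)⁻¹)) := by
    simp only [← hfinite, ← tsum_mul_right]
    refine tendsto_tsum_of_dominated_convergence (hβ.norm.mul_right C)
      (fun j => (tendsto_qFactInv_sub hQ j).const_mul _) (Eventually.of_forall fun L j => ?_)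
    rw [norm_mul]
    gcongr
    exact hC _
  refine mul_right_cancel₀ (inv_ne_zero (qPochInf_ne_zero hQ hQ)) ?_
  rw [tendsto_nhds_unique hlim (tendsto_baileySum hQ hα)]
  ring

theorem tsum_thetaCoeff {p z : ℂ} (hp₀ : p ≠ 0) (hp : ‖p‖ < 1) (hz : z ≠ 0) :
    ∑' r, thetaCoeff p z r = qPochInf z p * qPochInf (p / z) p * qPochInf p p := by
  have hsum := tendsto_baileySum hp (summable_thetaCoeff hp₀ hp hz)
  simp only [baileySum_thetaCoeff hp₀ (not_isOfFinOrder_of_norm_lt_one hp) hz] at hsum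
  have hprod := ((tendsto_qPoch z hp).mul (tendsto_qPoch (p / z) hp)).mul
    ((tendsto_qFactInv hp).comp
      (tendsto_natCast_atTop_atTop.atTop_add_atTop tendsto_natCast_atTop_atTop))
  have hlim := tendsto_nhds_unique hsum hprod
  have hne := qPochInf_ne_zero hp hp
  field_simp at hlim
  linear_combination hlim

end Limits

theorem tprod_subtype_mod_mem {M : Type*} [CommMonoid M] [TopologicalSpace M] [T2Space M]
    [ContinuousMul M] {f : ℕ → M} {N : ℕ} {R : Finset ℕ} (hR : ∀ i ∈ R, i < N)
    (hf : ∀ i ∈ R, Multipliable fun n => f (i + N * n)) :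
    ∏' j : {j : ℕ // j % N ∈ R}, f j = ∏ i ∈ R, ∏' n, f (i + N * n) := by
  have hinj {i : ℕ} (hi : i ∈ R) : Function.Injective fun n => i + N * n := fun m n h =>
    Nat.eq_of_mul_eq_mul_left (Nat.zero_lt_of_lt (hR i hi)) (Nat.add_left_cancel h)
  have hmod {i n : ℕ} (hi : i ∈ R) : (i + N * n) % N = i := by
    rw [Nat.add_mul_mod_self_left, Nat.mod_eq_of_lt (hR i hi)]
  have hset : {j : ℕ | j % N ∈ R} = ⋃ i ∈ R, Set.range fun n => i + N * n := by
    ext j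
    simp only [Set.mem_ofPred_eq, Set.mem_iUnion, Set.mem_range, exists_prop]
    constructor
    · exact fun hj => ⟨j % N, hj, j / N, Nat.mod_add_div j N⟩
    · rintro ⟨i, hi, n, rfl⟩
      rwa [hmod hi]
  have hdisj : (R : Set ℕ).Pairwise
      (Function.onFun Disjoint fun i => Set.range fun n => i + N * n) := by
    intro i hi k hk hik
    refine Set.disjoint_left.mpr ?_
    rintro _ ⟨m, rfl⟩ ⟨n, hn⟩
    exact hik ((hmod hi).symm.trans ((congrArg (· % N) hn).symm.trans (hmod hk)))
  calc ∏' j : {j : ℕ // j % N ∈ R}, f j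
      = ∏' j : ⋃ i ∈ R, Set.range fun n => i + N * n, f j := tprod_congr_set_coe f hset
    _ = ∏ i ∈ R, ∏' j : Set.range fun n => i + N * n, f j :=
        Multipliable.tprod_finset_bUnion_disjoint hdisj fun i hi =>
          (Equiv.ofInjective _ (hinj hi)).multipliable_iff.mp (hf i hi)
    _ = ∏ i ∈ R, ∏' n, f (i + N * n) :=
        Finset.prod_congr rfl fun i hi => tprod_range f (hinj hi)

section RogersSelberg

variable {q : ℂ}

theorem tprod_inv_one_sub_pow_mod_mem (hq : ‖q‖ < 1) {N : ℕ} {R : Finset ℕ}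
    (hR : ∀ i ∈ R, 0 < i ∧ i < N) :
    ∏' j : {j : ℕ // j % N ∈ R}, (1 - q ^ (j : ℕ))⁻¹ = ∏ i ∈ R, (qPochInf (q ^ i) (q ^ N))⁻¹ := by
  have hclass {i : ℕ} (hi : i ∈ R) : HasProd (fun n => (1 - q ^ (i + N * n))⁻¹)
      (qPochInf (q ^ i) (q ^ N))⁻¹ := by
    obtain ⟨hi₀, hiN⟩ := hR i hi
    have hqi : ‖q ^ i‖ < 1 := norm_pow_lt_one hq hi₀.ne'
    have hqN : ‖q ^ N‖ < 1 := norm_pow_lt_one hq (hi₀.trans hiN).ne'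
    simp only [pow_add, pow_mul]
    exact (multipliable_one_sub_mul_pow _ hqN).hasProd.inv₀ (qPochInf_ne_zero hqi hqN)
  rw [tprod_subtype_mod_mem (f := fun j => (1 - q ^ j)⁻¹) (fun i hi => (hR i hi).2)
    fun i hi => (hclass hi).multipliable]
  exact Finset.prod_congr rfl fun i hi => (hclass hi).tprod_eq

theorem tsum_pow_sq_mul_baileySum_thetaCoeff_cube (hq₀ : q ≠ 0) (hq : ‖q‖ < 1) :
    ∑' j : ℕ, (q ^ 2) ^ (j ^ 2) * baileySum (q ^ 2) (thetaCoeff (q ^ 3) q) j j =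
      (qPochInf (q ^ 2) (q ^ 2))⁻¹ *
        (qPochInf (q ^ 3) (q ^ 7) * qPochInf (q ^ 4) (q ^ 7) * qPochInf (q ^ 7) (q ^ 7)) := by
  have hpow {n : ℕ} (hn : n ≠ 0) : ‖q ^ n‖ < 1 := norm_pow_lt_one hq hn
  obtain ⟨A, hA⟩ := exists_norm_qPoch_le q (hpow two_ne_zero)
  obtain ⟨B, hB⟩ := exists_norm_qFactInv_le (hpow two_ne_zero)
  have hbound (j : ℕ) : ‖baileySum (q ^ 2) (thetaCoeff (q ^ 3) q) j j‖ ≤ A * B := by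
    rw [baileySum_thetaCoeff_cube hq₀ (not_isOfFinOrder_of_norm_lt_one hq), norm_mul]
    exact mul_le_mul (hA j) (hB _) (norm_nonneg _) ((norm_nonneg _).trans (hA j))
  have htheta (r : ℤ) :
      (q ^ 2) ^ (r ^ 2) * thetaCoeff (q ^ 3) q r = thetaCoeff (q ^ 7) (q ^ 3) r := by
    rw [zpow_sq_mul_thetaCoeff (pow_ne_zero 2 hq₀)]
    ring_nf
  have hsummable : Summable (thetaCoeff (q ^ 7) (q ^ 3)) :=
    summable_thetaCoeff (pow_ne_zero 7 hq₀) (hpow (by norm_num)) (pow_ne_zero 3 hq₀)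
  rw [tsum_pow_sq_mul_baileySum (pow_ne_zero 2 hq₀) (hpow two_ne_zero)
    (hsummable.congr fun r => (htheta r).symm) (summable_pow_sq_mul (hpow two_ne_zero) hbound),
    tsum_congr htheta, tsum_thetaCoeff (pow_ne_zero 7 hq₀) (hpow (by norm_num)) (pow_ne_zero 3 hq₀),
    show q ^ 7 / q ^ 3 = q ^ 4 by field_simp]

theorem qPochInf_div_qPoch_eq_mul_baileySum (hq₀ : q ≠ 0) (hq : ‖q‖ < 1) (j : ℕ) :
    qPochInf (-(q ^ (2 * j + 1))) q / qPoch (q ^ 2) (q ^ 2) j =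
      qPochInf (-q) q * baileySum (q ^ 2) (thetaCoeff (q ^ 3) q) j j := by
  have hfin := not_isOfFinOrder_of_norm_lt_one hq
  have hfin₂ : ¬IsOfFinOrder (q ^ 2) := fun h => hfin (h.of_pow two_ne_zero)
  have htail : qPoch (-q) q (2 * j) * qPochInf (-(q ^ (2 * j + 1))) q = qPochInf (-q) q := by
    rw [← qPoch_mul_qPochInf (-q) hq (2 * j), neg_mul, ← pow_succ']
  have hsplit : qPoch q q (2 * j) = qPoch q (q ^ 2) j * qPoch (q ^ 2) (q ^ 2) j := by
    rw [qPoch_mul_eq_prod, Finset.prod_range_succ, Finset.prod_range_one, pow_zero, mul_one,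
      pow_one, ← sq]
  have hneg := qPoch_mul_qPoch_neg q q (2 * j)
  have hne := qPoch_self_ne_zero hfin₂ j
  have hne₂ := qPoch_self_ne_zero hfin₂ (2 * j)
  rw [baileySum_thetaCoeff_cube hq₀ hfin, ← Nat.cast_add, ← two_mul, qFactInv_natCast, ← htail]
  field_simp
  rw [← hneg, hsplit]
  ring

theorem tprod_inv_one_sub_pow_mod_seven (hq : ‖q‖ < 1) :
    ∏' j : {j : ℕ // 0 < j ∧ j % 7 ≠ 0 ∧ j % 7 ≠ 3 ∧ j % 7 ≠ 4}, (1 - q ^ (j : ℕ))⁻¹ =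
      (qPochInf q q)⁻¹ *
        (qPochInf (q ^ 3) (q ^ 7) * qPochInf (q ^ 4) (q ^ 7) * qPochInf (q ^ 7) (q ^ 7)) := by
  have hset : {j : ℕ | 0 < j ∧ j % 7 ≠ 0 ∧ j % 7 ≠ 3 ∧ j % 7 ≠ 4} =
      {j : ℕ | j % 7 ∈ ({1, 2, 5, 6} : Finset ℕ)} := by
    ext j
    simp only [Set.mem_ofPred_eq, Finset.mem_insert, Finset.mem_singleton]
    omega
  have hne {i : ℕ} (hi : i ≠ 0) : qPochInf (q ^ i) (q ^ 7) ≠ 0 :=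
    qPochInf_ne_zero (norm_pow_lt_one hq hi) (norm_pow_lt_one hq (by norm_num))
  have hsplit : qPochInf q q = (∏ i ∈ {1, 2, 5, 6}, qPochInf (q ^ i) (q ^ 7)) *
      (qPochInf (q ^ 3) (q ^ 7) * qPochInf (q ^ 4) (q ^ 7) * qPochInf (q ^ 7) (q ^ 7)) := by
    rw [qPochInf_eq_prod q hq (N := 7) (by norm_num)]
    simp only [← pow_succ', Finset.prod_range_succ, Finset.prod_range_zero, Finset.prod_insert,
      Finset.prod_singleton, Finset.mem_insert, Finset.mem_singleton, OfNat.one_ne_ofNat,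
      Nat.reduceEqDiff, or_self, not_false_eq_true, Nat.reduceAdd, pow_one]
    ring
  calc ∏' j : {j : ℕ // 0 < j ∧ j % 7 ≠ 0 ∧ j % 7 ≠ 3 ∧ j % 7 ≠ 4}, (1 - q ^ (j : ℕ))⁻¹
      = ∏' j : {j : ℕ // j % 7 ∈ ({1, 2, 5, 6} : Finset ℕ)}, (1 - q ^ (j : ℕ))⁻¹ :=
        tprod_congr_set_coe (fun j => (1 - q ^ j)⁻¹) hset
    _ = (∏ i ∈ {1, 2, 5, 6}, qPochInf (q ^ i) (q ^ 7))⁻¹ := by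
        rw [tprod_inv_one_sub_pow_mod_mem hq (by decide), Finset.prod_inv_distrib]
    _ = (qPochInf q q)⁻¹ *
        (qPochInf (q ^ 3) (q ^ 7) * qPochInf (q ^ 4) (q ^ 7) * qPochInf (q ^ 7) (q ^ 7)) := by
        rw [hsplit, mul_inv, inv_mul_cancel_right₀ (mul_ne_zero (mul_ne_zero (hne three_ne_zero)
          (hne four_ne_zero)) (hne (by norm_num)))]

end RogersSelberg

/-- The third Rogers–Selberg identity (mod 7). -/
theorem rogers_selberg_third (q : ℂ) (hq : ‖q‖ < 1) :
    ∑' j : ℕ, q ^ (2 * j ^ 2) * qPochInf (-(q ^ (2 * j + 1))) q / qPoch (q ^ 2) (q ^ 2) j =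
      ∏' j : {j : ℕ // 0 < j ∧ j % 7 ≠ 0 ∧ j % 7 ≠ 3 ∧ j % 7 ≠ 4},
        (1 - q ^ (j : ℕ))⁻¹ := by
  rw [tprod_inv_one_sub_pow_mod_seven hq]
  rcases eq_or_ne q 0 with rfl | hq₀
  · rw [tsum_eq_single 0 fun j hj => by simp [hj]]
    simp [qPoch_zero, qPochInf_zero_right]
  have hne : qPochInf (-q) q ≠ 0 := qPochInf_ne_zero (by rwa [norm_neg]) hq
  simp only [mul_div_assoc, qPochInf_div_qPoch_eq_mul_baileySum hq₀ hq, pow_mul,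
    mul_left_comm _ (qPochInf (-q) q)]
  rw [tsum_mul_left, tsum_pow_sq_mul_baileySum_thetaCoeff_cube hq₀ hq,
    ← qPochInf_mul_qPochInf_neg q hq, mul_inv]
  field_simp
end

section
/- Let k and i be integers with 1 ≤ i ≤ k. For every natural number n, the number of partitions of n in which the part 1 appears at most i−1 times and, for every positive integer j, the total number of appearances of j and j+1 together is at most k−1, equals the number of partitions of n into parts none of which is congruent to 0, i, or −i modulo 2k+1. -/
/-!
Let `G_{N,i}` be the generating function of the partitions into parts larger than `N` that satisfy
Gordon's condition with `N + 1` occurring fewer than `i` times. Splitting off the partitions in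
which `N + 1` occurs exactly `i` times gives `G_{N,i+1} = G_{N,i} + q^{(N+1)i} G_{N+1,k-i}`.
Andrews' series `J_{k,i}(q^N)` satisfies the same recurrence; both families vanish at `i = 0` and
tend to `1` `q`-adically as `N → ∞`, and this determines the solution. Multiplied by `(q; q)_∞`,
the series at `N = 0` becomes the theta series `∑ (-1)^n q^{(2k+1)n(n-1)/2 + (2k+1-i)n}` over
`n ∈ ℤ`, which the Jacobi triple product identifies with the product of the `1 - q^j`,
`j ≡ 0, ±i (mod 2k+1)`. Division by `(q; q)_∞` leaves the generating function of the partitions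
into the other parts.
-/

open Finset Filter Topology
open scoped PowerSeries PowerSeries.WithPiTopology

namespace RogersRamanujan

section QSeries

variable {R : Type*} [CommRing R]

/-- The finite `q`-Pochhammer symbol `(a; q)_n = (1 - a)(1 - aq) ⋯ (1 - aqⁿ⁻¹)`. -/
def qPochhammer (a q : R) (n : ℕ) : R := ∏ m ∈ range n, (1 - a * q ^ m)

lemma qPochhammer_zero (a q : R) : qPochhammer a q 0 = 1 := prod_range_zero _

lemma qPochhammer_succ (a q : R) (n : ℕ) :
    qPochhammer a q (n + 1) = qPochhammer a q n * (1 - a * q ^ n) :=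
  prod_range_succ _ _

lemma qPochhammer_succ' (a q : R) (n : ℕ) :
    qPochhammer a q (n + 1) = (1 - a) * qPochhammer (a * q) q n := by
  simp only [qPochhammer, prod_range_succ', pow_zero, mul_one, pow_succ', mul_assoc, mul_comm]

lemma qPochhammer_add (a q : R) (m n : ℕ) :
    qPochhammer a q (m + n) = qPochhammer a q m * qPochhammer (a * q ^ m) q n := by
  simp only [qPochhammer, prod_range_add, pow_add, mul_assoc]

lemma dvd_qPochhammer_sub_one (a q : R) (n : ℕ) : a ∣ qPochhammer a q n - 1 := by
  induction n with
  | zero => simp [qPochhammer_zero]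
  | succ n ih =>
    have h : qPochhammer a q (n + 1) - 1 =
        (qPochhammer a q n - 1) - a * (qPochhammer a q n * q ^ n) := by
      rw [qPochhammer_succ]; ring
    exact h ▸ dvd_sub ih (dvd_mul_right _ _)

/-- The Gaussian binomial coefficient `[n, j]_q`, defined by a `q`-Pascal recursion, so that no
division is needed and `q` may be an element of any commutative ring. -/
def gaussBinom (q : R) : ℕ → ℕ → R
  | _, 0 => 1
  | 0, _ + 1 => 0
  | n + 1, j + 1 => q ^ (j + 1) * gaussBinom q n (j + 1) + gaussBinom q n j

lemma gaussBinom_zero_right (q : R) (n : ℕ) : gaussBinom q n 0 = 1 := by cases n <;> rfl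

lemma gaussBinom_succ_succ (q : R) (n j : ℕ) :
    gaussBinom q (n + 1) (j + 1) = q ^ (j + 1) * gaussBinom q n (j + 1) + gaussBinom q n j := rfl

lemma gaussBinom_eq_zero_of_lt (q : R) : ∀ {n j : ℕ}, n < j → gaussBinom q n j = 0
  | 0, _ + 1, _ => rfl
  | n + 1, j + 1, h => by
    rw [gaussBinom_succ_succ, gaussBinom_eq_zero_of_lt q (by lia : n < j + 1),
      gaussBinom_eq_zero_of_lt q (by lia : n < j), mul_zero, add_zero]

lemma gaussBinom_self (q : R) (n : ℕ) : gaussBinom q n n = 1 := by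
  induction n with
  | zero => rfl
  | succ n ih => rw [gaussBinom_succ_succ, gaussBinom_eq_zero_of_lt q n.lt_succ_self, ih]; ring

lemma gaussBinom_add_succ_succ (q : R) (d j : ℕ) :
    gaussBinom q (d + j + 1) (j + 1) =
      gaussBinom q (d + j) (j + 1) + q ^ d * gaussBinom q (d + j) j := by
  induction d generalizing j with
  | zero => simp [gaussBinom_self, gaussBinom_eq_zero_of_lt]
  | succ d ihd =>
    induction j with
    | zero =>
      have h := ihd 0
      simp only [add_zero, zero_add, gaussBinom_succ_succ, gaussBinom_zero_right] at h ⊢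
      linear_combination q * h
    | succ j ihj =>
      have h := ihd (j + 1)
      rw [show d + (j + 1) = d + 1 + j by ring] at h
      rw [← add_assoc (d + 1) j 1]
      linear_combination gaussBinom_succ_succ q (d + 1 + j + 1) (j + 1) + q ^ (j + 2) * h + ihj -
        gaussBinom_succ_succ q (d + 1 + j) (j + 1) -
        q ^ (d + 1) * gaussBinom_succ_succ q (d + 1 + j) j

lemma sum_gaussBinom_succ_mul (q : R) (f : ℕ → R) (n : ℕ) :
    ∑ j ∈ range (n + 2), gaussBinom q (n + 1) j * f j =
      ∑ j ∈ range (n + 1), gaussBinom q n j * (f j + q ^ (n - j) * f (j + 1)) := by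
  have h_pascal (j) (hj : j ∈ range (n + 1)) : gaussBinom q (n + 1) (j + 1) * f (j + 1) =
      gaussBinom q n (j + 1) * f (j + 1) + gaussBinom q n j * (q ^ (n - j) * f (j + 1)) := by
    obtain ⟨d, rfl⟩ := Nat.exists_eq_add_of_le' (mem_range_succ_iff.1 hj)
    rw [gaussBinom_add_succ_succ, Nat.add_sub_cancel]
    ring
  have h_shift : ∑ j ∈ range (n + 1), gaussBinom q n (j + 1) * f (j + 1) + f 0 =
      ∑ j ∈ range (n + 1), gaussBinom q n j * f j := by
    have := sum_range_succ' (fun j => gaussBinom q n j * f j) (n + 1)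
    rwa [sum_range_succ, gaussBinom_eq_zero_of_lt q n.lt_succ_self, gaussBinom_zero_right,
      zero_mul, add_zero, one_mul, eq_comm] at this
  rw [sum_range_succ', sum_congr rfl h_pascal, gaussBinom_zero_right, one_mul, sum_add_distrib,
    add_right_comm, h_shift, ← sum_add_distrib]
  simp only [mul_add]

lemma sum_gaussBinom_succ_mul' (q : R) (f : ℕ → R) (n : ℕ) :
    ∑ j ∈ range (n + 2), gaussBinom q (n + 1) j * f j =
      ∑ j ∈ range (n + 1), gaussBinom q n j * (q ^ j * f j + f (j + 1)) := by
  have h_shift : ∑ j ∈ range (n + 1), q ^ (j + 1) * gaussBinom q n (j + 1) * f (j + 1) + f 0 =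
      ∑ j ∈ range (n + 1), q ^ j * gaussBinom q n j * f j := by
    have := sum_range_succ' (fun j => q ^ j * gaussBinom q n j * f j) (n + 1)
    rwa [sum_range_succ, gaussBinom_eq_zero_of_lt q n.lt_succ_self, gaussBinom_zero_right,
      mul_zero, zero_mul, add_zero, pow_zero, mul_one, one_mul, eq_comm] at this
  simp only [sum_range_succ' _ (n + 1), gaussBinom_succ_succ, gaussBinom_zero_right, one_mul,
    add_mul, sum_add_distrib]
  rw [add_right_comm, h_shift, ← sum_add_distrib]
  exact sum_congr rfl fun j _ => by ring

lemma gaussBinom_mul_qPochhammer (q : R) (s j : ℕ) :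
    gaussBinom q (s + j) j * qPochhammer q q j = qPochhammer (q ^ (s + 1)) q j := by
  induction s generalizing j with
  | zero => simp [gaussBinom_self]
  | succ s ihs =>
    induction j with
    | zero => simp [gaussBinom_zero_right, qPochhammer_zero]
    | succ j ihj =>
      have h := ihs (j + 1)
      rw [show s + (j + 1) = s + 1 + j by ring, qPochhammer_succ' (q ^ (s + 1)), ← pow_succ] at h
      rw [← add_assoc, gaussBinom_succ_succ, add_mul, mul_assoc, h, qPochhammer_succ q,
        qPochhammer_succ (q ^ (s + 1 + 1))]
      linear_combination (1 - q * q ^ j) * ihj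

/-- The `n`-th term `(-1)ⁿ a^{n(n+1)/2} b^{n(n-1)/2}` of the bilateral theta series, written as
`(-1)ⁿ aⁿ (ab)^{n(n-1)/2}` if `n ≥ 0` and with the roles of `a` and `b` exchanged if `n ≤ 0`. -/
def thetaTerm (a b : R) (n : ℤ) : R :=
  (-1) ^ n.natAbs * a ^ n.toNat * b ^ (-n).toNat * (a * b) ^ n.natAbs.choose 2

lemma thetaTerm_natCast (a b : R) (n : ℕ) :
    thetaTerm a b n = (-1) ^ n * a ^ n * (a * b) ^ n.choose 2 := by
  simp [thetaTerm]

lemma thetaTerm_neg (a b : R) (n : ℤ) : thetaTerm a b (-n) = thetaTerm b a n := by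
  simp only [thetaTerm, Int.natAbs_neg, neg_neg, mul_comm a b]
  ring

lemma choose_two_succ (n : ℕ) : (n + 1).choose 2 = n + n.choose 2 := by
  rw [Nat.choose_succ_succ' n 1, Nat.choose_one_right]

lemma pow_mul_thetaTerm_add_one (a b : R) {p m : ℕ} {n : ℤ} (h : p + n = m) :
    (a * b) ^ p * thetaTerm a b (n + 1) = -(a * (a * b) ^ m) * thetaTerm a b n := by
  obtain ⟨r, rfl | rfl⟩ := n.eq_nat_or_neg
  · obtain rfl : m = p + r := by lia
    rw [← Nat.cast_add_one, thetaTerm_natCast, thetaTerm_natCast, choose_two_succ]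
    ring
  · cases r with
    | zero =>
      obtain rfl : p = m := by lia
      simp [thetaTerm, mul_comm]
    | succ r =>
      obtain rfl : p = m + r + 1 := by lia
      rw [Nat.cast_add_one, neg_add, neg_add_cancel_right, ← neg_add, ← Nat.cast_add_one,
        thetaTerm_neg, thetaTerm_neg, thetaTerm_natCast, thetaTerm_natCast, choose_two_succ]
      ring

lemma pow_mul_thetaTerm_sub_one (a b : R) {p m : ℕ} {n : ℤ} (h : p - n = m) :
    (a * b) ^ p * thetaTerm a b (n - 1) = -(b * (a * b) ^ m) * thetaTerm a b n := by
  have := pow_mul_thetaTerm_add_one b a (n := -n) (by lia : (p : ℤ) + -n = m)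
  rwa [← thetaTerm_neg a b, ← thetaTerm_neg a b, neg_add, neg_neg, ← sub_eq_add_neg,
    mul_comm b a] at this

/-- In this finite form of the Jacobi triple product the two sizes are independent, so that each
induction step multiplies by a single factor. -/
theorem qPochhammer_mul_qPochhammer_eq_sum (a b : R) (M N : ℕ) :
    qPochhammer a (a * b) M * qPochhammer b (a * b) N =
      ∑ j ∈ range (M + N + 1), gaussBinom (a * b) (M + N) j * thetaTerm a b (j - N) := by
  induction M with
  | zero =>
    induction N with
    | zero => simp [qPochhammer_zero, gaussBinom_zero_right, thetaTerm]
    | succ N ih =>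
      rw [qPochhammer_succ b, ← mul_assoc, ih, ← add_assoc, sum_gaussBinom_succ_mul', sum_mul]
      refine sum_congr rfl fun j _ => ?_
      have hθ := pow_mul_thetaTerm_sub_one a b (p := j) (m := N) (n := j - N) (by lia)
      rw [show (j : ℤ) - (N + 1 : ℕ) = j - N - 1 by lia,
        show ((j + 1 : ℕ) : ℤ) - (N + 1 : ℕ) = j - N by lia, hθ]
      ring
  | succ M ih =>
    rw [qPochhammer_succ a, mul_right_comm, ih, Nat.add_right_comm M 1 N, sum_gaussBinom_succ_mul,
      sum_mul]
    refine sum_congr rfl fun j hj => ?_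
    have hj : j ≤ M + N := mem_range_succ_iff.1 hj
    have hθ := pow_mul_thetaTerm_add_one a b (p := M + N - j) (m := M) (n := j - N) (by lia)
    rw [show ((j + 1 : ℕ) : ℤ) - N = j - N + 1 by lia, hθ]
    ring

lemma dvd_mul_sub_one {c x y : R} (hx : c ∣ x - 1) (hy : c ∣ y - 1) : c ∣ x * y - 1 := by
  rw [show x * y - 1 = (x - 1) * y + (y - 1) by ring]
  exact dvd_add (hx.mul_right y) hy

lemma le_choose_two_add_one (n : ℕ) : n ≤ n.choose 2 + 1 := by
  cases n with
  | zero => lia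
  | succ n => rw [choose_two_succ]; lia

lemma pow_dvd_thetaTerm (a b : R) (n : ℤ) : (a * b) ^ n.natAbs.choose 2 ∣ thetaTerm a b n :=
  dvd_mul_left _ _

lemma pow_dvd_qPochhammer_mul_gaussBinom_sub_one (q : R) {c n j : ℕ} (hj : j ≤ n)
    (hcj : c ≤ j + 1) (hcn : c + j ≤ n + 1) :
    q ^ c ∣ qPochhammer q q n * gaussBinom q n j - 1 := by
  obtain ⟨s, rfl⟩ := Nat.exists_eq_add_of_le' hj
  have h : qPochhammer q q (s + j) * gaussBinom q (s + j) j =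
      qPochhammer (q ^ (s + 1)) q j * qPochhammer (q ^ (j + 1)) q s := by
    rw [add_comm s j, qPochhammer_add, add_comm j s, ← gaussBinom_mul_qPochhammer, pow_succ']
    ring
  rw [h]
  exact dvd_mul_sub_one
    ((pow_dvd_pow q (by lia)).trans (dvd_qPochhammer_sub_one _ _ _))
    ((pow_dvd_pow q (by lia)).trans (dvd_qPochhammer_sub_one _ _ _))

theorem pow_dvd_qPochhammer_mul_sub_sum_thetaTerm (a b : R) (M : ℕ) :
    (a * b) ^ M ∣ qPochhammer (a * b) (a * b) (M + M) *
      (qPochhammer a (a * b) M * qPochhammer b (a * b) M) -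
        ∑ j ∈ range (M + M + 1), thetaTerm a b (j - M) := by
  rw [qPochhammer_mul_qPochhammer_eq_sum, mul_sum, ← sum_sub_distrib]
  refine dvd_sum fun j hj => ?_
  have hj : j ≤ M + M := mem_range_succ_iff.1 hj
  set r := ((j : ℤ) - M).natAbs
  have h_coeff := pow_dvd_qPochhammer_mul_gaussBinom_sub_one (a * b) (c := M + 1 - r) hj
    (by lia) (by lia)
  rw [← mul_assoc, ← sub_one_mul]
  have h_exp : M ≤ M + 1 - r + r.choose 2 := by have := le_choose_two_add_one r; lia
  exact (pow_dvd_pow _ h_exp).trans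
    (pow_add (a * b) _ _ ▸ mul_dvd_mul h_coeff (pow_dvd_thetaTerm ..))

end QSeries

section PowerSeries

open PowerSeries

variable {R : Type*} [CommRing R]

lemma eq_zero_of_forall_X_pow_dvd {f : R⟦X⟧} (h : ∀ n : ℕ, X ^ n ∣ f) : f = 0 := by
  ext n
  exact X_pow_dvd_iff.1 (h (n + 1)) n n.lt_succ_self

variable [TopologicalSpace R]

lemma isClosed_setOf_X_pow_dvd [T1Space R] (n : ℕ) : IsClosed {f : R⟦X⟧ | X ^ n ∣ f} := by
  simp only [X_pow_dvd_iff, Set.ofPred_forall]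
  exact isClosed_iInter fun m => isClosed_iInter fun _ =>
    isClosed_singleton.preimage (WithPiTopology.continuous_coeff R m)

lemma tendsto_zero_of_X_pow_dvd {f : ℕ → R⟦X⟧} (h : ∀ n, X ^ n ∣ f n) :
    Tendsto f atTop (𝓝 0) :=
  (WithPiTopology.tendsto_iff_coeff_tendsto R f _ 0).2 fun d =>
    tendsto_atTop_of_eventually_const (i₀ := d + 1) fun n hn =>
      (X_pow_dvd_iff.1 (h n) d hn).trans (map_zero _).symm

lemma summable_of_X_pow_dvd {ι : Type*} {e : ι → ℕ} (he : Tendsto e cofinite atTop)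
    {f : ι → R⟦X⟧} (h : ∀ i, X ^ e i ∣ f i) : Summable f := by
  refine (WithPiTopology.summable_iff_summable_coeff R).2 fun d =>
    summable_of_hasFiniteSupport ((he.eventually_gt_atTop d).subset fun i hi hdi => ?_)
  exact hi (X_pow_dvd_iff.1 (h i) d hdi)

lemma X_pow_dvd_tsum [T1Space R] {ι : Type*} {n : ℕ} {f : ι → R⟦X⟧} (h : ∀ i, X ^ n ∣ f i) :
    X ^ n ∣ ∑' i, f i := by
  by_cases hf : Summable f
  · exact (isClosed_setOf_X_pow_dvd n).mem_of_tendsto hf.hasSum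
      (.of_forall fun s => dvd_sum fun i _ => h i)
  · simp [tsum_eq_zero_of_not_summable hf]

/-- The infinite `q`-Pochhammer symbol `(a; q)_∞` of two formal power series. It is meaningful when
`X` divides `q`, so that the product converges. -/
noncomputable def qPochhammerInf (a q : R⟦X⟧) : R⟦X⟧ := ∏' m : ℕ, (1 - a * q ^ m)

lemma multipliable_one_sub_mul_pow [IsTopologicalRing R] (a : R⟦X⟧) {q : R⟦X⟧} (hq : X ∣ q) :
    Multipliable fun m => 1 - a * q ^ m := by
  simp only [sub_eq_add_neg]
  refine WithPiTopology.multipliable_one_add_of_tendsto_order_atTop_nhds_top R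
    (ENat.tendsto_nhds_top_iff_natCast_lt.2 fun d => eventually_atTop.2 ⟨d + 1, fun m hm => ?_⟩)
  rw [order_neg]
  refine (Nat.cast_lt.2 hm).trans_le (nat_le_order _ _ (X_pow_dvd_iff.1 ?_))
  exact (pow_dvd_pow_of_dvd hq m).mul_left a

lemma tendsto_qPochhammer [IsTopologicalRing R] (a : R⟦X⟧) {q : R⟦X⟧} (hq : X ∣ q) :
    Tendsto (qPochhammer a q) atTop (𝓝 (qPochhammerInf a q)) :=
  (multipliable_one_sub_mul_pow a hq).tendsto_prod_tprod_nat

lemma X_pow_dvd_qPochhammerInf_sub [IsTopologicalRing R] [T1Space R] (n : ℕ) :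
    (X : R⟦X⟧) ^ n ∣ qPochhammerInf X X - qPochhammer X X n := by
  refine (isClosed_setOf_X_pow_dvd n).mem_of_tendsto
    ((tendsto_qPochhammer X dvd_rfl).sub_const _)
    (eventually_atTop.2 ⟨n, fun m hm => ?_⟩)
  obtain ⟨d, rfl⟩ := Nat.exists_eq_add_of_le hm
  rw [Set.mem_ofPred_eq, qPochhammer_add, ← mul_sub_one]
  exact ((pow_dvd_pow X n.le_succ).trans
    (pow_succ' (X : R⟦X⟧) n ▸ dvd_qPochhammer_sub_one _ _ d)).mul_left _

lemma tendsto_natAbs_choose_two : Tendsto (fun n : ℤ => n.natAbs.choose 2) cofinite atTop := by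
  refine tendsto_atTop.2 fun d => (Set.finite_Icc (-(d : ℤ)) d).subset fun n hn => ?_
  have := le_choose_two_add_one n.natAbs
  simp only [Set.mem_compl_iff, Set.mem_ofPred_eq, not_le] at hn
  exact ⟨by lia, by lia⟩

lemma summable_thetaTerm {a b : R⟦X⟧} (h : X ∣ a * b) : Summable (thetaTerm a b) :=
  summable_of_X_pow_dvd tendsto_natAbs_choose_two fun n =>
    (pow_dvd_pow_of_dvd h _).trans (pow_dvd_thetaTerm a b n)

theorem qPochhammerInf_mul_eq_tsum_thetaTerm [IsTopologicalRing R] [T2Space R] {a b : R⟦X⟧}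
    (h : X ∣ a * b) :
    qPochhammerInf (a * b) (a * b) * (qPochhammerInf a (a * b) * qPochhammerInf b (a * b)) =
      ∑' n : ℤ, thetaTerm a b n := by
  have h_sum : Tendsto (fun M : ℕ => ∑ j ∈ range (M + M + 1), thetaTerm a b (j - M)) atTop
      (𝓝 (∑' n : ℤ, thetaTerm a b n)) := by
    refine ((summable_thetaTerm h).hasSum.comp
      (tendsto_Icc_neg_atTop_atTop.comp tendsto_natCast_atTop_atTop)).congr fun M => ?_
    exact sum_nbij' (fun n => (n + M).toNat) (fun j => j - M) (by grind) (by grind) (by grind)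
      (by grind) (by grind)
  have h_double : Tendsto (fun M : ℕ => M + M) atTop atTop :=
    tendsto_atTop_mono (fun M => M.le_add_left M) tendsto_id
  have h_prod := ((tendsto_qPochhammer (a * b) h).comp h_double).mul
    ((tendsto_qPochhammer a h).mul (tendsto_qPochhammer b h))
  have h_diff := tendsto_zero_of_X_pow_dvd fun M =>
    (pow_dvd_pow_of_dvd h M).trans (pow_dvd_qPochhammer_mul_sub_sum_thetaTerm a b M)
  exact sub_eq_zero.1 (tendsto_nhds_unique (h_prod.sub h_sum) h_diff)

end PowerSeries

section GordonTerm

variable {R : Type*} [CommRing R]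

/-- The `n`-th term of `(q; q)_∞ J_{k,i}(q^N)`, where `J_{k,i}(x)` is Andrews' alternating
`q`-series. Multiplication by `(q; q)_∞` clears the denominators of `J_{k,i}` and leaves the factor
`(q; q)_{N+n} / (q; q)_n = (q^{n+1}; q)_N`. -/
def gordonTerm (q : R) (k N i n : ℕ) : R :=
  (-1) ^ n * q ^ (k * N * n + (2 * k + 1) * n.choose 2 + (2 * k + 1 - i) * n) *
    (1 - q ^ ((N + 2 * n + 1) * i)) * qPochhammer (q ^ (n + 1)) q N

lemma gordonTerm_zero_right (q : R) (k N n : ℕ) : gordonTerm q k N 0 n = 0 := by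
  simp [gordonTerm]

lemma pow_dvd_gordonTerm (q : R) {k i m : ℕ} (N : ℕ) {n : ℕ}
    (h : m ≤ k * N * n + (2 * k + 1 - i) * n) : q ^ m ∣ gordonTerm q k N i n := by
  rw [gordonTerm, mul_assoc, mul_assoc]
  exact ((pow_dvd_pow q (by lia)).mul_right _).mul_left _

/-- The recurrence of Andrews' series `J_{k,i}` holds term by term up to the telescoping `u`. -/
lemma exists_gordonTerm_succ_eq (q : R) {k i : ℕ} (hi : i < k) (N : ℕ) :
    ∃ u : ℕ → R, u 0 = 0 ∧ (∀ n, q ^ n ∣ u n) ∧ ∀ n, gordonTerm q k N (i + 1) n =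
      gordonTerm q k N i n + q ^ ((N + 1) * i) * gordonTerm q k (N + 1) (k - i) n +
        (u n - u (n + 1)) := by
  obtain ⟨d, hk⟩ := Nat.exists_eq_add_of_lt hi
  set u : ℕ → R := fun n => (-1) ^ n *
    (q ^ (k * N * n + (2 * k + 1) * n.choose 2 + (i + 2 * d + 2) * n) *
      ((1 - q ^ n) * qPochhammer (q ^ (n + 1)) q N)) with hu
  refine ⟨u, by simp [hu], fun n => ?_, fun n => ?_⟩
  · exact ((pow_dvd_pow q (by lia)).mul_right _).mul_left _
  · set v := (-1) ^ n * q ^ (k * N * n + (2 * k + 1) * n.choose 2 + (2 * k + 1 + i) * n +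
      (N + 1) * i) * qPochhammer (q ^ (n + 1)) q (N + 1) with hv
    have h_left : gordonTerm q k N (i + 1) n - gordonTerm q k N i n = u n + v := by
      simp only [gordonTerm, hu, hv, qPochhammer_succ,
        show 2 * k + 1 - (i + 1) = i + 2 * d + 2 by lia, show 2 * k + 1 - i = i + 2 * d + 3 by lia]
      rw [hk]
      ring
    have h_right : q ^ ((N + 1) * i) * gordonTerm q k (N + 1) (k - i) n = v + u (n + 1) := by
      simp only [gordonTerm, hu, hv, qPochhammer_succ' (q ^ (n + 1)), ← pow_succ, choose_two_succ,
        show k - i = d + 1 by lia, show 2 * k + 1 - (d + 1) = 2 * i + d + 2 by lia]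
      rw [hk]
      ring
    linear_combination h_left - h_right

lemma gordonTerm_zero_eq_add_thetaTerm (q : R) {k i : ℕ} (hi : i ≤ 2 * k + 1) (n : ℕ) :
    gordonTerm q k 0 i n =
      thetaTerm (q ^ (2 * k + 1 - i)) (q ^ i) n +
        thetaTerm (q ^ (2 * k + 1 - i)) (q ^ i) (-(n + 1)) := by
  obtain ⟨d, hd⟩ := Nat.exists_eq_add_of_le' hi
  simp only [← Nat.cast_add_one, thetaTerm_neg, thetaTerm_natCast, gordonTerm, hd,
    Nat.add_sub_cancel, choose_two_succ, qPochhammer_zero]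
  ring

end GordonTerm

section GordonSum

open PowerSeries

variable {R : Type*} [CommRing R]

/-- Each application of the recurrence raises `N`, so an induction on `d` shows that `X ^ (N + d)`
divides `D N i`. -/
lemma eq_zero_of_gordon_recurrence {k : ℕ} {D : ℕ → ℕ → R⟦X⟧} {c : ℕ → ℕ → R⟦X⟧}
    (h_zero : ∀ N, D N 0 = 0) (h_dvd : ∀ N i, 0 < i → i ≤ k → X ^ N ∣ D N i)
    (h_succ : ∀ N i, i < k → D N (i + 1) = D N i + c N i * D (N + 1) (k - i)) {N i : ℕ}
    (hi : i ≤ k) : D N i = 0 := by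
  have h_dvd_add (d N i : ℕ) (hi : i ≤ k) : X ^ (N + d) ∣ D N i := by
    induction d generalizing N i with
    | zero =>
      obtain rfl | hi' := i.eq_zero_or_pos
      · simp [h_zero]
      · exact h_dvd N i hi' hi
    | succ d ihd =>
      induction i with
      | zero => simp [h_zero]
      | succ i ihi =>
        rw [h_succ N i hi]
        exact dvd_add (ihi (by lia))
          ((Nat.add_right_comm N 1 d ▸ ihd (N + 1) (k - i) (by lia)).mul_left _)
  exact eq_zero_of_forall_X_pow_dvd fun n =>
    (pow_dvd_pow X (by lia)).trans (h_dvd_add n N i hi)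

variable (R) [TopologicalSpace R]

/-- The power series `(q; q)_∞ J_{k,i}(q^N)`. -/
noncomputable def gordonSum (k N i : ℕ) : R⟦X⟧ := ∑' n, gordonTerm X k N i n

lemma gordonSum_zero_right (k N : ℕ) : gordonSum R k N 0 = 0 := by
  simp [gordonSum, gordonTerm_zero_right]

lemma summable_gordonTerm {k i : ℕ} (hi : i ≤ 2 * k) (N : ℕ) :
    Summable (gordonTerm (X : R⟦X⟧) k N i) := by
  refine summable_of_X_pow_dvd (tendsto_id'.2 Nat.cofinite_eq_atTop.le) fun n =>
    pow_dvd_gordonTerm X N ?_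
  have := Nat.mul_le_mul_right n (by lia : 1 ≤ 2 * k + 1 - i)
  grind

lemma gordonSum_succ [IsTopologicalRing R] [T2Space R] {k i : ℕ} (hi : i < k) (N : ℕ) :
    gordonSum R k N (i + 1) =
      gordonSum R k N i + X ^ ((N + 1) * i) * gordonSum R k (N + 1) (k - i) := by
  obtain ⟨u, hu_zero, hu_dvd, hu⟩ := exists_gordonTerm_succ_eq (X : R⟦X⟧) hi N
  have h_left := summable_gordonTerm R (by lia : i ≤ 2 * k) N
  have h_right := (summable_gordonTerm R (by lia : k - i ≤ 2 * k) (N + 1)).mul_left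
    (X ^ ((N + 1) * i))
  have h_summable : Summable u :=
    summable_of_X_pow_dvd (tendsto_id'.2 Nat.cofinite_eq_atTop.le) hu_dvd
  have h_shift := (summable_nat_add_iff 1).2 h_summable
  have h_telescope : ∑' n, (u n - u (n + 1)) = 0 := by
    rw [h_summable.tsum_sub h_shift, h_summable.tsum_eq_zero_add, hu_zero, zero_add, sub_self]
  rw [gordonSum, tsum_congr hu, (h_left.add h_right).tsum_add (h_summable.sub h_shift),
    h_telescope, add_zero, h_left.tsum_add h_right,
    (summable_gordonTerm R (by lia) (N + 1)).tsum_mul_left]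
  rfl

lemma X_pow_dvd_gordonSum_sub [IsTopologicalRing R] [T2Space R] {k i : ℕ} (hi : 0 < i)
    (hik : i ≤ k) (N : ℕ) : (X : R⟦X⟧) ^ N ∣ gordonSum R k N i - qPochhammer X X N := by
  rw [gordonSum, (summable_gordonTerm R (by lia) N).tsum_eq_zero_add]
  have h_zero : gordonTerm (X : R⟦X⟧) k N i 0 - qPochhammer X X N =
      -(X ^ ((N + 1) * i) * qPochhammer X X N) := by
    simp [gordonTerm]
    ring
  rw [add_sub_right_comm, h_zero]
  refine dvd_add ((pow_dvd_pow X ?_).mul_right _).neg_right (X_pow_dvd_tsum fun n =>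
    pow_dvd_gordonTerm X N ?_)
  · nlinarith
  · nlinarith [Nat.zero_le (k * N * n), Nat.mul_le_mul_right N (hi.trans_le hik)]

lemma gordonSum_zero [IsTopologicalRing R] [T2Space R] {k i : ℕ} (hi : i ≤ 2 * k + 1) :
    gordonSum R k 0 i = ∑' n : ℤ, thetaTerm (X ^ (2 * k + 1 - i)) (X ^ i) n := by
  have h_dvd : (X : R⟦X⟧) ∣ X ^ (2 * k + 1 - i) * X ^ i := by
    rw [pow_sub_mul_pow _ hi]
    exact dvd_pow_self X (by lia)
  rw [← tsum_nat_add_neg_add_one (summable_thetaTerm h_dvd)]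
  exact tsum_congr (gordonTerm_zero_eq_add_thetaTerm X hi)

end GordonSum

section PartitionSeries

open PowerSeries

/-- Removing a fixed multiset `t` of parts is a bijection from the partitions of `n + t.sum`
containing `t` to the partitions of `n`. The condition `P` is imposed on the remaining parts. -/
def subPartsEquiv {t : Multiset ℕ} (ht : ∀ x ∈ t, 0 < x) (P : Multiset ℕ → Prop) (n : ℕ) :
    {π : (n + t.sum).Partition // t ≤ π.parts ∧ P (π.parts - t)} ≃
      {π : n.Partition // P π.parts} where
  toFun π :=
    { val :=
        { parts := π.1.parts - t
          parts_pos := fun hx => π.1.parts_pos (Multiset.mem_of_le (Multiset.sub_le_self ..) hx)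
          parts_sum := by
            have h := congrArg Multiset.sum (tsub_add_cancel_of_le π.2.1)
            rwa [Multiset.sum_add, π.1.parts_sum, Nat.add_right_cancel_iff] at h }
      property := π.2.2 }
  invFun π :=
    { val :=
        { parts := π.1.parts + t
          parts_pos := fun hx => (Multiset.mem_add.1 hx).elim π.1.parts_pos (ht _)
          parts_sum := by rw [Multiset.sum_add, π.1.parts_sum] }
      property := ⟨Multiset.le_add_left .., by rw [Multiset.add_sub_cancel_right]; exact π.2⟩ }
  left_inv π := Subtype.ext (Nat.Partition.ext (tsub_add_cancel_of_le π.2.1))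
  right_inv π := Subtype.ext (Nat.Partition.ext (Multiset.add_sub_cancel_right ..))

variable (R : Type*) [CommSemiring R]

/-- The generating function of the partitions whose multiset of parts satisfies `P`. -/
noncomputable def partitionSeries (P : Multiset ℕ → Prop) : R⟦X⟧ :=
  .mk fun n => (Nat.card {π : n.Partition // P π.parts} : R)

lemma coeff_partitionSeries (P : Multiset ℕ → Prop) (n : ℕ) :
    coeff n (partitionSeries R P) = (Nat.card {π : n.Partition // P π.parts} : R) :=
  coeff_mk _ _

lemma partitionSeries_false : partitionSeries R (fun _ => False) = 0 := by
  ext n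
  simp [coeff_partitionSeries]

lemma partitionSeries_or {P Q : Multiset ℕ → Prop} (h : ∀ s, P s → ¬ Q s) :
    partitionSeries R (fun s => P s ∨ Q s) = partitionSeries R P + partitionSeries R Q := by
  classical
  ext n
  have h_disjoint : Disjoint (fun π : n.Partition => P π.parts) fun π => Q π.parts :=
    Pi.disjoint_iff.2 fun π => Prop.disjoint_iff.2 fun hPQ => h _ hPQ.1 hPQ.2
  simp only [coeff_partitionSeries, map_add]
  rw [← Nat.cast_add, ← Nat.card_sum, Nat.card_congr (subtypeOrEquiv _ _ h_disjoint)]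

lemma partitionSeries_le_and_sub {t : Multiset ℕ} (ht : ∀ x ∈ t, 0 < x)
    (P : Multiset ℕ → Prop) :
    partitionSeries R (fun s => t ≤ s ∧ P (s - t)) = X ^ t.sum * partitionSeries R P := by
  ext n
  rw [coeff_X_pow_mul', coeff_partitionSeries]
  split_ifs with h
  · obtain ⟨m, rfl⟩ := Nat.exists_eq_add_of_le' h
    rw [Nat.card_congr (subPartsEquiv ht P m), Nat.add_sub_cancel, coeff_partitionSeries]
  · have : IsEmpty {π : n.Partition // t ≤ π.parts ∧ P (π.parts - t)} :=
      ⟨fun π => h (by rw [← π.1.parts_sum, ← tsub_add_cancel_of_le π.2.1]; simp)⟩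
    simp

end PartitionSeries

section Gordon

open PowerSeries

/-- Gordon's condition on the multiplicities of a multiset of integers larger than `N`, the smallest
of which, `N + 1`, occurs fewer than `i` times. The pair condition is also imposed on `j ≤ N`, where
it follows from the other two if `i ≤ k`. -/
def IsGordon (k N i : ℕ) (s : Multiset ℕ) : Prop :=
  (∀ j ≤ N, s.count j = 0) ∧ s.count (N + 1) < i ∧ ∀ j, s.count j + s.count (j + 1) < k

lemma isGordon_succ_iff {k i : ℕ} (hi : i < k) (N : ℕ) (s : Multiset ℕ) :
    IsGordon k N (i + 1) s ↔ IsGordon k N i s ∨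
      Multiset.replicate i (N + 1) ≤ s ∧
        IsGordon k (N + 1) (k - i) (s - Multiset.replicate i (N + 1)) := by
  simp only [IsGordon, ← Multiset.le_count_iff_replicate_le, Multiset.count_sub,
    Multiset.count_replicate]
  constructor
  · rintro ⟨h_zero, h_count, h_pair⟩
    by_cases h : i ≤ s.count (N + 1)
    · have h_next := h_pair (N + 1)
      exact .inr ⟨h, fun j hj => by grind, by grind, fun j => by have := h_pair j; lia⟩
    · exact .inl ⟨h_zero, not_le.1 h, h_pair⟩
  · rintro (⟨h_zero, h_count, h_pair⟩ | ⟨h, h_zero, h_count, h_pair⟩)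
    · exact ⟨h_zero, h_count.trans i.lt_succ_self, h_pair⟩
    · have h_self := h_zero (N + 1) le_rfl
      refine ⟨fun j hj => by grind, by grind, fun j => ?_⟩
      have hj := h_pair j
      rcases lt_trichotomy j N with h | rfl | h <;> grind

variable (R : Type*) [CommRing R]

lemma partitionSeries_isGordon_zero (k N : ℕ) : partitionSeries R (IsGordon k N 0) = 0 := by
  rw [show IsGordon k N 0 = fun _ => False from funext fun s => by simp [IsGordon],
    partitionSeries_false]

lemma partitionSeries_isGordon_succ {k i : ℕ} (hi : i < k) (N : ℕ) :
    partitionSeries R (IsGordon k N (i + 1)) = partitionSeries R (IsGordon k N i) +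
      X ^ ((N + 1) * i) * partitionSeries R (IsGordon k (N + 1) (k - i)) := by
  have h_pos (x) (hx : x ∈ Multiset.replicate i (N + 1)) : 0 < x :=
    Multiset.eq_of_mem_replicate hx ▸ N.succ_pos
  rw [funext fun s => propext (isGordon_succ_iff hi N s), partitionSeries_or,
    partitionSeries_le_and_sub R h_pos, Multiset.sum_replicate, smul_eq_mul, mul_comm i]
  exact fun s hs h => hs.2.1.not_ge (Multiset.le_count_iff_replicate_le.2 h.1)

lemma X_pow_dvd_partitionSeries_sub_one {P : Multiset ℕ → Prop} {N : ℕ} (h_zero : P 0)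
    (h : ∀ s, P s → ∀ x ∈ s, N ≤ x) : X ^ N ∣ partitionSeries R P - 1 := by
  refine X_pow_dvd_iff.2 fun n hn => ?_
  rw [map_sub, coeff_partitionSeries, coeff_one, sub_eq_zero]
  split_ifs with hn_zero
  · subst hn_zero
    have : Unique {π : Nat.Partition 0 // P π.parts} :=
      ⟨⟨default, by simpa using h_zero⟩, fun _ => Subsingleton.elim _ _⟩
    rw [Nat.card_unique, Nat.cast_one]
  · have : IsEmpty {π : n.Partition // P π.parts} := by
      refine ⟨fun ⟨π, hπ⟩ => ?_⟩
      obtain ⟨x, hx⟩ := Multiset.exists_mem_of_ne_zero fun h_parts : π.parts = 0 =>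
        hn_zero (by rw [← π.parts_sum, h_parts, Multiset.sum_zero])
      exact (h _ hπ x hx).not_gt ((π.le_of_mem_parts hx).trans_lt hn)
    simp

theorem qPochhammerInf_mul_partitionSeries_isGordon [TopologicalSpace R] [IsTopologicalRing R]
    [T2Space R] {k i : ℕ} (hi : i ≤ k) (N : ℕ) :
    qPochhammerInf X X * partitionSeries R (IsGordon k N i) = gordonSum R k N i := by
  refine sub_eq_zero.1 (eq_zero_of_gordon_recurrence (c := fun N i => X ^ ((N + 1) * i))
    (D := fun N i => qPochhammerInf X X * partitionSeries R (IsGordon k N i) - gordonSum R k N i)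
    (fun N => ?_) (fun N i hi hik => ?_) (fun N i hi => ?_) hi)
  · rw [partitionSeries_isGordon_zero, gordonSum_zero_right, mul_zero, sub_zero]
  · have h_series : X ^ N ∣ partitionSeries R (IsGordon k N i) - 1 :=
      X_pow_dvd_partitionSeries_sub_one R
        ⟨by simp, by simpa using hi, by simpa using hi.trans_le hik⟩ fun s hs x hx =>
          not_lt.1 fun h => Multiset.count_eq_zero.1 (hs.1 x h.le) hx
    convert dvd_sub (dvd_add
      ((X_pow_dvd_qPochhammerInf_sub N).mul_right (partitionSeries R (IsGordon k N i)))
      (h_series.mul_left (qPochhammer X X N))) (X_pow_dvd_gordonSum_sub R hi hik N) using 1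
    ring
  · rw [partitionSeries_isGordon_succ R hi, gordonSum_succ R hi]
    ring

end Gordon

section Residues

open PowerSeries

/-- `j` is not congruent to `0`, `i` or `-i` modulo `w`; the residues are represented by natural
numbers, which requires `0 < i < w`. -/
abbrev AvoidsResidues (w i j : ℕ) : Prop := j % w ≠ 0 ∧ j % w ≠ i ∧ j % w ≠ w - i

lemma prod_range_mul_avoidsResidues {S : Type*} [CommRing S] (q : S) {w i : ℕ} (hi : 0 < i)
    (hiw : 2 * i < w) (M : ℕ) :
    ∏ j ∈ range (w * M), (if AvoidsResidues w i (j + 1) then 1 else 1 - q ^ (j + 1)) =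
      qPochhammer (q ^ w) (q ^ w) M *
        (qPochhammer (q ^ (w - i)) (q ^ w) M * qPochhammer (q ^ i) (q ^ w) M) := by
  induction M with
  | zero => simp [qPochhammer_zero]
  | succ M ih =>
    have h_filter : {r ∈ range w | ¬ AvoidsResidues w i (w * M + r + 1)} =
        {w - 1, w - i - 1, i - 1} := by
      ext r
      simp only [mem_filter, mem_range, mem_insert, mem_singleton, AvoidsResidues, add_assoc,
        Nat.mul_add_mod]
      rcases lt_trichotomy (r + 1) w with h | h | h
      · rw [Nat.mod_eq_of_lt h]
        lia
      · simp only [h, Nat.mod_self]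
        lia
      · lia
    have h_block : ∏ r ∈ range w,
        (if AvoidsResidues w i (w * M + r + 1) then 1 else 1 - q ^ (w * M + r + 1)) =
        (1 - q ^ w * (q ^ w) ^ M) *
          ((1 - q ^ (w - i) * (q ^ w) ^ M) * (1 - q ^ i * (q ^ w) ^ M)) := by
      rw [prod_ite, prod_const_one, one_mul, h_filter, prod_insert (by grind),
        prod_insert (by grind), prod_singleton]
      simp only [← pow_mul, ← pow_add, show w * M + (w - 1) + 1 = w + w * M by lia,
        show w * M + (w - i - 1) + 1 = w - i + w * M by lia,
        show w * M + (i - 1) + 1 = i + w * M by lia]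
    rw [mul_add_one, prod_range_add, ih, h_block]
    simp only [qPochhammer_succ]
    ring

variable (R : Type*) [CommRing R] [TopologicalSpace R] [IsTopologicalRing R] [T2Space R]

lemma hasProd_qPochhammerInf_mul_partitionSeries (p : ℕ → Prop) [DecidablePred p] :
    HasProd (fun j => if p (j + 1) then 1 else 1 - (X : R⟦X⟧) ^ (j + 1))
      (qPochhammerInf X X * partitionSeries R fun s => ∀ j ∈ s, p j) := by
  have h_series : partitionSeries R (fun s => ∀ j ∈ s, p j) =
      .mk fun n => (#(Nat.Partition.restricted n p) : R) := by
    ext n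
    rw [coeff_partitionSeries, coeff_mk, Nat.card_eq_fintype_card, Fintype.card_subtype]
    rfl
  rw [h_series]
  refine ((multipliable_one_sub_mul_pow X dvd_rfl).hasProd.mul
    (Nat.Partition.hasProd_powerSeriesMk_card_restricted R p)).congr_fun fun j => ?_
  split_ifs
  · simp only [pow_mul, ← pow_succ']
    exact (WithPiTopology.one_sub_mul_tsum_pow_of_constantCoeff_eq_zero (by simp)).symm
  · rw [mul_one, pow_succ']

theorem qPochhammerInf_mul_partitionSeries_avoidsResidues {w i : ℕ} (hi : 0 < i)
    (hiw : 2 * i < w) :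
    qPochhammerInf X X * partitionSeries R (fun s => ∀ j ∈ s, AvoidsResidues w i j) =
      ∑' n : ℤ, thetaTerm (X ^ (w - i)) (X ^ i) n := by
  have h_mul : (X : R⟦X⟧) ^ (w - i) * X ^ i = X ^ w := pow_sub_mul_pow X (by lia)
  have h_dvd : (X : R⟦X⟧) ∣ X ^ w := dvd_pow_self X (by lia)
  have h_left := (hasProd_qPochhammerInf_mul_partitionSeries R
    (AvoidsResidues w i)).tendsto_prod_nat.comp (tendsto_id.const_mul_atTop' (by lia : 0 < w))
  have h_right := (tendsto_qPochhammer (X ^ w : R⟦X⟧) h_dvd).mul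
    ((tendsto_qPochhammer (X ^ (w - i)) h_dvd).mul (tendsto_qPochhammer (X ^ i) h_dvd))
  rw [← qPochhammerInf_mul_eq_tsum_thetaTerm (h_mul ▸ h_dvd), h_mul]
  exact tendsto_nhds_unique h_left
    (h_right.congr fun M => (prod_range_mul_avoidsResidues X hi hiw M).symm)

end Residues

section Main

theorem partitionSeries_isGordon_eq_partitionSeries_avoidsResidues {k i : ℕ} (hi : 0 < i)
    (hik : i ≤ k) : partitionSeries ℤ (IsGordon k 0 i) =
      partitionSeries ℤ (fun s => ∀ j ∈ s, AvoidsResidues (2 * k + 1) i j) := by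
  have h_ne : qPochhammerInf (PowerSeries.X : ℤ⟦X⟧) PowerSeries.X ≠ 0 := by
    simpa only [qPochhammerInf, ← pow_succ'] using
      PowerSeries.WithPiTopology.tprod_one_sub_X_pow_ne_zero ℤ
  apply mul_left_cancel₀ h_ne
  rw [qPochhammerInf_mul_partitionSeries_isGordon ℤ hik, gordonSum_zero ℤ (by lia),
    qPochhammerInf_mul_partitionSeries_avoidsResidues ℤ hi (by lia)]

lemma isGordon_zero_iff {k i : ℕ} (hi : 0 < i) (hik : i ≤ k) {s : Multiset ℕ} (hs : 0 ∉ s) :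
    IsGordon k 0 i s ↔
      s.count 1 ≤ i - 1 ∧ ∀ j, 1 ≤ j → s.count j + s.count (j + 1) ≤ k - 1 := by
  have h_zero := Multiset.count_eq_zero.2 hs
  refine ⟨fun ⟨_, h_count, h_pair⟩ =>
      ⟨Nat.le_sub_one_of_lt h_count, fun j _ => Nat.le_sub_one_of_lt (h_pair j)⟩,
    fun ⟨h_count, h_pair⟩ => ⟨by simpa using h_zero, Nat.lt_of_le_sub_one hi h_count, fun j => ?_⟩⟩
  obtain rfl | hj := j.eq_zero_or_pos
  · lia
  · have := h_pair j hj
    lia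

end Main

end RogersRamanujan

/-- Gordon's theorem: for `1 ≤ i ≤ k`, the number of partitions of `n` in which `1` appears at
most `i - 1` times and `j` and `j + 1` together appear at most `k - 1` times for every `j ≥ 1`
equals the number of partitions of `n` into parts not congruent to `0, ±i (mod 2k+1)`. -/
theorem gordon (k i : ℕ) (hi : 1 ≤ i) (hik : i ≤ k) (n : ℕ) :
    Nat.card {π : n.Partition //
        π.parts.count 1 ≤ i - 1 ∧
        (∀ j, 1 ≤ j → π.parts.count j + π.parts.count (j + 1) ≤ k - 1)} =
      Nat.card {π : n.Partition //
        ∀ j ∈ π.parts, j % (2 * k + 1) ≠ 0 ∧ j % (2 * k + 1) ≠ i ∧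
          j % (2 * k + 1) ≠ 2 * k + 1 - i} := by
  have h_series := congrArg (PowerSeries.coeff n)
    (RogersRamanujan.partitionSeries_isGordon_eq_partitionSeries_avoidsResidues hi hik)
  simp only [RogersRamanujan.coeff_partitionSeries, Nat.cast_inj] at h_series
  rw [← h_series]
  exact Nat.card_congr (Equiv.subtypeEquivRight fun π =>
    (RogersRamanujan.isGordon_zero_iff hi hik fun h => (π.parts_pos h).false).symm)
end

section
/- For every natural number n, the number of partitions of n such that, if 2j denotes the largest repeated part (which is necessarily even), then every positive even integer less than 2j appears at least twice, no odd part less than 2j appears at all, each odd part appears at most once, and no part greater than 2j is repeated, equals the number of partitions of n into parts none of which is congruent to 0, 2, or −2 modulo 7. -/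
/-- The largest repeated part of a partition (`0` if no part is repeated). -/
def largestRepeatedPart {n : ℕ} (π : n.Partition) : ℕ :=
  (π.parts.toFinset.filter (fun j => 2 ≤ π.parts.count j)).sup id

/-!
A partition counted by `A₂(n)` whose largest repeated part is `2j` contains two copies of each of
`2, 4, …, 2j`; what remains has arbitrary even parts up to `2j` and distinct parts above. Hence the
generating function is the Rogers–Selberg series `∑_j q^(2j²+2j) (-q^(2j+1); q)_∞ / (q²; q²)_j`.
Inserting parameters `m` and `u` into this series yields two families (`u = m` and `u = m + 1`)
which, multiplied by `(q; q)_∞`, satisfy the same contiguous relations as Andrews' functions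
`J_{3,3}(0; q^m; q)` and `J_{3,2}(0; q^m; q)`, suitably normalized. Both sides have the same
`q`-adic limit as `m → ∞`, so iterating the relations shows that they agree. At `m = 0` the function
`J_{3,2}` is a theta series, which the Jacobi triple product turns into
`(q²; q⁷)_∞ (q⁵; q⁷)_∞ (q⁷; q⁷)_∞`; dividing by `(q; q)_∞` leaves the parts not congruent to
`0, ±2` modulo `7`.
-/

namespace RogersSelberg

open Filter Finset PowerSeries Topology
open scoped PowerSeries.WithPiTopology

section Adic

variable {R : Type*} [CommRing R]

theorem eq_zero_of_forall_X_pow_dvd {f : R⟦X⟧} (h : ∀ n, X ^ n ∣ f) : f = 0 :=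
  PowerSeries.ext fun n ↦ X_pow_dvd_iff.mp (h (n + 1)) n n.lt_succ_self

variable [TopologicalSpace R]

theorem tendsto_of_X_pow_dvd_sub {F : ℕ → R⟦X⟧} {L : R⟦X⟧} (h : ∀ n, X ^ n ∣ F n - L) :
    Tendsto F atTop (𝓝 L) := by
  refine (WithPiTopology.tendsto_iff_coeff_tendsto R F atTop L).mpr fun d ↦
    tendsto_const_nhds.congr' ?_
  filter_upwards [eventually_gt_atTop d] with n hn
  have hd := X_pow_dvd_iff.mp (h n) d hn
  rw [map_sub, sub_eq_zero] at hd
  exact hd.symm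

theorem summable_of_X_pow_dvd {f : ℕ → R⟦X⟧} (h : ∀ n, X ^ n ∣ f n) : Summable f := by
  refine (WithPiTopology.summable_iff_summable_coeff R).mpr fun d ↦
    summable_of_hasFiniteSupport ((Set.finite_Iic d).subset fun n hn ↦ ?_)
  exact not_lt.mp fun hdn ↦ hn (X_pow_dvd_iff.mp (h n) d hdn)

theorem multipliable_one_sub_of_X_pow_dvd {f : ℕ → R⟦X⟧} (h : ∀ n, X ^ n ∣ f n) :
    Multipliable fun n ↦ 1 - f n := by
  simp_rw [sub_eq_add_neg]
  refine WithPiTopology.multipliable_one_add_of_tendsto_order_atTop_nhds_top R <|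
    ENat.tendsto_nhds_top_iff_natCast_lt.mpr fun n ↦ eventually_atTop.mpr ⟨n + 1, fun m hm ↦ ?_⟩
  rw [order_neg]
  exact (Nat.cast_lt.mpr hm).trans_le (nat_le_order _ _ (X_pow_dvd_iff.mp (h m)))

theorem tsum_eq_tsum_of_eq_add_sub_succ [T2Space R] [IsTopologicalRing R] {A B f : ℕ → R⟦X⟧}
    (hB : Summable B) (hf : Summable f) (hf0 : f 0 = 0)
    (h : ∀ n, A n = B n + (f n - f (n + 1))) : ∑' n, A n = ∑' n, B n := by
  have hf' := (summable_nat_add_iff 1).mpr hf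
  rw [tsum_congr h, hB.tsum_add (hf.sub hf'), hf.tsum_sub hf', hf.tsum_eq_zero_add, hf0, zero_add,
    sub_self, add_zero]

theorem isClosed_setOf_X_pow_dvd [T2Space R] (N : ℕ) : IsClosed {g : R⟦X⟧ | X ^ N ∣ g} := by
  simp only [X_pow_dvd_iff, Set.ofPred_forall]
  exact isClosed_iInter fun d ↦ isClosed_iInter fun _ ↦
    isClosed_eq (WithPiTopology.continuous_coeff R d) continuous_const

theorem X_pow_dvd_of_tendsto [T2Space R] {F : ℕ → R⟦X⟧} {L : R⟦X⟧} {N : ℕ}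
    (hF : Tendsto F atTop (𝓝 L)) (h : ∀ n, X ^ N ∣ F n) : X ^ N ∣ L :=
  (isClosed_setOf_X_pow_dvd N).mem_of_tendsto hF (Eventually.of_forall h)

theorem X_pow_dvd_tsum [T2Space R] {f : ℕ → R⟦X⟧} {N : ℕ} (hf : Summable f)
    (h : ∀ n, X ^ N ∣ f n) : X ^ N ∣ ∑' n, f n :=
  X_pow_dvd_of_tendsto hf.hasSum.tendsto_sum_nat fun _ ↦ dvd_sum fun i _ ↦ h i

theorem X_pow_dvd_tsum_sub_zero [T2Space R] [IsTopologicalRing R] {f : ℕ → R⟦X⟧} {N : ℕ}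
    (hf : Summable f) (h : ∀ n, X ^ N ∣ f (n + 1)) : X ^ N ∣ ∑' n, f n - f 0 := by
  rw [hf.tsum_eq_zero_add, add_sub_cancel_left]
  exact X_pow_dvd_tsum ((summable_nat_add_iff 1).mpr hf) h

end Adic

theorem choose_two_succ (n : ℕ) : (n + 1).choose 2 = n.choose 2 + n := by
  rw [Nat.choose_succ_succ' n 1, Nat.choose_one_right, add_comm]

section QPochhammer

variable {R : Type*} [CommRing R]

/-- The finite `q`-Pochhammer symbol `(a; q)ₙ = (1 - a)(1 - aq)⋯(1 - aqⁿ⁻¹)`. -/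
def qPoch {S : Type*} [CommRing S] (a q : S) (n : ℕ) : S :=
  ∏ k ∈ range n, (1 - a * q ^ k)

theorem qPoch_zero {S : Type*} [CommRing S] (a q : S) : qPoch a q 0 = 1 :=
  prod_range_zero _

theorem qPoch_succ {S : Type*} [CommRing S] (a q : S) (n : ℕ) :
    qPoch a q (n + 1) = qPoch a q n * (1 - a * q ^ n) :=
  prod_range_succ _ n

theorem qPoch_one {S : Type*} [CommRing S] (a q : S) : qPoch a q 1 = 1 - a := by
  simp [qPoch]

theorem qPoch_add {S : Type*} [CommRing S] (a q : S) (m n : ℕ) :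
    qPoch a q (m + n) = qPoch a q m * qPoch (a * q ^ m) q n := by
  simp only [qPoch, prod_range_add, mul_assoc, pow_add]

theorem X_pow_dvd_qPoch_sub_one {a : R⟦X⟧} {N : ℕ} (ha : X ^ N ∣ a) (q : R⟦X⟧) (n : ℕ) :
    X ^ N ∣ qPoch a q n - 1 := by
  induction n with
  | zero => simp [qPoch_zero]
  | succ n ih =>
    have : qPoch a q (n + 1) - 1 = qPoch a q n - 1 - a * (q ^ n * qPoch a q n) := by
      rw [qPoch_succ]; ring
    exact this ▸ dvd_sub ih (ha.mul_right _)

variable [TopologicalSpace R]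

/-- The infinite `q`-Pochhammer symbol `(a; q)_∞` of formal power series. It is meant for `q`
without constant term; otherwise the product may diverge and take the junk value `1`. -/
noncomputable def qPochInf (a q : R⟦X⟧) : R⟦X⟧ :=
  ∏' k, (1 - a * q ^ k)

variable {a b q : R⟦X⟧}

theorem multipliable_qPochInf (a : R⟦X⟧) (hq : X ∣ q) : Multipliable fun k ↦ 1 - a * q ^ k :=
  multipliable_one_sub_of_X_pow_dvd fun k ↦ (pow_dvd_pow_of_dvd hq k).mul_left a

theorem tendsto_qPoch (a : R⟦X⟧) (hq : X ∣ q) :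
    Tendsto (qPoch a q) atTop (𝓝 (qPochInf a q)) :=
  (multipliable_qPochInf a hq).tendsto_prod_tprod_nat

theorem summable_eulerSeries (hb : X ∣ b) :
    Summable fun l : ℕ ↦ (-1) ^ l * q ^ l.choose 2 * b ^ l * qPochInf (q ^ (l + 1)) q :=
  summable_of_X_pow_dvd fun l ↦ ((pow_dvd_pow_of_dvd hb l).mul_left _).mul_right _

variable [T2Space R] [IsTopologicalRing R]

theorem X_pow_dvd_qPochInf_sub_one {N : ℕ} (hq : X ∣ q) (ha : X ^ N ∣ a) :
    X ^ N ∣ qPochInf a q - 1 :=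
  X_pow_dvd_of_tendsto ((tendsto_qPoch a hq).sub_const 1) (X_pow_dvd_qPoch_sub_one ha q)

theorem qPochInf_eq_qPoch_mul (a : R⟦X⟧) (hq : X ∣ q) (m : ℕ) :
    qPochInf a q = qPoch a q m * qPochInf (a * q ^ m) q := by
  refine tendsto_nhds_unique ((tendsto_add_atTop_iff_nat m).mpr (tendsto_qPoch a hq))
    (((tendsto_qPoch (a * q ^ m) hq).const_mul (qPoch a q m)).congr fun n ↦ ?_)
  rw [add_comm n, qPoch_add]

theorem qPochInf_eq_one_sub_mul (a : R⟦X⟧) (hq : X ∣ q) :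
    qPochInf a q = (1 - a) * qPochInf (a * q) q := by
  simpa [qPoch] using qPochInf_eq_qPoch_mul a hq 1

theorem eq_qPochInf_mul_of_eq_one_sub_mul {F : ℕ → R⟦X⟧} {L : R⟦X⟧} (hq : X ∣ q)
    (hF : ∀ k, F k = (1 - a * q ^ k) * F (k + 1)) (hL : Tendsto F atTop (𝓝 L)) :
    F 0 = qPochInf a q * L := by
  have hF0 : ∀ k, F 0 = qPoch a q k * F k := by
    intro k
    induction k with
    | zero => rw [qPoch_zero, one_mul]
    | succ k ih => rw [ih, hF k, qPoch_succ, mul_assoc]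
  exact tendsto_nhds_unique tendsto_const_nhds
    (((tendsto_qPoch a hq).mul hL).congr fun k ↦ (hF0 k).symm)

theorem mul_qPochInf_eq_of_eq_one_sub_mul {F : ℕ → R⟦X⟧} {L : R⟦X⟧} (hq : X ∣ q)
    (hF : ∀ k, F (k + 1) = (1 - a * q ^ k) * F k) (hL : Tendsto F atTop (𝓝 L)) :
    F 0 * qPochInf a q = L := by
  have hFk : ∀ k, F k = F 0 * qPoch a q k := by
    intro k
    induction k with
    | zero => rw [qPoch_zero, mul_one]
    | succ k ih => rw [hF k, ih, qPoch_succ]; ring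
  exact tendsto_nhds_unique (((tendsto_qPoch a hq).const_mul (F 0)).congr fun k ↦ (hFk k).symm) hL

theorem one_sub_pow_mul_qPochInf (hq : X ∣ q) (l : ℕ) :
    (1 - q ^ (l + 1)) * qPochInf (q ^ (l + 2)) q = qPochInf (q ^ (l + 1)) q :=
  (qPochInf_eq_one_sub_mul (q ^ (l + 1)) hq).symm

theorem tsum_eulerSeries_eq_one_sub_mul (hq : X ∣ q) (hb : X ∣ b) :
    ∑' l : ℕ, (-1) ^ l * q ^ l.choose 2 * b ^ l * qPochInf (q ^ (l + 1)) q =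
      (1 - b) *
        ∑' l : ℕ, (-1) ^ l * q ^ l.choose 2 * (b * q) ^ l * qPochInf (q ^ (l + 1)) q := by
  let f : ℕ → R⟦X⟧ := fun l ↦
    (-1) ^ l * q ^ l.choose 2 * b ^ l * (1 - q ^ l) * qPochInf (q ^ (l + 1)) q
  have hsum : Summable f := summable_of_X_pow_dvd fun l ↦
    (((pow_dvd_pow_of_dvd hb l).mul_left _).mul_right _).mul_right _
  have hsum' := summable_eulerSeries (q := q) (hb.mul_right q)
  rw [← hsum'.tsum_mul_left]
  refine tsum_eq_tsum_of_eq_add_sub_succ (hsum'.mul_left _) hsum (by simp [f]) fun l ↦ ?_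
  dsimp only [f]
  rw [mul_assoc _ (1 - q ^ (l + 1)), one_sub_pow_mul_qPochInf hq, choose_two_succ]
  ring

theorem qPochInf_mul_qPochInf_self (hq : X ∣ q) (hb : X ∣ b) :
    qPochInf b q * qPochInf q q =
      ∑' l : ℕ, (-1) ^ l * q ^ l.choose 2 * b ^ l * qPochInf (q ^ (l + 1)) q := by
  have hbq (k : ℕ) : X ^ (k + 1) ∣ b * q ^ k := by
    rw [pow_succ']; exact mul_dvd_mul hb (pow_dvd_pow_of_dvd hq k)
  have hbq' (k : ℕ) : X ∣ b * q ^ k := hb.mul_right _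
  let F (k : ℕ) : R⟦X⟧ :=
    ∑' l : ℕ, (-1) ^ l * q ^ l.choose 2 * (b * q ^ k) ^ l * qPochInf (q ^ (l + 1)) q
  have hF (k : ℕ) : F k = (1 - b * q ^ k) * F (k + 1) := by
    simp only [F, tsum_eulerSeries_eq_one_sub_mul hq (hbq' k), mul_assoc b, ← pow_succ]
  have hL (k : ℕ) : X ^ k ∣ F k - qPochInf q q := by
    have h := X_pow_dvd_tsum_sub_zero (N := k) (summable_eulerSeries (q := q) (hbq' k))
      fun l ↦ ((((pow_dvd_pow X k.le_succ).trans (hbq k)).trans (dvd_pow_self _ l.succ_ne_zero)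
        ).mul_left _).mul_right _
    simpa using h
  simpa [F] using (eq_qPochInf_mul_of_eq_one_sub_mul hq hF (tendsto_of_X_pow_dvd_sub hL)).symm

end QPochhammer

section JacobiTripleProduct

variable {R : Type*} [CommRing R]

/-- The general term `(-1)ⁱ (ab)^(i(i-1)/2) aⁱ`, `i ∈ ℤ`, of the two-sided theta series; for
`i = -n < 0` the negative powers of `a` cancel and the term equals `(-1)ⁿ (ab)^(n(n-1)/2) bⁿ`. -/
def thetaTerm {S : Type*} [CommRing S] (a b : S) (i : ℤ) : S :=
  (-1) ^ i.natAbs * (a * b) ^ i.natAbs.choose 2 * a ^ i.toNat * b ^ (-i).toNat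

theorem thetaTerm_natCast {S : Type*} [CommRing S] (a b : S) (n : ℕ) :
    thetaTerm a b n = (-1) ^ n * (a * b) ^ n.choose 2 * a ^ n := by
  simp [thetaTerm]

theorem thetaTerm_neg_natCast {S : Type*} [CommRing S] (a b : S) (n : ℕ) :
    thetaTerm a b (-n) = (-1) ^ n * (a * b) ^ n.choose 2 * b ^ n := by
  simp [thetaTerm]

theorem X_pow_natAbs_dvd_thetaTerm {a b : R⟦X⟧} (ha : X ∣ a) (hb : X ∣ b) (i : ℤ) :
    X ^ i.natAbs ∣ thetaTerm a b i := by
  rw [thetaTerm, mul_assoc, show i.natAbs = i.toNat + (-i).toNat by lia, pow_add]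
  exact (mul_dvd_mul (pow_dvd_pow_of_dvd ha _) (pow_dvd_pow_of_dvd hb _)).mul_left _

theorem pow_mul_thetaTerm_add_one {S : Type*} [CommRing S] (a b : S) (r l : ℕ) :
    (a * b) ^ l * thetaTerm a b (r + 1 - l) = -(a * (a * b) ^ r * thetaTerm a b (r - l)) := by
  rcases le_or_gt l r with h | h
  · obtain ⟨n, rfl⟩ := Nat.exists_eq_add_of_le h
    rw [show ((l + n : ℕ) + 1 - l : ℤ) = (n + 1 : ℕ) by push_cast; ring,
      show ((l + n : ℕ) - l : ℤ) = n by push_cast; ring]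
    simp only [thetaTerm_natCast, choose_two_succ]
    ring
  · obtain ⟨n, rfl⟩ := Nat.exists_eq_add_of_lt h
    rw [show (r + 1 - (r + n + 1 : ℕ) : ℤ) = -n by push_cast; ring,
      show (r - (r + n + 1 : ℕ) : ℤ) = -(n + 1 : ℕ) by push_cast; ring]
    simp only [thetaTerm_neg_natCast, choose_two_succ]
    ring

variable [TopologicalSpace R] {a b : R⟦X⟧}

theorem summable_thetaTerm_natCast_succ (ha : X ∣ a) (hb : X ∣ b) :
    Summable fun n : ℕ ↦ thetaTerm a b (n + 1 : ℕ) :=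
  summable_of_X_pow_dvd fun n ↦
    (pow_dvd_pow X n.le_succ).trans (X_pow_natAbs_dvd_thetaTerm ha hb (n + 1 : ℕ))

variable [IsTopologicalRing R]

theorem summable_thetaTerm_sub_mul (ha : X ∣ a) (hb : X ∣ b) (r : ℕ) (t : ℕ → R⟦X⟧) :
    Summable fun l : ℕ ↦ thetaTerm a b (r - l) * t l := by
  refine (summable_nat_add_iff r).mp (summable_of_X_pow_dvd fun l ↦ Dvd.dvd.mul_right ?_ _)
  simpa using X_pow_natAbs_dvd_thetaTerm ha hb (r - (l + r : ℕ))

theorem summable_thetaTerm_sub (ha : X ∣ a) (hb : X ∣ b) (r : ℕ) :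
    Summable fun l : ℕ ↦ thetaTerm a b (r - l) := by
  simpa using summable_thetaTerm_sub_mul ha hb r fun _ ↦ 1

variable [T2Space R]

theorem tsum_thetaTerm_succ_eq_one_sub_mul (ha : X ∣ a) (hb : X ∣ b) (r : ℕ) :
    ∑' l : ℕ, thetaTerm a b ((r + 1 : ℕ) - l) * qPochInf ((a * b) ^ (l + 1)) (a * b) =
      (1 - a * (a * b) ^ r) *
        ∑' l : ℕ, thetaTerm a b (r - l) * qPochInf ((a * b) ^ (l + 1)) (a * b) := by
  have hq : X ∣ a * b := ha.mul_right b
  let f : ℕ → R⟦X⟧ := fun l ↦ thetaTerm a b ((r + 1 : ℕ) - l) *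
    ((1 - (a * b) ^ l) * qPochInf ((a * b) ^ (l + 1)) (a * b))
  have hsum : Summable f := summable_thetaTerm_sub_mul ha hb (r + 1) _
  have hsum' := summable_thetaTerm_sub_mul ha hb r fun l ↦ qPochInf ((a * b) ^ (l + 1)) (a * b)
  rw [← hsum'.tsum_mul_left]
  refine tsum_eq_tsum_of_eq_add_sub_succ (hsum'.mul_left _) hsum (by simp [f]) fun l ↦ ?_
  dsimp only [f]
  rw [one_sub_pow_mul_qPochInf hq,
    show ((r + 1 : ℕ) - (l + 1 : ℕ) : ℤ) = r - l by push_cast; ring, Nat.cast_succ]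
  linear_combination
    qPochInf ((a * b) ^ (l + 1)) (a * b) * pow_mul_thetaTerm_add_one a b r l

theorem tsum_thetaTerm_sub_eq_sum_add (ha : X ∣ a) (hb : X ∣ b) (r : ℕ) :
    ∑' l : ℕ, thetaTerm a b (r - l) =
      ∑ n ∈ range r, thetaTerm a b (n + 1 : ℕ) + ∑' l : ℕ, thetaTerm a b (-l) := by
  induction r with
  | zero => simp
  | succ r ih =>
    rw [(summable_thetaTerm_sub ha hb _).tsum_eq_zero_add, sum_range_succ, add_right_comm, ← ih,
      add_comm]
    simp only [Nat.cast_add, Nat.cast_one, Nat.cast_zero, sub_zero, add_sub_add_right_eq_sub]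

theorem X_pow_dvd_thetaTerm_mul_qPochInf_sub_one (ha : X ∣ a) (hb : X ∣ b) (r l : ℕ) :
    X ^ r ∣ thetaTerm a b (r - l) * (qPochInf ((a * b) ^ (l + 1)) (a * b) - 1) := by
  refine (pow_dvd_pow X (show r ≤ (r - l : ℤ).natAbs + (l + 1) by lia)).trans ?_
  rw [pow_add]
  have hq : X ∣ a * b := ha.mul_right b
  exact mul_dvd_mul (X_pow_natAbs_dvd_thetaTerm ha hb _)
    (X_pow_dvd_qPochInf_sub_one hq (pow_dvd_pow_of_dvd hq _))

theorem tendsto_tsum_thetaTerm_mul_qPochInf (ha : X ∣ a) (hb : X ∣ b) :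
    Tendsto (fun r : ℕ ↦
        ∑' l : ℕ, thetaTerm a b (r - l) * qPochInf ((a * b) ^ (l + 1)) (a * b)) atTop
      (𝓝 (∑' n : ℕ, thetaTerm a b (n + 1 : ℕ) + ∑' l : ℕ, thetaTerm a b (-l))) := by
  have hdiff : Tendsto (fun r : ℕ ↦
      ∑' l : ℕ, thetaTerm a b (r - l) * (qPochInf ((a * b) ^ (l + 1)) (a * b) - 1))
      atTop (𝓝 0) := tendsto_of_X_pow_dvd_sub fun r ↦ by
    rw [sub_zero]
    exact X_pow_dvd_tsum (summable_thetaTerm_sub_mul ha hb r _)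
      (X_pow_dvd_thetaTerm_mul_qPochInf_sub_one ha hb r)
  have hmain := (summable_thetaTerm_natCast_succ ha hb).hasSum.tendsto_sum_nat.add_const
    (∑' l : ℕ, thetaTerm a b (-l))
  rw [← zero_add (_ + _)]
  refine (hdiff.add hmain).congr fun r ↦ ?_
  rw [← tsum_thetaTerm_sub_eq_sum_add ha hb, ← (summable_thetaTerm_sub_mul ha hb r _).tsum_add
    (summable_thetaTerm_sub ha hb r)]
  exact tsum_congr fun l ↦ by ring

/-- The **Jacobi triple product** identity, with the terms `n` and `-(n + 1)` of the two-sided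
series paired. -/
theorem qPochInf_mul_qPochInf_mul_qPochInf (ha : X ∣ a) (hb : X ∣ b) :
    qPochInf a (a * b) * qPochInf b (a * b) * qPochInf (a * b) (a * b) =
      ∑' n : ℕ, (-1) ^ n * (a * b) ^ n.choose 2 * a ^ n * (1 - b ^ (2 * n + 1)) := by
  have hq : X ∣ a * b := ha.mul_right b
  have hneg : Summable fun n : ℕ ↦ thetaTerm a b (-n) := by
    simpa using summable_thetaTerm_sub ha hb 0
  have hpos := (summable_nat_add_iff (f := fun n : ℕ ↦ thetaTerm a b n) 1).mp
    (summable_thetaTerm_natCast_succ ha hb)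
  have hprod := mul_qPochInf_eq_of_eq_one_sub_mul hq
    (tsum_thetaTerm_succ_eq_one_sub_mul ha hb) (tendsto_tsum_thetaTerm_mul_qPochInf ha hb)
  simp only [Nat.cast_zero, zero_sub, thetaTerm_neg_natCast] at hprod
  rw [mul_assoc, mul_comm, qPochInf_mul_qPochInf_self hq hb, hprod]
  simp only [← thetaTerm_neg_natCast]
  rw [hneg.tsum_eq_zero_add, Nat.cast_zero, neg_zero, ← Nat.cast_zero (R := ℤ), ← add_assoc,
    add_comm (∑' _, _), ← hpos.tsum_eq_zero_add,
    ← hpos.tsum_add ((summable_nat_add_iff 1).mpr hneg)]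
  refine tsum_congr fun n ↦ ?_
  rw [thetaTerm_natCast, thetaTerm_neg_natCast, choose_two_succ]
  ring

end JacobiTripleProduct

section AndrewsJ

variable {R : Type*} [CommRing R]

theorem qPoch_X_pow_mul_one_sub (m n : ℕ) :
    qPoch ((X : R⟦X⟧) ^ (n + 2)) X m * (1 - X ^ (n + 1)) =
      qPoch (X ^ (n + 1)) X m * (1 - X ^ (m + n + 1)) := by
  have h := qPoch_add ((X : R⟦X⟧) ^ (n + 1)) X 1 m
  rw [qPoch_one, pow_one, ← pow_succ, add_comm 1, qPoch_succ] at h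
  linear_combination -h

/-- The general term of `andrewsJ`. -/
noncomputable def andrewsJTerm (R : Type*) [CommRing R] (k i m n : ℕ) : R⟦X⟧ :=
  (-1) ^ n * X ^ (k * m * n + (2 * k + 1) * n.choose 2 + (2 * k + 1 - i) * n) *
    (1 - X ^ ((m + 2 * n + 1) * i)) * qPoch (X ^ (n + 1)) X m

theorem andrewsJTerm_eq_add_sub_succ (s t m n : ℕ) :
    let f (n : ℕ) : R⟦X⟧ :=
      (-1) ^ n * X ^ ((s + t) * m * n + (2 * (s + t) + 1) * n.choose 2 + (s + 2 * t) * n) *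
        ((1 - X ^ n) * qPoch (X ^ (n + 1)) X m)
    andrewsJTerm R (s + t) (s + 1) m n =
      andrewsJTerm R (s + t) s m n + X ^ ((m + 1) * s) * andrewsJTerm R (s + t) t (m + 1) n +
        (f n - f (n + 1)) := by
  dsimp only [andrewsJTerm]
  have hW := qPoch_X_pow_mul_one_sub (R := R) m n
  rw [choose_two_succ, qPoch_succ, show 2 * (s + t) + 1 - (s + 1) = s + 2 * t by lia,
    show 2 * (s + t) + 1 - s = s + 2 * t + 1 by lia,
    show 2 * (s + t) + 1 - t = 2 * s + t + 1 by lia]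
  rw [mul_comm (1 - X ^ (n + 1)), hW]
  ring

variable [TopologicalSpace R]

/-- Andrews' function `J_{k,i}(0; x; q)` at `x = q^m`, multiplied by `(q; q)_∞`; it has the factor
`(q^(n+1); q)_m` where Andrews' series has `(xq^(n+1); q)_∞⁻¹ (q; q)_n⁻¹`. It is meant for
`i ≤ 2k`. -/
noncomputable def andrewsJ (R : Type*) [CommRing R] [TopologicalSpace R] (k i m : ℕ) : R⟦X⟧ :=
  ∑' n, andrewsJTerm R k i m n

theorem summable_andrewsJTerm {k i : ℕ} (hi : i ≤ 2 * k) (m : ℕ) :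
    Summable (andrewsJTerm R k i m) :=
  summable_of_X_pow_dvd fun n ↦ (((pow_dvd_pow X <| le_add_left <|
    Nat.le_mul_of_pos_left n (by lia)).mul_left _).mul_right _).mul_right _

theorem andrewsJ_zero (k m : ℕ) : andrewsJ R k 0 m = 0 := by
  simp [andrewsJ, andrewsJTerm]

variable [IsTopologicalRing R] [T2Space R]

theorem andrewsJ_succ {s t : ℕ} (hst : 0 < s + t) (m : ℕ) :
    andrewsJ R (s + t) (s + 1) m =
      andrewsJ R (s + t) s m + X ^ ((m + 1) * s) * andrewsJ R (s + t) t (m + 1) := by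
  have hs := summable_andrewsJTerm (R := R) (k := s + t) (i := s) (by lia) m
  have ht := summable_andrewsJTerm (R := R) (k := s + t) (i := t) (by lia) (m + 1)
  rw [andrewsJ, andrewsJ, andrewsJ, ← ht.tsum_mul_left, ← hs.tsum_add (ht.mul_left _)]
  refine tsum_eq_tsum_of_eq_add_sub_succ (hs.add (ht.mul_left _))
    (summable_of_X_pow_dvd fun n ↦ ?_) (by simp) (andrewsJTerm_eq_add_sub_succ s t m)
  exact ((pow_dvd_pow X <| le_add_left <| Nat.le_mul_of_pos_left n (by lia)).mul_left _).mul_right _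

theorem X_pow_dvd_andrewsJ_sub {k i : ℕ} (hi : 0 < i) (hik : i ≤ 2 * k) (m : ℕ) :
    X ^ m ∣ andrewsJ R k i m - qPochInf X X := by
  have hk (n : ℕ) : m ≤ k * m * (n + 1) := by
    rw [mul_right_comm]
    exact Nat.le_mul_of_pos_left m (Nat.mul_pos (by lia) n.succ_pos)
  have htail : X ^ m ∣ andrewsJ R k i m - andrewsJTerm R k i m 0 :=
    X_pow_dvd_tsum_sub_zero (summable_andrewsJTerm hik m) fun n ↦
      (((pow_dvd_pow X (le_add_right (le_add_right (hk n)))).mul_left _).mul_right _).mul_right _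
  have hzero : andrewsJTerm R k i m 0 = (1 - X ^ ((m + 1) * i)) * qPoch X X m := by
    simp [andrewsJTerm]
  have hX : (X : R⟦X⟧) ^ m ∣ X ^ ((m + 1) * i) := pow_dvd_pow X (by nlinarith)
  have hinf : (X : R⟦X⟧) ^ m ∣ qPochInf (X * X ^ m) X - 1 :=
    X_pow_dvd_qPochInf_sub_one dvd_rfl (dvd_mul_left _ _)
  have hsplit := qPochInf_eq_qPoch_mul (X : R⟦X⟧) dvd_rfl m
  convert dvd_sub (dvd_sub htail (hX.mul_right (qPoch X X m))) (hinf.mul_left (qPoch X X m)) using 1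
  rw [hsplit, hzero]
  ring

theorem andrewsJ_at_zero {k i : ℕ} (hi : 0 < i) (hik : i ≤ 2 * k) :
    andrewsJ R k i 0 = qPochInf (X ^ (2 * k + 1 - i)) (X ^ (2 * k + 1)) *
      qPochInf (X ^ i) (X ^ (2 * k + 1)) * qPochInf (X ^ (2 * k + 1)) (X ^ (2 * k + 1)) := by
  have hq : (X : R⟦X⟧) ^ (2 * k + 1) = X ^ (2 * k + 1 - i) * X ^ i := by
    rw [← pow_add, Nat.sub_add_cancel (by lia)]
  rw [hq, qPochInf_mul_qPochInf_mul_qPochInf (dvd_pow_self X (by lia)) (dvd_pow_self X hi.ne'),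
    andrewsJ, ← hq]
  refine tsum_congr fun n ↦ ?_
  rw [andrewsJTerm, qPoch_zero]
  ring

end AndrewsJ

section SelbergSum

theorem eq_zero_of_contiguous_relations {R : Type*} [CommRing R] {D D' : ℕ → R⟦X⟧}
    (hD : ∀ m, D m = D' m + X ^ (2 * m + 2) * D (m + 2))
    (hD' : ∀ m, D' m = D (m + 1) + X ^ (m + 1) * D' (m + 1))
    (hXD : ∀ m, X ^ m ∣ D m) (hXD' : ∀ m, X ^ m ∣ D' m) (m : ℕ) : D m = 0 ∧ D' m = 0 := by
  have key : ∀ t m, X ^ (m + t) ∣ D m ∧ X ^ (m + t) ∣ D' m := by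
    intro t
    induction t with
    | zero => exact fun m ↦ ⟨hXD m, hXD' m⟩
    | succ t ih =>
      intro m
      have h' : X ^ (m + (t + 1)) ∣ D' m := by
        rw [hD', show m + (t + 1) = m + 1 + t by ring]
        exact dvd_add (ih _).1 ((ih _).2.mul_left _)
      refine ⟨?_, h'⟩
      rw [hD]
      exact dvd_add h' (((pow_dvd_pow X (by lia)).trans (ih (m + 2)).1).mul_left _)
  exact ⟨eq_zero_of_forall_X_pow_dvd fun n ↦ (pow_dvd_pow X (by lia)).trans (key n m).1,
    eq_zero_of_forall_X_pow_dvd fun n ↦ (pow_dvd_pow X (by lia)).trans (key n m).2⟩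

variable {K : Type*} [Field K]

theorem one_sub_mul_inv_qPoch_succ (j : ℕ) :
    (1 - X ^ (2 * (j + 1))) * (qPoch ((X : K⟦X⟧) ^ 2) (X ^ 2) (j + 1))⁻¹ =
      (qPoch (X ^ 2) (X ^ 2) j)⁻¹ := by
  have h : (X : K⟦X⟧) ^ 2 * (X ^ 2) ^ j = X ^ (2 * (j + 1)) := by ring
  rw [qPoch_succ, PowerSeries.mul_inv_rev, h, ← mul_assoc, PowerSeries.mul_inv_cancel, one_mul]
  simp

variable [TopologicalSpace K]

/-- The general term of `selbergSum`. -/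
noncomputable def selbergTerm (K : Type*) [Field K] [TopologicalSpace K] (u m j : ℕ) : K⟦X⟧ :=
  X ^ (2 * j ^ 2 + 2 * u * j) * qPochInf (-X ^ (m + 2 * j + 1)) X * (qPoch (X ^ 2) (X ^ 2) j)⁻¹

/-- The series `∑_j q^(2j² + 2uj) (-q^(m+2j+1); q)_∞ / (q²; q²)_j`. The Rogers–Selberg series are
its values at `m = 0`; the parameter `m` makes the contiguous relations close up. -/
noncomputable def selbergSum (K : Type*) [Field K] [TopologicalSpace K] (u m : ℕ) : K⟦X⟧ :=
  ∑' j, selbergTerm K u m j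

theorem summable_selbergTerm (u m : ℕ) : Summable (selbergTerm K u m) :=
  summable_of_X_pow_dvd fun j ↦ ((pow_dvd_pow X (by nlinarith)).mul_right _).mul_right _

variable [IsTopologicalRing K] [T2Space K]

theorem selbergSum_eq_add_selbergSum_succ (u m : ℕ) :
    selbergSum K u m =
      selbergSum K u (m + 1) + X ^ (m + 1) * selbergSum K (u + 1) (m + 1) := by
  have h₀ := summable_selbergTerm (K := K) u (m + 1)
  have h₁ := summable_selbergTerm (K := K) (u + 1) (m + 1)
  rw [selbergSum, selbergSum, selbergSum, ← h₁.tsum_mul_left, ← h₀.tsum_add (h₁.mul_left _)]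
  refine tsum_congr fun j ↦ ?_
  have h := qPochInf_eq_one_sub_mul (-(X : K⟦X⟧) ^ (m + 2 * j + 1)) (dvd_refl X)
  rw [neg_mul, ← pow_succ, show m + 2 * j + 1 + 1 = m + 1 + 2 * j + 1 by ring] at h
  rw [selbergTerm, selbergTerm, selbergTerm, h]
  ring

theorem selbergSum_eq_succ_add_selbergSum (u m : ℕ) :
    selbergSum K u m = selbergSum K (u + 1) m + X ^ (2 * u + 2) * selbergSum K (u + 2) (m + 2) := by
  have h₁ := summable_selbergTerm (K := K) (u + 1) m
  have h₂ := summable_selbergTerm (K := K) (u + 2) (m + 2)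
  let f (j : ℕ) : K⟦X⟧ := X ^ (2 * j ^ 2 + 2 * u * j) * qPochInf (-X ^ (m + 2 * j + 1)) X *
    ((1 - X ^ (2 * j)) * (qPoch (X ^ 2) (X ^ 2) j)⁻¹)
  have hf : Summable f :=
    summable_of_X_pow_dvd fun j ↦ ((pow_dvd_pow X (by nlinarith)).mul_right _).mul_right _
  rw [selbergSum, selbergSum, selbergSum, ← h₂.tsum_mul_left, ← h₁.tsum_add (h₂.mul_left _)]
  refine tsum_eq_tsum_of_eq_add_sub_succ (h₁.add (h₂.mul_left _)) hf (by simp [f]) fun j ↦ ?_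
  dsimp only [f, selbergTerm]
  rw [one_sub_mul_inv_qPoch_succ, show m + 2 * (j + 1) + 1 = m + 2 + 2 * j + 1 by ring]
  ring

theorem X_pow_dvd_selbergSum_sub_one {u m : ℕ} (hm : m ≤ 2 * u + 2) :
    X ^ m ∣ selbergSum K u m - 1 := by
  have hterm := X_pow_dvd_tsum_sub_zero (N := m) (summable_selbergTerm (K := K) u m) fun j ↦
    ((pow_dvd_pow X (by nlinarith)).mul_right _).mul_right _
  have hinf : (X : K⟦X⟧) ^ m ∣ qPochInf (-X ^ (m + 1)) X - 1 :=
    X_pow_dvd_qPochInf_sub_one dvd_rfl (pow_dvd_pow X m.le_succ).neg_right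
  rw [selbergSum]
  simpa [selbergTerm, qPoch_zero] using dvd_add hterm hinf

theorem qPochInf_mul_selbergSum (m : ℕ) :
    qPochInf X X * selbergSum K m m = andrewsJ K 3 3 m ∧
      qPochInf X X * selbergSum K (m + 1) m = andrewsJ K 3 2 m := by
  have hJ₁ (m : ℕ) : andrewsJ K 3 1 m = andrewsJ K 3 3 (m + 1) := by
    simpa [andrewsJ_zero] using andrewsJ_succ (R := K) (s := 0) (t := 3) (by simp) m
  have hJ₂ (m : ℕ) : andrewsJ K 3 2 m =
      andrewsJ K 3 3 (m + 1) + X ^ (m + 1) * andrewsJ K 3 2 (m + 1) := by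
    simpa [hJ₁] using andrewsJ_succ (R := K) (s := 1) (t := 2) (by simp) m
  have hJ₃ (m : ℕ) : andrewsJ K 3 3 m =
      andrewsJ K 3 2 m + X ^ ((m + 1) * 2) * andrewsJ K 3 3 (m + 2) := by
    simpa [hJ₁] using andrewsJ_succ (R := K) (s := 2) (t := 1) (by simp) m
  have hlim {i u : ℕ} (hi : 0 < i) (hik : i ≤ 6) {m : ℕ} (hm : m ≤ 2 * u + 2) :
      X ^ m ∣ qPochInf X X * selbergSum K u m - andrewsJ K 3 i m := by
    convert dvd_sub ((X_pow_dvd_selbergSum_sub_one (K := K) hm).mul_left (qPochInf X X))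
      (X_pow_dvd_andrewsJ_sub (R := K) (k := 3) hi hik m) using 1
    ring
  have h := eq_zero_of_contiguous_relations
    (D := fun m ↦ qPochInf X X * selbergSum K m m - andrewsJ K 3 3 m)
    (D' := fun m ↦ qPochInf X X * selbergSum K (m + 1) m - andrewsJ K 3 2 m)
    (fun m ↦ ?_) (fun m ↦ ?_) (fun m ↦ hlim (by simp) (by simp) (by lia))
    (fun m ↦ hlim (by simp) (by simp) (by lia)) m
  · exact h.imp sub_eq_zero.mp sub_eq_zero.mp
  · rw [selbergSum_eq_succ_add_selbergSum, hJ₃]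
    ring
  · rw [selbergSum_eq_add_selbergSum_succ, hJ₂]
    ring

/-- The **second Rogers–Selberg identity**. -/
theorem qPochInf_mul_selbergSum_one_zero :
    qPochInf X X * selbergSum K 1 0 =
      qPochInf (X ^ 5) (X ^ 7) * qPochInf (X ^ 2) (X ^ 7) * qPochInf (X ^ 7) (X ^ 7) :=
  (qPochInf_mul_selbergSum 0).2.trans (andrewsJ_at_zero (by simp) (by simp))

end SelbergSum

section ResidueClasses

variable {R : Type*} [CommRing R] [TopologicalSpace R]

theorem hasProd_ite_mod_eq_qPochInf {r m : ℕ} (hr : 0 < r) (hrm : r ≤ m) :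
    HasProd (fun i ↦ if (i + 1) % m = r % m then 1 - (X : R⟦X⟧) ^ (i + 1) else 1)
      (qPochInf (X ^ r) (X ^ m)) := by
  let g (k : ℕ) : ℕ := r + m * k - 1
  have hg_succ (k : ℕ) : g k + 1 = r + m * k := by lia
  have hg : Function.Injective g := fun k l hkl ↦
    Nat.eq_of_mul_eq_mul_left (hr.trans_le hrm) (by lia : m * k = m * l)
  refine (hg.hasProd_iff fun i hi ↦ if_neg fun hmod ↦ hi ?_).mp ?_
  · have hri : r ≤ i + 1 := by
      rcases hrm.eq_or_lt with rfl | hlt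
      · exact Nat.le_of_dvd i.succ_pos (Nat.dvd_of_mod_eq_zero (hmod.trans (Nat.mod_self r)))
      · exact (Nat.mod_eq_of_lt hlt ▸ hmod) ▸ Nat.mod_le _ _
    obtain ⟨k, hk⟩ := (Nat.modEq_iff_dvd' hri).mp hmod.symm
    exact ⟨k, by lia⟩
  · have hX : (X : R⟦X⟧) ∣ X ^ m := dvd_pow_self X (by lia)
    convert (multipliable_qPochInf (X ^ r) hX).hasProd using 2 with k
    · rw [Function.comp_apply, hg_succ, if_pos (Nat.add_mul_mod_self_left r m k), pow_add, pow_mul]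
    · rfl

variable [T2Space R] [IsTopologicalRing R]

theorem qPochInf_X_mul_mk_card_restricted (p : ℕ → Prop) [DecidablePred p] :
    qPochInf X X * (PowerSeries.mk fun n ↦ (#(Nat.Partition.restricted n p) : R)) =
      ∏' i, if p (i + 1) then 1 else 1 - (X : R⟦X⟧) ^ (i + 1) := by
  have hX := (multipliable_qPochInf (X : R⟦X⟧) dvd_rfl).hasProd
  refine ((hX.mul (Nat.Partition.hasProd_powerSeriesMk_card_restricted R p)).tprod_eq.symm).trans
    (tprod_congr fun i ↦ ?_)
  rw [← pow_succ']
  split_ifs with hp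
  · simp_rw [pow_mul]
    exact WithPiTopology.one_sub_mul_tsum_pow_of_constantCoeff_eq_zero (by simp)
  · exact mul_one _

theorem qPochInf_X_mul_mk_card_restricted_mod_seven :
    qPochInf X X * (PowerSeries.mk fun n ↦
        (#(Nat.Partition.restricted n fun j ↦ j % 7 ≠ 0 ∧ j % 7 ≠ 2 ∧ j % 7 ≠ 5) : R)) =
      qPochInf (X ^ 5) (X ^ 7) * qPochInf (X ^ 2) (X ^ 7) * qPochInf (X ^ 7) (X ^ 7) := by
  have h₅ := hasProd_ite_mod_eq_qPochInf (R := R) (r := 5) (m := 7) (by simp) (by simp)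
  have h₂ := hasProd_ite_mod_eq_qPochInf (R := R) (r := 2) (m := 7) (by simp) (by simp)
  have h₇ := hasProd_ite_mod_eq_qPochInf (R := R) (r := 7) (m := 7) (by simp) (by simp)
  rw [qPochInf_X_mul_mk_card_restricted, ← ((h₅.mul h₂).mul h₇).tprod_eq]
  refine tprod_congr fun i ↦ ?_
  split_ifs <;> lia

end ResidueClasses

section AndrewsPartitions

/-- The partitions counted by `A₂(n)`. -/
def IsAndrews {n : ℕ} (π : n.Partition) : Prop :=
  (∀ j, Odd j → π.parts.count j ≤ 1) ∧
  (∀ j, Odd j → j < largestRepeatedPart π → π.parts.count j = 0) ∧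
  (∀ j, Even j → 0 < j → j < largestRepeatedPart π → 2 ≤ π.parts.count j)

/-- Two copies of each of `2, 4, …, 2 * j`, the parts that are forced in a partition counted by
`A₂(n)` whose largest repeated part is `2 * j`. -/
def doubledEvens (j : ℕ) : Multiset ℕ :=
  2 • {i ∈ Icc 1 (2 * j) | Even i}.val

/-- The multiplicities `c` allowed to a part `i` once the parts `doubledEvens j` are removed from a
partition counted by `A₂(n)` whose largest repeated part is `2 * j`. -/
def IsResidualCount (j i c : ℕ) : Prop :=
  if i ≤ 2 * j then Even i else c = 1

instance (j i : ℕ) : DecidablePred (IsResidualCount j i) := fun _ ↦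
  inferInstanceAs (Decidable (ite _ _ _))

theorem count_doubledEvens (j i : ℕ) :
    (doubledEvens j).count i = if 0 < i ∧ i ≤ 2 * j ∧ Even i then 2 else 0 := by
  simp only [doubledEvens, Multiset.count_nsmul, Multiset.count_eq_of_nodup (Finset.nodup _),
    mem_val, mem_filter, mem_Icc, Nat.one_le_iff_ne_zero, Nat.pos_iff_ne_zero, and_assoc]
  split_ifs <;> rfl

theorem sum_doubledEvens (j : ℕ) : (doubledEvens j).sum = 2 * j ^ 2 + 2 * j := by
  have h : ∑ i ∈ Icc 1 (2 * j) with Even i, i = j ^ 2 + j := by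
    induction j with
    | zero => simp
    | succ j ih =>
      rw [sum_filter] at ih ⊢
      rw [mul_add_one, ← Nat.add_assoc, sum_Icc_succ_top (by lia), sum_Icc_succ_top (by lia), ih,
        if_neg (by grind), if_pos (by grind)]
      ring
  rw [doubledEvens, Multiset.sum_nsmul, (Finset.sum_val _).trans h, smul_eq_mul, mul_add]

variable {n : ℕ} {π : n.Partition}

theorem le_largestRepeatedPart {i : ℕ} (h : 2 ≤ π.parts.count i) : i ≤ largestRepeatedPart π :=
  le_sup (f := id) (mem_filter.mpr
    ⟨Multiset.mem_toFinset.mpr (Multiset.count_pos.mp (by lia)), h⟩)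

theorem two_le_count_largestRepeatedPart (h : largestRepeatedPart π ≠ 0) :
    2 ≤ π.parts.count (largestRepeatedPart π) := by
  have hne : {i ∈ π.parts.toFinset | 2 ≤ π.parts.count i}.Nonempty := by
    rw [nonempty_iff_ne_empty]
    exact fun he ↦ h (by rw [largestRepeatedPart, he, sup_empty, Nat.bot_eq_zero])
  obtain ⟨i, hi, hsup⟩ := exists_mem_eq_sup _ hne id
  rw [largestRepeatedPart, hsup]
  exact (mem_filter.mp hi).2

theorem largestRepeatedPart_le (π : n.Partition) : largestRepeatedPart π ≤ n :=
  Finset.sup_le fun _ hi ↦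
    π.le_of_mem_parts (Multiset.mem_toFinset.mp (mem_filter.mp hi).1)

theorem IsAndrews.even_largestRepeatedPart (h : IsAndrews π) : Even (largestRepeatedPart π) := by
  by_contra hodd
  rw [Nat.not_even_iff_odd] at hodd
  have := two_le_count_largestRepeatedPart hodd.pos.ne'
  have := h.1 _ hodd
  lia

theorem isAndrews_and_largestRepeatedPart_eq_iff (j : ℕ) :
    IsAndrews π ∧ largestRepeatedPart π = 2 * j ↔
      ∀ i, 0 < i → if i ≤ 2 * j then if Even i then 2 ≤ π.parts.count i else π.parts.count i = 0
        else π.parts.count i ≤ 1 := by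
  refine ⟨fun ⟨⟨_, h₂, h₃⟩, hj⟩ i hi ↦ ?_, fun h ↦ ?_⟩
  · split_ifs with hij heven
    · rcases hij.lt_or_eq with hlt | heq
      · exact h₃ i heven hi (hj ▸ hlt)
      · have := two_le_count_largestRepeatedPart (π := π) (by lia)
        rwa [heq, ← hj]
    · exact h₂ i (Nat.not_even_iff_odd.mp heven) (by grind)
    · by_contra! hc
      exact hij (hj ▸ le_largestRepeatedPart hc)
  · have hle : largestRepeatedPart π ≤ 2 * j := by
      by_contra! hlt
      have := two_le_count_largestRepeatedPart (π := π) (by lia)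
      have := h (largestRepeatedPart π) (by lia)
      grind
    have hge : 2 * j ≤ largestRepeatedPart π := by
      rcases j.eq_zero_or_pos with rfl | hj
      · simp
      · exact le_largestRepeatedPart (by simpa using h (2 * j) (by lia))
    refine ⟨⟨fun i hi ↦ ?_, fun i hi hlt ↦ ?_, fun i hi hpos hlt ↦ ?_⟩, hle.antisymm hge⟩
    · have := h i hi.pos
      grind
    · have := h i hi.pos
      grind
    · have := h i hpos
      grind

theorem isAndrews_and_largestRepeatedPart_eq_iff_doubledEvens_le (j : ℕ) :
    IsAndrews π ∧ largestRepeatedPart π = 2 * j ↔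
      doubledEvens j ≤ π.parts ∧ ∀ i ∈ π.parts - doubledEvens j,
        IsResidualCount j i ((π.parts - doubledEvens j).count i) := by
  have h0 : π.parts.count 0 = 0 :=
    Multiset.count_eq_zero_of_notMem fun h ↦ (π.parts_pos h).ne rfl
  simp only [isAndrews_and_largestRepeatedPart_eq_iff, Multiset.le_iff_count, IsResidualCount,
    ← Multiset.count_pos, Multiset.count_sub, count_doubledEvens, ← forall_and]
  refine forall_congr' fun i ↦ ?_
  rcases i.eq_zero_or_pos with rfl | hi
  · simp [h0]
  · grind

end AndrewsPartitions

section GeneratingFunctions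

variable {R : Type*} [CommRing R]

theorem card_filter_le_parts {μ : Multiset ℕ} (hμ : ∀ i ∈ μ, 0 < i) (Q : Multiset ℕ → Prop)
    [DecidablePred Q] {n : ℕ} (hn : μ.sum ≤ n) :
    #{π : n.Partition | μ ≤ π.parts ∧ Q (π.parts - μ)} =
      #{ρ : (n - μ.sum).Partition | Q ρ.parts} := by
  refine card_bij'
    (fun π hπ ↦ ⟨π.parts - μ, fun hi ↦ π.parts_pos (Multiset.mem_of_le tsub_le_self hi), ?_⟩)
    (fun ρ _ ↦ ⟨ρ.parts + μ, fun hi ↦ (Multiset.mem_add.mp hi).elim ρ.parts_pos (hμ _), ?_⟩)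
    ?_ ?_ ?_ ?_
  · have := congrArg Multiset.sum (tsub_add_cancel_of_le (mem_filter.mp hπ).2.1)
    rw [Multiset.sum_add, π.parts_sum] at this
    lia
  · rw [Multiset.sum_add, ρ.parts_sum, Nat.sub_add_cancel hn]
  · exact fun π hπ ↦ by simpa using (mem_filter.mp hπ).2.2
  · exact fun ρ hρ ↦ by simpa using hρ
  · exact fun π hπ ↦ Nat.Partition.ext (tsub_add_cancel_of_le (mem_filter.mp hπ).2.1)
  · exact fun ρ _ ↦ Nat.Partition.ext (add_tsub_cancel_right _ _)

theorem mk_card_filter_le_parts {μ : Multiset ℕ} (hμ : ∀ i ∈ μ, 0 < i) (Q : Multiset ℕ → Prop)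
    [DecidablePred Q] :
    PowerSeries.mk (fun n ↦ (#{π : n.Partition | μ ≤ π.parts ∧ Q (π.parts - μ)} : R)) =
      X ^ μ.sum * PowerSeries.mk fun n ↦ (#{π : n.Partition | Q π.parts} : R) := by
  ext n
  rw [coeff_mk, coeff_X_pow_mul']
  split_ifs with hn
  · rw [coeff_mk, card_filter_le_parts hμ Q hn]
  · have hempty (π : n.Partition) : ¬(μ ≤ π.parts ∧ Q (π.parts - μ)) := by
      rintro ⟨hle, -⟩
      obtain ⟨s, hs⟩ := Multiset.le_iff_exists_add.mp hle
      have := π.parts_sum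
      rw [hs, Multiset.sum_add] at this
      lia
    rw [filter_false_of_mem fun π _ ↦ hempty π, card_empty, Nat.cast_zero]

variable [TopologicalSpace R] [T2Space R]

theorem hasProd_mk_card_forall_count (P : ℕ → ℕ → Prop) [∀ i, DecidablePred (P i)] :
    HasProd (fun i ↦ 1 + ∑' c, (if P (i + 1) (c + 1) then 1 else 0 : R) •
        (X : R⟦X⟧) ^ ((i + 1) * (c + 1)))
      (PowerSeries.mk fun n ↦ (#{π : n.Partition | ∀ i ∈ π.parts, P i (π.parts.count i)} : R)) := by
  convert! Nat.Partition.hasProd_genFun (fun i c ↦ if P i c then (1 : R) else 0) using 1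
  simp_rw [Nat.Partition.genFun, card_filter, Finsupp.prod, prod_boole]
  simp

end GeneratingFunctions

section AndrewsGeneratingFunction

variable {K : Type*} [Field K]

theorem prod_range_two_mul_eq_inv_qPoch (j : ℕ) :
    ∏ i ∈ range (2 * j), (if Even (i + 1) then (1 - (X : K⟦X⟧) ^ (i + 1))⁻¹ else 1) =
      (qPoch (X ^ 2) (X ^ 2) j)⁻¹ := by
  induction j with
  | zero => simp [qPoch_zero]
  | succ j ih =>
    rw [mul_add_one, prod_range_succ, prod_range_succ, ih, if_neg (by grind), if_pos (by grind),
      qPoch_succ, PowerSeries.mul_inv_rev, mul_one, mul_comm, ← pow_mul, ← pow_add, add_comm 2]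

variable [TopologicalSpace K] [IsTopologicalRing K] [T2Space K]

theorem one_add_tsum_isResidualCount (j i : ℕ) :
    1 + ∑' c, (if IsResidualCount j (i + 1) (c + 1) then 1 else 0 : K) •
        (X : K⟦X⟧) ^ ((i + 1) * (c + 1)) =
      if i < 2 * j then if Even (i + 1) then (1 - X ^ (i + 1))⁻¹ else 1 else 1 + X ^ (i + 1) := by
  simp only [IsResidualCount, Nat.succ_le_iff]
  split_ifs with hij heven
  · have hX : (X ^ (i + 1) : K⟦X⟧).constantCoeff = 0 := by simp
    have hgeom := WithPiTopology.one_sub_mul_tsum_pow_of_constantCoeff_eq_zero hX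
    rw [(WithPiTopology.summable_pow_of_constantCoeff_eq_zero hX).tsum_eq_zero_add] at hgeom
    rw [PowerSeries.eq_inv_iff_mul_eq_one (by simp), mul_comm]
    simpa only [one_smul, pow_mul, pow_zero] using hgeom
  · simp
  · rw [tsum_eq_single 0 (by simp)]
    simp

theorem mk_card_isResidualCount (j : ℕ) :
    (PowerSeries.mk fun n ↦
        (#{π : n.Partition | ∀ i ∈ π.parts, IsResidualCount j i (π.parts.count i)} : K)) =
      qPochInf (-X ^ (2 * j + 1)) X * (qPoch (X ^ 2) (X ^ 2) j)⁻¹ := by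
  have h := hasProd_mk_card_forall_count (R := K) (IsResidualCount j)
  simp only [one_add_tsum_isResidualCount] at h
  have htail : HasProd (fun k ↦ 1 + (X : K⟦X⟧) ^ (k + 2 * j + 1))
      (qPochInf (-X ^ (2 * j + 1)) X) := by
    convert (multipliable_qPochInf (-X ^ (2 * j + 1) : K⟦X⟧) (dvd_refl X)).hasProd using 2 with k
    · rw [neg_mul, sub_neg_eq_add, ← pow_add]
      congr 2
      lia
    · rfl
  rw [mul_comm, ← prod_range_two_mul_eq_inv_qPoch,
    ← prod_congr rfl fun i hi ↦ if_pos (mem_range.mp hi)]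
  refine h.unique (HasProd.prod_range_mul ?_)
  simpa using htail

open scoped Classical in
theorem mk_card_isAndrews_and_largestRepeatedPart_eq (j : ℕ) :
    (PowerSeries.mk fun n ↦
        (#{π : n.Partition | IsAndrews π ∧ largestRepeatedPart π = 2 * j} : K)) =
      selbergTerm K 1 0 j := by
  have hpos (i : ℕ) (hi : i ∈ doubledEvens j) : 0 < i := by
    rw [← Multiset.count_pos, count_doubledEvens] at hi
    grind
  simp only [isAndrews_and_largestRepeatedPart_eq_iff_doubledEvens_le]
  rw [mk_card_filter_le_parts hpos fun s ↦ ∀ i ∈ s, IsResidualCount j i (s.count i)]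
  rw [mk_card_isResidualCount, sum_doubledEvens, selbergTerm, mul_one, zero_add, ← mul_assoc]

open scoped Classical in
theorem card_isAndrews_eq_sum (n : ℕ) :
    #{π : n.Partition | IsAndrews π} =
      ∑ j ∈ range (n + 1), #{π : n.Partition | IsAndrews π ∧ largestRepeatedPart π = 2 * j} := by
  rw [card_eq_sum_card_fiberwise (f := fun π ↦ largestRepeatedPart π / 2) (t := range (n + 1))]
  · refine sum_congr rfl fun j _ ↦ ?_
    rw [filter_filter]
    congr 1
    refine filter_congr fun π _ ↦ and_congr_right fun h ↦ ?_
    obtain ⟨k, hk⟩ := h.even_largestRepeatedPart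
    lia
  · intro π _
    have := largestRepeatedPart_le π
    simp only [coe_range, Set.mem_Iio]
    lia

open scoped Classical in
theorem mk_card_isAndrews_eq_selbergSum :
    (PowerSeries.mk fun n ↦ (#{π : n.Partition | IsAndrews π} : K)) = selbergSum K 1 0 := by
  refine (HasSum.tsum_eq ?_).symm
  rw [WithPiTopology.hasSum_iff_hasSum_coeff]
  intro n
  simp only [← mk_card_isAndrews_and_largestRepeatedPart_eq, coeff_mk]
  rw [card_isAndrews_eq_sum, Nat.cast_sum]
  refine hasSum_sum_of_ne_finset_zero fun j hj ↦ ?_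
  have hempty (π : n.Partition) : ¬(IsAndrews π ∧ largestRepeatedPart π = 2 * j) := by
    have := largestRepeatedPart_le π
    have := mem_range.not.mp hj
    lia
  rw [filter_false_of_mem fun π _ ↦ hempty π, card_empty, Nat.cast_zero]

theorem qPochInf_X_X_ne_zero : qPochInf (X : K⟦X⟧) X ≠ 0 := by
  intro h
  have hdvd := X_pow_dvd_qPochInf_sub_one (dvd_refl (X : K⟦X⟧)) (pow_one X).dvd
  rw [h, pow_one, X_dvd_iff] at hdvd
  simp at hdvd

open scoped Classical in
theorem mk_card_isAndrews_eq_mk_card_restricted :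
    (PowerSeries.mk fun n ↦ (#{π : n.Partition | IsAndrews π} : K)) =
      PowerSeries.mk fun n ↦
        (#(Nat.Partition.restricted n fun j ↦ j % 7 ≠ 0 ∧ j % 7 ≠ 2 ∧ j % 7 ≠ 5) : K) := by
  refine mul_left_cancel₀ qPochInf_X_X_ne_zero ?_
  rw [mk_card_isAndrews_eq_selbergSum, qPochInf_mul_selbergSum_one_zero,
    qPochInf_X_mul_mk_card_restricted_mod_seven]

end AndrewsGeneratingFunction

end RogersSelberg

/-- Andrews' interpretation of the second Rogers–Selberg identity: `A₂(n) = C_{3,2}(n)`.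
A partition is counted by `A₂(n)` iff every odd part appears at most once, no odd part less than
the largest repeated part appears, and every positive even integer less than the largest repeated
part appears at least twice (so no part greater than the largest repeated part is repeated). -/
theorem andrews_A2_eq_C32 (n : ℕ) :
    Nat.card {π : n.Partition //
        (∀ j, Odd j → π.parts.count j ≤ 1) ∧
        (∀ j, Odd j → j < largestRepeatedPart π → π.parts.count j = 0) ∧
        (∀ j, Even j → 0 < j → j < largestRepeatedPart π → 2 ≤ π.parts.count j)} =
      Nat.card {π : n.Partition //
        ∀ j ∈ π.parts, j % 7 ≠ 0 ∧ j % 7 ≠ 2 ∧ j % 7 ≠ 5} := by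
  classical
  have h := congrArg (PowerSeries.coeff n)
    (RogersSelberg.mk_card_isAndrews_eq_mk_card_restricted (K := ℚ))
  rw [PowerSeries.coeff_mk, PowerSeries.coeff_mk, Nat.cast_inj] at h
  exact ((Nat.subtype_card _ fun _ ↦ Finset.mem_filter_univ _).trans h).trans
    (Nat.subtype_card _ fun _ ↦ Finset.mem_filter_univ _).symm
end

section
/- For every natural number n, the number of partitions of n such that, if 2j denotes the largest repeated part (which is necessarily even), then every positive even integer less than 2j appears at least twice, no odd part less than 2j+2 appears at all, each odd part appears at most once, and no part greater than 2j is repeated, equals the number of partitions of n into parts none of which is congruent to 0, 1, or −1 modulo 7. -/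
/-!
The two `q`-Pascal recursions turn a finite theta sum with terms
`(-1) ^ r x ^ (r (r + 1) / 2) y ^ (r (r - 1) / 2)`, weighted by Gaussian binomials in the base
`x y`, into a product, one linear factor at a time; in the limit this is the Jacobi triple product.
They also evaluate the sum with `(x, y) = (q², q)` in the base `q²`, as `(q; q²)_{n+1}`.

The identity `∑ k, q ^ (k² + k m) [N, k]_q / (q; q)_{k+m} = 1 / (q; q)_{N+m}`, as `N → ∞`, yields
the Bailey lemma; in the base `q²` it multiplies the `r`-th term of the latter theta sum by
`q ^ (2 (r² + r))`, so that `(q², q)` becomes `(q⁶, q)`, to which the triple product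
applies. This is the first Rogers–Selberg identity
`∑ m, q ^ (2m² + 2m) (q; q²)_{m+1} / (q²; q²)_{2m+1} = (q, q⁶, q⁷; q⁷)_∞ / (q²; q²)_∞`.

A partition counted by `A₁` with largest repeated part `2m` becomes, after `2, 2, 4, 4, …, 2m, 2m`
are removed, an arbitrary partition into even parts at most `2m` and distinct parts exceeding
`2m + 1`. Hence the generating function of this class of partitions is `(-q; q)_∞` times the `m`-th
summand, and `(q; q)_∞ (-q; q)_∞ = (q²; q²)_∞`.
-/

open Filter Finset PowerSeries Topology
open scoped PowerSeries.WithPiTopology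

section FiniteIdentities

variable {R : Type*} [CommRing R]

/-- The finite `q`-Pochhammer symbol `(a; q)_n = ∏_{j < n} (1 - a q ^ j)`. -/
def qPochhammer (a q : R) (n : ℕ) : R := ∏ j ∈ range n, (1 - a * q ^ j)

@[simp]
lemma qPochhammer_zero (a q : R) : qPochhammer a q 0 = 1 := prod_range_zero _

lemma qPochhammer_succ (a q : R) (n : ℕ) :
    qPochhammer a q (n + 1) = qPochhammer a q n * (1 - a * q ^ n) := prod_range_succ _ n

lemma qPochhammer_sq_sq_two_mul_add_one (q : R) (n : ℕ) :
    qPochhammer (q ^ 2) (q ^ 2) (2 * n + 1) =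
      qPochhammer q (q ^ 2) (n + 1) * qPochhammer (q ^ 2) (q ^ 2) n *
        qPochhammer (-q) q (2 * n + 1) := by
  induction n with
  | zero =>
    simp only [mul_zero, zero_add, qPochhammer_succ, qPochhammer_zero, pow_zero]
    ring
  | succ n ih =>
    rw [show 2 * (n + 1) + 1 = 2 * n + 1 + 1 + 1 by ring, qPochhammer_succ _ _ (2 * n + 1 + 1),
      qPochhammer_succ _ _ (2 * n + 1), ih, qPochhammer_succ _ _ (n + 1),
      qPochhammer_succ (q ^ 2) _ n, qPochhammer_succ (-q) _ (2 * n + 1 + 1),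
      qPochhammer_succ (-q) _ (2 * n + 1)]
    ring

/-- The Gaussian binomial coefficient `[n, k]_q`, defined by its Pascal recursion so that it makes
sense in every commutative ring. -/
def qChoose (q : R) : ℕ → ℕ → R
  | _, 0 => 1
  | 0, _ + 1 => 0
  | n + 1, k + 1 => qChoose q n k + q ^ (k + 1) * qChoose q n (k + 1)

@[simp]
lemma qChoose_zero_right (q : R) (n : ℕ) : qChoose q n 0 = 1 := by
  cases n <;> rfl

lemma qChoose_succ_succ (q : R) (n k : ℕ) :
    qChoose q (n + 1) (k + 1) = qChoose q n k + q ^ (k + 1) * qChoose q n (k + 1) := rfl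

lemma qChoose_eq_zero_of_lt (q : R) {n k : ℕ} (h : n < k) : qChoose q n k = 0 := by
  induction n generalizing k with
  | zero => obtain ⟨k, rfl⟩ := Nat.exists_eq_succ_of_ne_zero h.ne_bot; rfl
  | succ n ih =>
    obtain ⟨k, rfl⟩ := Nat.exists_eq_succ_of_ne_zero (Nat.ne_zero_of_lt h)
    rw [Nat.succ_eq_add_one, qChoose_succ_succ, ih (by omega), ih (by omega), mul_zero, add_zero]

lemma qChoose_self (q : R) (n : ℕ) : qChoose q n n = 1 := by
  induction n with
  | zero => rfl
  | succ n ih => simp [qChoose_succ_succ, ih, qChoose_eq_zero_of_lt]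

lemma qChoose_succ_succ' (q : R) {n k : ℕ} (h : k ≤ n) :
    qChoose q (n + 1) (k + 1) = q ^ (n - k) * qChoose q n k + qChoose q n (k + 1) := by
  induction n generalizing k with
  | zero => simp [Nat.le_zero.mp h, qChoose]
  | succ n ih =>
    obtain rfl | hk := h.eq_or_lt
    · simp [qChoose_self, qChoose_eq_zero_of_lt]
    obtain ⟨l, rfl⟩ := Nat.exists_eq_add_of_le (Nat.lt_succ_iff.mp hk)
    rw [qChoose_succ_succ q (k + l + 1) k, show k + l + 1 - k = l + 1 by omega]
    cases k with
    | zero =>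
      have h₁ := ih (k := 0) (by omega)
      have h₂ := qChoose_succ_succ q l 0
      simp only [qChoose_zero_right, zero_add, Nat.sub_zero, pow_one, mul_one] at h₁ h₂ ⊢
      linear_combination q * h₁ - h₂
    | succ k =>
      have h₁ := ih (k := k) (by omega)
      have h₂ := ih (k := k + 1) (by omega)
      rw [show k + 1 + l - k = l + 1 by omega] at h₁
      rw [show k + 1 + l - (k + 1) = l by omega] at h₂
      have h₃ := qChoose_succ_succ q (k + 1 + l) k
      have h₄ := qChoose_succ_succ q (k + 1 + l) (k + 1)
      linear_combination h₁ + q ^ (k + 2) * h₂ - q ^ (l + 1) * h₃ - h₄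

lemma qChoose_symm_add (q : R) (k l : ℕ) : qChoose q (k + l) k = qChoose q (k + l) l := by
  induction k generalizing l with
  | zero => simp [qChoose_self]
  | succ k ihk =>
    induction l with
    | zero => simp [qChoose_self]
    | succ l ihl =>
      have h := ihk (l + 1)
      rw [show k + (l + 1) = k + 1 + l by ring] at h
      rw [show k + 1 + (l + 1) = k + 1 + l + 1 by ring, qChoose_succ_succ, ihl, h,
        qChoose_succ_succ' q (by omega : l ≤ k + 1 + l), Nat.add_sub_cancel]
      ring

lemma qChoose_add_mul_qPochhammer (q : R) (k l : ℕ) :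
    qChoose q (k + l) k * (qPochhammer q q k * qPochhammer q q l) = qPochhammer q q (k + l) := by
  induction k generalizing l with
  | zero => simp
  | succ k ihk =>
    induction l with
    | zero => simp [qChoose_self]
    | succ l ihl =>
      have h := ihk (l + 1)
      rw [show k + (l + 1) = k + 1 + l by ring] at h
      rw [show k + 1 + (l + 1) = k + 1 + l + 1 by ring, qChoose_succ_succ,
        qPochhammer_succ _ _ (k + 1 + l)]
      rw [qPochhammer_succ _ _ l] at h ⊢
      rw [qPochhammer_succ _ _ k] at ihl ⊢
      linear_combination (1 - q * q ^ k) * h + q ^ (k + 1) * (1 - q * q ^ l) * ihl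

lemma sum_mul_qChoose_succ (q : R) (c : ℕ → R) (n : ℕ) :
    ∑ k ∈ range (n + 2), c k * qChoose q (n + 1) k =
      ∑ k ∈ range (n + 1), (c k * q ^ k + c (k + 1)) * qChoose q n k := by
  have extend : ∑ k ∈ range (n + 1), c k * q ^ k * qChoose q n k =
      ∑ k ∈ range (n + 1), c (k + 1) * q ^ (k + 1) * qChoose q n (k + 1) + c 0 := by
    simpa [sum_range_succ _ (n + 1), qChoose_eq_zero_of_lt] using
      sum_range_succ' (fun k ↦ c k * q ^ k * qChoose q n k) (n + 1)
  have pascal : ∀ k ∈ range (n + 1), c (k + 1) * qChoose q (n + 1) (k + 1) =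
      c (k + 1) * qChoose q n k + c (k + 1) * q ^ (k + 1) * qChoose q n (k + 1) := fun k _ ↦ by
    rw [qChoose_succ_succ]
    ring
  rw [sum_range_succ', sum_congr rfl pascal, qChoose_zero_right]
  simp only [add_mul, sum_add_distrib, extend]
  ring

lemma sum_mul_qChoose_succ' (q : R) (c : ℕ → R) (n : ℕ) :
    ∑ k ∈ range (n + 2), c k * qChoose q (n + 1) k =
      ∑ k ∈ range (n + 1), (c k + c (k + 1) * q ^ (n - k)) * qChoose q n k := by
  have extend : ∑ k ∈ range (n + 1), c k * qChoose q n k =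
      ∑ k ∈ range (n + 1), c (k + 1) * qChoose q n (k + 1) + c 0 := by
    simpa [sum_range_succ _ (n + 1), qChoose_eq_zero_of_lt] using
      sum_range_succ' (fun k ↦ c k * qChoose q n k) (n + 1)
  have pascal : ∀ k ∈ range (n + 1), c (k + 1) * qChoose q (n + 1) (k + 1) =
      c (k + 1) * q ^ (n - k) * qChoose q n k + c (k + 1) * qChoose q n (k + 1) := fun k hk ↦ by
    rw [qChoose_succ_succ' q (mem_range_succ_iff.mp hk)]
    ring
  rw [sum_range_succ', sum_congr rfl pascal, qChoose_zero_right]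
  simp only [add_mul, sum_add_distrib, extend]
  ring

lemma sum_reflect_mul_qChoose (q : R) (c : ℕ → R) (n : ℕ) :
    ∑ k ∈ range (n + 1), c (n - k) * qChoose q n k =
      ∑ k ∈ range (n + 1), c k * qChoose q n k := by
  rw [← sum_range_reflect (fun k ↦ c k * qChoose q n k)]
  refine sum_congr rfl fun k hk ↦ ?_
  obtain ⟨l, rfl⟩ := Nat.exists_eq_add_of_le (mem_range_succ_iff.mp hk)
  rw [show k + l + 1 - 1 - k = l by omega, Nat.add_sub_cancel_left, qChoose_symm_add]

lemma sum_mul_qChoose_two_mul_add_one (q : R) (c : ℕ → R) (n : ℕ) :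
    ∑ k ∈ range (2 * n + 2), c k * qChoose q (2 * n + 1) k =
      ∑ r ∈ range (n + 1), (c (n + 1 + r) + c (n - r)) * qChoose q (2 * n + 1) (n - r) := by
  rw [show 2 * n + 2 = n + 1 + (n + 1) by ring, sum_range_add,
    ← sum_range_reflect (fun k ↦ c k * qChoose q (2 * n + 1) k), ← sum_add_distrib]
  refine sum_congr rfl fun r hr ↦ ?_
  obtain ⟨l, rfl⟩ := Nat.exists_eq_add_of_le (mem_range_succ_iff.mp hr)
  have symm := qChoose_symm_add q (r + l + 1 + r) l
  rw [show r + l + 1 + r + l = 2 * (r + l) + 1 by ring] at symm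
  rw [show r + l + 1 - 1 - r = l by omega, Nat.add_sub_cancel_left, symm]
  ring

end FiniteIdentities

section Theta

/-- The triangular number `r (r + 1) / 2` of an integer, which is nonnegative for every `r`. -/
def triangle (r : ℤ) : ℕ := (r * (r + 1) / 2).toNat

lemma two_mul_triangle (r : ℤ) : 2 * (triangle r : ℤ) = r * (r + 1) := by
  have nonneg : 0 ≤ r * (r + 1) := by
    obtain hr | hr := le_or_gt 0 r <;> nlinarith
  rw [triangle, Int.toNat_of_nonneg (by omega),
    Int.mul_ediv_cancel' (Int.even_mul_succ_self r).two_dvd]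

lemma triangle_add_one (r : ℤ) : (triangle (r + 1) : ℤ) = triangle r + (r + 1) := by
  linarith [two_mul_triangle r, two_mul_triangle (r + 1)]

lemma triangle_sub_one (r : ℤ) : (triangle (r - 1) : ℤ) = triangle r - r := by
  linarith [two_mul_triangle r, two_mul_triangle (r - 1)]

lemma triangle_neg (r : ℤ) : triangle (-r) = triangle (r - 1) := by
  have := two_mul_triangle (-r)
  have := two_mul_triangle (r - 1)
  zify
  linarith

lemma triangle_neg_sub_one (r : ℤ) : triangle (-r - 1) = triangle r := by
  rw [← neg_add', triangle_neg, add_sub_cancel_right]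

lemma le_triangle (r : ℕ) : r ≤ triangle r := by
  have := two_mul_triangle r
  zify
  nlinarith

variable {R : Type*} [CommRing R]

/-- The `r`-th term `(-1) ^ r x ^ (r (r + 1) / 2) y ^ (r (r - 1) / 2)` of the bilateral theta
series that the Jacobi triple product identity evaluates. -/
def theta (x y : R) (r : ℤ) : R :=
  ((r.negOnePow : ℤ) : R) * x ^ triangle r * y ^ triangle (r - 1)

lemma theta_mul_left (z x y : R) (r : ℤ) : theta (z * x) y r = z ^ triangle r * theta x y r := by
  rw [theta, theta, mul_pow]
  ring

lemma theta_add_one_mul_pow (x y : R) {r : ℤ} {m b : ℕ} (h : r + m = b) :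
    theta x y (r + 1) * (x * y) ^ m = -(theta x y r * (x * (x * y) ^ b)) := by
  have hx : triangle (r + 1) + m = triangle r + b + 1 := by
    linarith [triangle_add_one r]
  have hy : triangle r + m = triangle (r - 1) + b := by
    linarith [triangle_sub_one r]
  calc theta x y (r + 1) * (x * y) ^ m
      = -((r.negOnePow : ℤ) : R) * x ^ (triangle (r + 1) + m) * y ^ (triangle r + m) := by
        simp only [theta, Int.negOnePow_succ, add_sub_cancel_right, Units.val_neg, Int.cast_neg]
        ring
    _ = _ := by
        rw [hx, hy, theta]
        ring

lemma theta_sub_one_mul_pow (x y : R) {r : ℤ} {m a : ℕ} (h : a + r = m) :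
    theta x y (r - 1) * (x * y) ^ m = -(theta x y r * (y * (x * y) ^ a)) := by
  have hx : triangle (r - 1) + m = triangle r + a := by
    linarith [triangle_sub_one r]
  have hy : triangle (r - 1 - 1) + m = triangle (r - 1) + a + 1 := by
    linarith [triangle_sub_one (r - 1)]
  calc theta x y (r - 1) * (x * y) ^ m
      = -((r.negOnePow : ℤ) : R) * x ^ (triangle (r - 1) + m) * y ^ (triangle (r - 1 - 1) + m) := by
        simp only [theta, Int.negOnePow_sub, Int.negOnePow_one, mul_neg, mul_one, Units.val_neg,
          Int.cast_neg]
        ring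
    _ = _ := by
        rw [hx, hy, theta]
        ring

/-- The finite theta sum `∑_{-a ≤ r ≤ b} [a + b, a + r]_q (-1) ^ r x ^ (r (r + 1) / 2)
y ^ (r (r - 1) / 2)`, with the summation index shifted to `k = a + r`. -/
def finiteTheta (x y q : R) (a b : ℕ) : R :=
  ∑ k ∈ range (a + b + 1), theta x y (k - a) * qChoose q (a + b) k

lemma finiteTheta_add_one_right (x y q : R) (a b : ℕ) :
    finiteTheta x y q a (b + 1) = finiteTheta x y q a b +
      ∑ k ∈ range (a + b + 1),
        theta x y (k - a + 1) * q ^ (a + b - k) * qChoose q (a + b) k := by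
  have pascal := sum_mul_qChoose_succ' q (fun k ↦ theta x y (k - a)) (a + b)
  simp only [Nat.cast_add_one, add_mul, sum_add_distrib, add_sub_right_comm] at pascal
  exact pascal

lemma finiteTheta_add_one_left (x y q : R) (a b : ℕ) :
    finiteTheta x y q (a + 1) b = finiteTheta x y q a b +
      ∑ k ∈ range (a + b + 1), theta x y (k - a - 1) * q ^ k * qChoose q (a + b) k := by
  have pascal := sum_mul_qChoose_succ q (fun k ↦ theta x y (k - a - 1)) (a + b)
  simp only [Nat.cast_add_one, add_mul, sum_add_distrib, add_sub_right_comm,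
    sub_add_cancel] at pascal
  rw [add_comm (finiteTheta x y q a b)]
  simpa only [finiteTheta, add_right_comm a 1 b, Nat.cast_add_one, sub_sub] using pascal

lemma finiteTheta_mul_add_one_left (x y : R) (a b : ℕ) :
    finiteTheta x y (x * y) (a + 1) b = finiteTheta x y (x * y) a b * (1 - y * (x * y) ^ a) := by
  have step : ∀ k ∈ range (a + b + 1),
      theta x y (k - a - 1) * (x * y) ^ k * qChoose (x * y) (a + b) k =
        theta x y (k - a) * qChoose (x * y) (a + b) k * -(y * (x * y) ^ a) := fun k _ ↦ by
    rw [theta_sub_one_mul_pow x y (add_sub_cancel (a : ℤ) k)]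
    ring
  rw [finiteTheta_add_one_left, sum_congr rfl step, ← sum_mul, ← finiteTheta]
  ring

lemma finiteTheta_mul_add_one_right (x y : R) (a b : ℕ) :
    finiteTheta x y (x * y) a (b + 1) = finiteTheta x y (x * y) a b * (1 - x * (x * y) ^ b) := by
  have step : ∀ k ∈ range (a + b + 1),
      theta x y (k - a + 1) * (x * y) ^ (a + b - k) * qChoose (x * y) (a + b) k =
        theta x y (k - a) * qChoose (x * y) (a + b) k * -(x * (x * y) ^ b) := fun k hk ↦ by
    have hk := mem_range_succ_iff.mp hk
    rw [theta_add_one_mul_pow x y (by omega : (k - a : ℤ) + ↑(a + b - k) = b)]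
    ring
  rw [finiteTheta_add_one_right, sum_congr rfl step, ← sum_mul, ← finiteTheta]
  ring

theorem finiteTheta_mul (x y : R) (a b : ℕ) :
    finiteTheta x y (x * y) a b = qPochhammer y (x * y) a * qPochhammer x (x * y) b := by
  induction b with
  | zero =>
    induction a with
    | zero => simp [finiteTheta, theta, triangle]
    | succ a ih => rw [finiteTheta_mul_add_one_left, ih, qPochhammer_succ _ _ a]; ring
  | succ b ih => rw [finiteTheta_mul_add_one_right, ih, qPochhammer_succ _ _ b, mul_assoc]

lemma theta_sq_self (q : R) (r : ℤ) :
    theta (q ^ 2) q r = ((r.negOnePow : ℤ) : R) * q ^ (2 * triangle r + triangle (r - 1)) := by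
  rw [theta]
  ring

lemma finiteTheta_sq_self_add_one_left (q : R) (n : ℕ) :
    finiteTheta (q ^ 2) q (q ^ 2) (n + 1) n =
      (1 - q * (q ^ 2) ^ n) * finiteTheta (q ^ 2) q (q ^ 2) n n := by
  have step : ∀ k ∈ range (n + n + 1),
      theta (q ^ 2) q (k - n - 1) * (q ^ 2) ^ k * qChoose (q ^ 2) (n + n) k =
        -(q * (q ^ 2) ^ n) *
          (theta (q ^ 2) q (↑(n + n - k) - n) * qChoose (q ^ 2) (n + n) k) := fun k hk ↦ by
    have hk := mem_range_succ_iff.mp hk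
    obtain ⟨r, hr⟩ : ∃ r : ℤ, r = k - n := ⟨_, rfl⟩
    rw [show ((↑(n + n - k) : ℤ) - n) = -r by omega, ← hr, theta_sq_self, theta_sq_self,
      triangle_neg, triangle_neg_sub_one, Int.negOnePow_neg, Int.negOnePow_sub, Int.negOnePow_one]
    have exponent : 2 * triangle (r - 1) + triangle (r - 1 - 1) + 2 * k =
        2 * n + 1 + (2 * triangle (r - 1) + triangle r) := by
      linarith [triangle_sub_one r, triangle_sub_one (r - 1)]
    have power := congrArg (q ^ ·) exponent
    simp only [mul_neg, mul_one, Units.val_neg, Int.cast_neg]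
    linear_combination (-((r.negOnePow : ℤ) : R) * qChoose (q ^ 2) (n + n) k) * power
  rw [finiteTheta_add_one_left, sum_congr rfl step, ← mul_sum,
    sum_reflect_mul_qChoose (q ^ 2) (fun k ↦ theta (q ^ 2) q (k - n)), ← finiteTheta]
  ring

-- The two halves of the correction term cancel under `r ↦ -1 - r`.
lemma finiteTheta_sq_self_add_one_add_one (q : R) (n : ℕ) :
    finiteTheta (q ^ 2) q (q ^ 2) (n + 1) (n + 1) = finiteTheta (q ^ 2) q (q ^ 2) (n + 1) n := by
  rw [finiteTheta_add_one_right, add_eq_left, show n + 1 + n = 2 * n + 1 by ring,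
    sum_mul_qChoose_two_mul_add_one (q ^ 2)
      (fun k ↦ theta (q ^ 2) q (k - ↑(n + 1) + 1) * (q ^ 2) ^ (2 * n + 1 - k))]
  refine sum_eq_zero fun r hr ↦ mul_eq_zero_of_left ?_ _
  have hr := mem_range_succ_iff.mp hr
  rw [show (↑(n + 1 + r) - ↑(n + 1) + 1 : ℤ) = r + 1 by push_cast; ring,
    show (↑(n - r) - ↑(n + 1) + 1 : ℤ) = -r by push_cast [hr]; ring,
    theta_sq_self, theta_sq_self, triangle_neg, triangle_neg_sub_one, Int.negOnePow_neg,
    Int.negOnePow_succ, add_sub_cancel_right]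
  have exponent : 2 * triangle (r + 1) + triangle r + 2 * (2 * n + 1 - (n + 1 + r)) =
      2 * triangle (r - 1) + triangle r + 2 * (2 * n + 1 - (n - r)) := by
    have := triangle_add_one r
    have := triangle_sub_one r
    omega
  have power := congrArg (q ^ ·) exponent
  simp only [Units.val_neg, Int.cast_neg]
  linear_combination -((r : ℤ).negOnePow : ℤ) * power

theorem finiteTheta_sq_self (q : R) (n : ℕ) :
    finiteTheta (q ^ 2) q (q ^ 2) (n + 1) n = qPochhammer q (q ^ 2) (n + 1) := by
  induction n with
  | zero =>
    rw [finiteTheta_sq_self_add_one_left]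
    simp [finiteTheta, theta, triangle, qPochhammer_succ]
  | succ n ih =>
    rw [finiteTheta_sq_self_add_one_left, finiteTheta_sq_self_add_one_add_one, ih,
      qPochhammer_succ _ _ (n + 1), mul_comm]

lemma finiteTheta_add_one_left_self (x y q : R) (n : ℕ) :
    finiteTheta x y q (n + 1) n =
      ∑ r ∈ range (n + 1), (theta x y r + theta x y (-r - 1)) * qChoose q (2 * n + 1) (n - r) := by
  rw [finiteTheta, show n + 1 + n = 2 * n + 1 by ring,
    sum_mul_qChoose_two_mul_add_one q (fun k ↦ theta x y (k - ↑(n + 1)))]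
  refine sum_congr rfl fun r hr ↦ ?_
  have hr := mem_range_succ_iff.mp hr
  rw [show (↑(n + 1 + r) - ↑(n + 1) : ℤ) = r by push_cast; ring,
    show (↑(n - r) - ↑(n + 1) : ℤ) = -r - 1 by push_cast [hr]; ring]

end Theta

section XAdicConvergence

variable {R : Type*} [CommRing R] [TopologicalSpace R]

lemma X_pow_dvd_of_tendsto [T2Space R] {f : ℕ → R⟦X⟧} {s : R⟦X⟧} {n : ℕ}
    (hf : Tendsto f atTop (𝓝 s)) (h : ∀ᶠ k in atTop, X ^ n ∣ f k) : X ^ n ∣ s := by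
  refine X_pow_dvd_iff.mpr fun d hd ↦
    tendsto_nhds_unique (((WithPiTopology.continuous_coeff R d).tendsto s).comp hf) ?_
  exact tendsto_const_nhds.congr' (h.mono fun k hk ↦ (X_pow_dvd_iff.mp hk d hd).symm)

lemma X_pow_dvd_sum_range_sub_of_hasSum [T2Space R] [IsTopologicalRing R] {f : ℕ → R⟦X⟧}
    {s : R⟦X⟧} (hf : ∀ k, X ^ k ∣ f k) (hs : HasSum f s) (n : ℕ) :
    X ^ n ∣ ∑ k ∈ range n, f k - s := by
  refine X_pow_dvd_of_tendsto (hs.tendsto_sum_nat.const_sub (∑ k ∈ range n, f k)) ?_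
  filter_upwards [eventually_ge_atTop n] with m hm
  rw [← neg_sub, dvd_neg, ← sum_Ico_eq_sub _ hm]
  exact dvd_sum fun k hk ↦ (pow_dvd_pow X (mem_Ico.mp hk).1).trans (hf k)

lemma hasSum_of_X_pow_dvd_sum_range_sub {f : ℕ → R⟦X⟧} {s : R⟦X⟧} (hf : ∀ k, X ^ k ∣ f k)
    (hs : ∀ n, X ^ n ∣ ∑ k ∈ range n, f k - s) : HasSum f s := by
  refine (WithPiTopology.hasSum_iff_hasSum_coeff R).mpr fun d ↦ ?_
  have coeff_s := X_pow_dvd_iff.mp (hs (d + 1)) d d.lt_succ_self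
  rw [map_sub, map_sum, sub_eq_zero] at coeff_s
  rw [← coeff_s]
  refine hasSum_sum_of_ne_finset_zero fun k hk ↦ X_pow_dvd_iff.mp (hf k) d ?_
  simpa using hk

end XAdicConvergence

section InfiniteProducts

variable {R : Type*} [CommRing R] {a q : R⟦X⟧}

lemma X_pow_succ_dvd_mul_pow (ha : X ∣ a) (hq : X ∣ q) (n : ℕ) : X ^ (n + 1) ∣ a * q ^ n := by
  rw [pow_succ']
  exact mul_dvd_mul ha (pow_dvd_pow_of_dvd hq n)

lemma X_pow_dvd_qPochhammer_sub (ha : X ∣ a) (hq : X ∣ q) {n m : ℕ} (h : n ≤ m) :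
    X ^ (n + 1) ∣ qPochhammer a q m - qPochhammer a q n := by
  induction m, h using Nat.le_induction with
  | base => simp
  | succ m h ih =>
    have step : X ^ (n + 1) ∣ qPochhammer a q m * (a * q ^ m) :=
      ((pow_dvd_pow X (by omega)).trans (X_pow_succ_dvd_mul_pow ha hq m)).mul_left _
    rw [qPochhammer_succ, mul_one_sub, sub_right_comm]
    exact dvd_sub ih step

lemma isUnit_of_X_dvd_sub_one {f : R⟦X⟧} (hf : X ∣ f - 1) : IsUnit f := by
  rw [X_dvd_iff, map_sub, map_one, sub_eq_zero] at hf
  simp [isUnit_iff_constantCoeff, hf]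

lemma isUnit_qPochhammer (ha : X ∣ a) (hq : X ∣ q) (n : ℕ) : IsUnit (qPochhammer a q n) :=
  isUnit_of_X_dvd_sub_one (by simpa using X_pow_dvd_qPochhammer_sub ha hq n.zero_le)

variable [TopologicalSpace R]

/-- The infinite `q`-Pochhammer symbol `(a; q)_∞ = ∏_{j ≥ 0} (1 - a q ^ j)`, as an `X`-adically
convergent product of power series; it is only meaningful when `X` divides `a` and `q`. -/
noncomputable def qPochhammerInf (a q : R⟦X⟧) : R⟦X⟧ := ∏' j, (1 - a * q ^ j)

lemma hasProd_qPochhammerInf (ha : X ∣ a) (hq : X ∣ q) :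
    HasProd (fun j ↦ 1 - a * q ^ j) (qPochhammerInf a q) := by
  simp only [qPochhammerInf, sub_eq_add_neg]
  refine (WithPiTopology.multipliable_one_add_of_tendsto_order_atTop_nhds_top R
    (ENat.tendsto_nhds_top_iff_natCast_lt.mpr fun n ↦ ?_)).hasProd
  filter_upwards [eventually_ge_atTop n] with j hj
  refine (Nat.cast_lt.mpr (Nat.lt_succ_of_le hj)).trans_le (nat_le_order _ _ ?_)
  exact X_pow_dvd_iff.mp ((X_pow_succ_dvd_mul_pow ha hq j).neg_right)

lemma tendsto_qPochhammer (ha : X ∣ a) (hq : X ∣ q) :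
    Tendsto (qPochhammer a q) atTop (𝓝 (qPochhammerInf a q)) :=
  (hasProd_qPochhammerInf ha hq).tendsto_prod_nat

variable [T2Space R] [IsTopologicalRing R]

lemma X_pow_dvd_qPochhammerInf_sub (ha : X ∣ a) (hq : X ∣ q) (n : ℕ) :
    X ^ (n + 1) ∣ qPochhammerInf a q - qPochhammer a q n :=
  X_pow_dvd_of_tendsto ((tendsto_qPochhammer ha hq).sub_const _) <|
    (eventually_ge_atTop n).mono fun _ hm ↦ X_pow_dvd_qPochhammer_sub ha hq hm

lemma isUnit_qPochhammerInf (ha : X ∣ a) (hq : X ∣ q) : IsUnit (qPochhammerInf a q) :=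
  isUnit_of_X_dvd_sub_one (by simpa using X_pow_dvd_qPochhammerInf_sub ha hq 0)

end InfiniteProducts

section InverseProducts

variable {R : Type*} [CommRing R] {q : R⟦X⟧}

/-- The reciprocal `1 / (q; q)_n`, which is `0` by convention when `(q; q)_n` is not invertible. -/
noncomputable def invQPochhammer (q : R⟦X⟧) (n : ℕ) : R⟦X⟧ := Ring.inverse (qPochhammer q q n)

lemma qPochhammer_mul_invQPochhammer (hq : X ∣ q) (n : ℕ) :
    qPochhammer q q n * invQPochhammer q n = 1 :=
  Ring.mul_inverse_cancel _ (isUnit_qPochhammer hq hq n)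

lemma invQPochhammer_eq_mul_succ (hq : X ∣ q) (n : ℕ) :
    invQPochhammer q n = (1 - q ^ (n + 1)) * invQPochhammer q (n + 1) := by
  have cancel_succ := qPochhammer_mul_invQPochhammer hq (n + 1)
  rw [qPochhammer_succ] at cancel_succ
  linear_combination (1 - q ^ (n + 1)) * invQPochhammer q (n + 1) *
    qPochhammer_mul_invQPochhammer hq n - invQPochhammer q n * cancel_succ

lemma qChoose_mul_invQPochhammer (hq : X ∣ q) (k l : ℕ) :
    qChoose q (k + l) k * invQPochhammer q (k + l) = invQPochhammer q k * invQPochhammer q l := by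
  refine (isUnit_qPochhammer hq hq (k + l)).mul_left_cancel ?_
  linear_combination qChoose q (k + l) k * qPochhammer_mul_invQPochhammer hq (k + l) +
    invQPochhammer q k * invQPochhammer q l * qChoose_add_mul_qPochhammer q k l -
    qChoose q (k + l) k * (qPochhammer q q l * invQPochhammer q l *
      qPochhammer_mul_invQPochhammer hq k + qPochhammer_mul_invQPochhammer hq l)

lemma X_pow_dvd_qChoose_sub_invQPochhammer (hq : X ∣ q) (k l : ℕ) :
    X ^ (l + 1) ∣ qChoose q (k + l) k - invQPochhammer q k := by
  convert (X_pow_dvd_qPochhammer_sub hq hq (Nat.le_add_left l k)).mul_left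
    (invQPochhammer q k * invQPochhammer q l) using 1
  linear_combination invQPochhammer q k * qPochhammer_mul_invQPochhammer hq l +
    qPochhammer q q (k + l) * qChoose_mul_invQPochhammer hq k l -
    qChoose q (k + l) k * qPochhammer_mul_invQPochhammer hq (k + l)

variable [TopologicalSpace R]

/-- The reciprocal `1 / (q; q)_∞`, which is `0` by convention when `(q; q)_∞` is not invertible. -/
noncomputable def invQPochhammerInf (q : R⟦X⟧) : R⟦X⟧ := Ring.inverse (qPochhammerInf q q)

variable [T2Space R] [IsTopologicalRing R]

lemma qPochhammerInf_mul_invQPochhammerInf (hq : X ∣ q) :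
    qPochhammerInf q q * invQPochhammerInf q = 1 :=
  Ring.mul_inverse_cancel _ (isUnit_qPochhammerInf hq hq)

lemma X_pow_dvd_invQPochhammer_sub_inf (hq : X ∣ q) (n : ℕ) :
    X ^ (n + 1) ∣ invQPochhammer q n - invQPochhammerInf q := by
  convert (X_pow_dvd_qPochhammerInf_sub hq hq n).mul_left
    (invQPochhammer q n * invQPochhammerInf q) using 1
  linear_combination invQPochhammerInf q * qPochhammer_mul_invQPochhammer hq n -
    invQPochhammer q n * qPochhammerInf_mul_invQPochhammerInf hq

lemma X_pow_dvd_qChoose_sub_invQPochhammerInf (hq : X ∣ q) {k l : ℕ} (h : k ≤ l) :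
    X ^ (k + 1) ∣ qChoose q (k + l) k - invQPochhammerInf q := by
  rw [← sub_add_sub_cancel _ (invQPochhammer q k)]
  exact dvd_add ((pow_dvd_pow X (by omega)).trans (X_pow_dvd_qChoose_sub_invQPochhammer hq k l))
    (X_pow_dvd_invQPochhammer_sub_inf hq k)

end InverseProducts

section JacobiTripleProduct

variable {R : Type*} [CommRing R] {x y : R⟦X⟧}

lemma X_pow_dvd_theta (hx : X ∣ x) (r : ℕ) : X ^ r ∣ theta x y r := by
  have x_pow : X ^ r ∣ x ^ triangle r :=
    (pow_dvd_pow_of_dvd hx r).trans (pow_dvd_pow x (le_triangle r))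
  exact (x_pow.mul_left _).mul_right _

lemma X_pow_dvd_theta_neg_sub_one (hx : X ∣ x) (r : ℕ) : X ^ r ∣ theta x y (-r - 1) := by
  have x_pow : X ^ r ∣ x ^ triangle (-r - 1) := by
    rw [triangle_neg_sub_one]
    exact (pow_dvd_pow_of_dvd hx r).trans (pow_dvd_pow x (le_triangle r))
  exact (x_pow.mul_left _).mul_right _

variable [TopologicalSpace R] [T2Space R] [IsTopologicalRing R]

lemma X_pow_dvd_sum_mul_qChoose_sub {q : R⟦X⟧} (hq : X ∣ q) {α : ℕ → R⟦X⟧}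
    (hα : ∀ r, X ^ r ∣ α r) (n : ℕ) :
    X ^ (n + 1) ∣ ∑ r ∈ range (n + 1), α r * qChoose q (2 * n + 1) (n - r) -
      (∑ r ∈ range (n + 1), α r) * invQPochhammerInf q := by
  rw [sum_mul, ← sum_sub_distrib]
  refine dvd_sum fun r hr ↦ ?_
  obtain ⟨k, rfl⟩ := Nat.exists_eq_add_of_le (mem_range_succ_iff.mp hr)
  rw [← mul_sub, Nat.add_sub_cancel_left, show 2 * (r + k) + 1 = k + (r + r + k + 1) by ring,
    add_assoc, pow_add]
  exact mul_dvd_mul (hα r) (X_pow_dvd_qChoose_sub_invQPochhammerInf hq (by omega))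

theorem hasSum_theta_add_theta (hx : X ∣ x) (hy : X ∣ y) :
    HasSum (fun r : ℕ ↦ theta x y r + theta x y (-r - 1))
      (qPochhammerInf y (x * y) * qPochhammerInf x (x * y) * qPochhammerInf (x * y) (x * y)) := by
  have hxy : X ∣ x * y := hx.mul_right y
  have hθ : ∀ r : ℕ, X ^ r ∣ theta x y r + theta x y (-r - 1) := fun r ↦
    dvd_add (X_pow_dvd_theta hx r) (X_pow_dvd_theta_neg_sub_one hx r)
  refine hasSum_of_X_pow_dvd_sum_range_sub hθ fun n ↦ ?_
  obtain _ | n := n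
  · simp
  have sum_eq := X_pow_dvd_sum_mul_qChoose_sub hxy hθ n
  rw [← finiteTheta_add_one_left_self, finiteTheta_mul] at sum_eq
  have products := dvd_mul_sub_mul
    ((pow_dvd_pow X (n + 1).le_succ).trans (X_pow_dvd_qPochhammerInf_sub hy hxy (n + 1)))
    (X_pow_dvd_qPochhammerInf_sub hx hxy n)
  convert (dvd_add sum_eq products).mul_left (-qPochhammerInf (x * y) (x * y)) using 1
  linear_combination (-∑ r ∈ range (n + 1), (theta x y r + theta x y (-r - 1))) *
    qPochhammerInf_mul_invQPochhammerInf hxy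

end JacobiTripleProduct

section BaileyLemma

variable {R : Type*} [CommRing R] {q : R⟦X⟧}

theorem sum_qChoose_mul_invQPochhammer (hq : X ∣ q) (n m : ℕ) :
    ∑ k ∈ range (n + 1), q ^ (k ^ 2 + k * m) * invQPochhammer q (k + m) * qChoose q n k =
      invQPochhammer q (n + m) := by
  induction n generalizing m with
  | zero => simp
  | succ n ih =>
    rw [sum_mul_qChoose_succ, show n + 1 + m = n + (m + 1) by ring, ← ih]
    refine sum_congr rfl fun k _ ↦ congrArg (· * _) ?_
    have step := invQPochhammer_eq_mul_succ hq (k + m)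
    rw [show k + 1 + m = k + m + 1 by ring, show k + (m + 1) = k + m + 1 by ring]
    linear_combination q ^ (k ^ 2 + k * m) * q ^ k * step

lemma sum_range_mul_sum_qChoose (hq : X ∣ q) (α : ℕ → R⟦X⟧) (N : ℕ) :
    ∑ n ∈ range N, q ^ (n ^ 2 + n) * invQPochhammer q (2 * n + 1) *
        ∑ r ∈ range (n + 1), α r * qChoose q (2 * n + 1) (n - r) =
      ∑ r ∈ range N, q ^ (r ^ 2 + r) * α r * ∑ k ∈ range (N - r),
        q ^ (k ^ 2 + k * (2 * r + 1)) *
          invQPochhammer q (k + (2 * r + 1)) * invQPochhammer q k := by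
  simp only [mul_sum]
  rw [← sum_range_diag_flip]
  refine sum_congr rfl fun n _ ↦ sum_congr rfl fun r hr ↦ ?_
  obtain ⟨k, rfl⟩ := Nat.exists_eq_add_of_le (mem_range_succ_iff.mp hr)
  have factor := qChoose_mul_invQPochhammer hq k (k + (2 * r + 1))
  rw [show k + (k + (2 * r + 1)) = 2 * (r + k) + 1 by ring] at factor
  rw [Nat.add_sub_cancel_left]
  linear_combination q ^ ((r + k) ^ 2 + (r + k)) * α r * factor

variable [TopologicalSpace R] [T2Space R] [IsTopologicalRing R]

lemma X_pow_dvd_sum_invQPochhammer_sub (hq : X ∣ q) (n m : ℕ) :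
    X ^ n ∣ ∑ k ∈ range n, q ^ (k ^ 2 + k * m) * invQPochhammer q (k + m) * invQPochhammer q k -
      invQPochhammerInf q := by
  have finite := sum_qChoose_mul_invQPochhammer hq n m
  rw [sum_range_succ, qChoose_self, mul_one] at finite
  have last : X ^ n ∣ q ^ (n ^ 2 + n * m) * invQPochhammer q (n + m) :=
    ((pow_dvd_pow_of_dvd hq n).trans (pow_dvd_pow q (by nlinarith))).mul_right _
  have limit : X ^ n ∣ invQPochhammer q (n + m) - invQPochhammerInf q :=
    (pow_dvd_pow X (by omega)).trans (X_pow_dvd_invQPochhammer_sub_inf hq (n + m))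
  have terms : X ^ n ∣ ∑ k ∈ range n, q ^ (k ^ 2 + k * m) * invQPochhammer q (k + m) *
      (qChoose q n k - invQPochhammer q k) := by
    refine dvd_sum fun k hk ↦ ?_
    obtain ⟨l, rfl⟩ := Nat.exists_eq_add_of_lt (mem_range.mp hk)
    have power : X ^ k ∣ q ^ (k ^ 2 + k * m) :=
      (pow_dvd_pow_of_dvd hq k).trans (pow_dvd_pow q (by nlinarith))
    rw [add_assoc, pow_add]
    exact mul_dvd_mul (power.mul_right _) ((pow_dvd_pow X (by omega)).trans
      (X_pow_dvd_qChoose_sub_invQPochhammer hq k (l + 1)))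
  convert dvd_sub limit (dvd_add last terms) using 1
  simp only [mul_sub, sum_sub_distrib]
  linear_combination finite

theorem hasSum_bailey (hq : X ∣ q) {α : ℕ → R⟦X⟧} {s : R⟦X⟧}
    (hs : HasSum (fun r ↦ q ^ (r ^ 2 + r) * α r) s) :
    HasSum (fun n ↦ q ^ (n ^ 2 + n) * invQPochhammer q (2 * n + 1) *
      ∑ r ∈ range (n + 1), α r * qChoose q (2 * n + 1) (n - r)) (s * invQPochhammerInf q) := by
  have power : ∀ n, X ^ n ∣ q ^ (n ^ 2 + n) := fun n ↦
    (pow_dvd_pow_of_dvd hq n).trans (pow_dvd_pow q (by nlinarith))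
  refine hasSum_of_X_pow_dvd_sum_range_sub
    (fun n ↦ ((power n).mul_right _).mul_right _) fun N ↦ ?_
  have inner : X ^ N ∣ ∑ r ∈ range N, q ^ (r ^ 2 + r) * α r * (∑ k ∈ range (N - r),
      q ^ (k ^ 2 + k * (2 * r + 1)) * invQPochhammer q (k + (2 * r + 1)) * invQPochhammer q k -
        invQPochhammerInf q) := by
    refine dvd_sum fun r hr ↦ ?_
    obtain ⟨l, rfl⟩ := Nat.exists_eq_add_of_le (mem_range.mp hr).le
    rw [pow_add, Nat.add_sub_cancel_left]
    exact mul_dvd_mul ((power r).mul_right _) (X_pow_dvd_sum_invQPochhammer_sub hq l _)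
  have outer := (X_pow_dvd_sum_range_sub_of_hasSum (fun r ↦ (power r).mul_right _) hs N).mul_right
    (invQPochhammerInf q)
  rw [sum_range_mul_sum_qChoose hq]
  convert dvd_add inner outer using 1
  simp only [mul_sub, sum_sub_distrib, ← sum_mul]
  ring

theorem hasSum_rogers_selberg (hq : X ∣ q) :
    HasSum (fun n ↦ q ^ (2 * n ^ 2 + 2 * n) * invQPochhammer (q ^ 2) (2 * n + 1) *
        qPochhammer q (q ^ 2) (n + 1))
      (qPochhammerInf q (q ^ 7) * qPochhammerInf (q ^ 6) (q ^ 7) * qPochhammerInf (q ^ 7) (q ^ 7) *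
        invQPochhammerInf (q ^ 2)) := by
  have dilate : ∀ r : ℕ, theta (q ^ 6) q r + theta (q ^ 6) q (-r - 1) =
      (q ^ 2) ^ (r ^ 2 + r) * (theta (q ^ 2) q r + theta (q ^ 2) q (-r - 1)) := fun r ↦ by
    have exponent : r ^ 2 + r = 2 * triangle r := by
      have := two_mul_triangle r
      zify
      linarith
    rw [show q ^ 6 = q ^ 4 * q ^ 2 by ring, theta_mul_left, theta_mul_left, triangle_neg_sub_one,
      exponent]
    ring
  have triple := hasSum_theta_add_theta (dvd_pow hq (by decide : 6 ≠ 0)) hq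
  simp only [dilate, ← pow_succ] at triple
  convert hasSum_bailey (dvd_pow hq two_ne_zero) triple using 2 with n
  rw [← finiteTheta_add_one_left_self, finiteTheta_sq_self]
  ring

end BaileyLemma

section PartitionGeneratingFunctions

/-- The generating function of the partitions whose multiset of parts satisfies `P`. -/
noncomputable def partitionGF (P : Multiset ℕ → Prop) : ℤ⟦X⟧ :=
  PowerSeries.mk fun n ↦ Nat.card {π : n.Partition // P π.parts}

lemma coeff_partitionGF (P : Multiset ℕ → Prop) (n : ℕ) :
    coeff n (partitionGF P) = Nat.card {π : n.Partition // P π.parts} :=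
  coeff_mk _ _

open scoped Classical in
lemma coeff_partitionGF_eq_sum (P : Multiset ℕ → Prop) (n : ℕ) :
    coeff n (partitionGF P) = ∑ π : n.Partition, if P π.parts then 1 else 0 := by
  rw [coeff_partitionGF, Nat.card_eq_fintype_card, Fintype.card_subtype, card_filter]
  push_cast
  rfl

lemma partitionGF_congr {P Q : Multiset ℕ → Prop} (h : ∀ s : Multiset ℕ, 0 ∉ s → (P s ↔ Q s)) :
    partitionGF P = partitionGF Q := by
  ext n
  simp only [coeff_partitionGF, h _ fun h0 ↦ (Nat.Partition.parts_pos _ h0).false]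

theorem partitionGF_le_and_sub (P : Multiset ℕ → Prop) {B : Multiset ℕ} (hB : 0 ∉ B) :
    partitionGF (fun s ↦ B ≤ s ∧ P (s - B)) = X ^ B.sum * partitionGF P := by
  ext n
  rw [coeff_X_pow_mul', coeff_partitionGF]
  split_ifs with hn
  · obtain ⟨m, rfl⟩ := Nat.exists_eq_add_of_le' hn
    rw [Nat.add_sub_cancel, coeff_partitionGF, Nat.cast_inj]
    refine Nat.card_congr
      { toFun := fun π ↦ ⟨⟨π.1.parts - B, fun hi ↦ π.1.parts_pos (Multiset.mem_of_le
            (Multiset.sub_le_self _ _) hi), ?_⟩, π.2.2⟩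
        invFun := fun π ↦ ⟨⟨π.1.parts + B, fun hi ↦ (Multiset.mem_add.mp hi).elim π.1.parts_pos
            fun hi ↦ Nat.pos_of_ne_zero (ne_of_mem_of_not_mem hi hB), ?_⟩, ?_⟩
        left_inv := fun π ↦ ?_
        right_inv := fun π ↦ ?_ }
    · have := congrArg Multiset.sum (tsub_add_cancel_of_le π.2.1)
      rw [Multiset.sum_add, π.1.parts_sum] at this
      exact Nat.add_right_cancel this
    · rw [Multiset.sum_add, π.1.parts_sum]
    · exact ⟨Multiset.le_add_left _ _, by simpa using π.2⟩
    · exact Subtype.ext (Nat.Partition.ext (tsub_add_cancel_of_le π.2.1))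
    · exact Subtype.ext (Nat.Partition.ext (add_tsub_cancel_right _ _))
  · have : IsEmpty {π : n.Partition // B ≤ π.parts ∧ P (π.parts - B)} := ⟨fun π ↦ hn <| by
      obtain ⟨t, ht⟩ := Multiset.le_iff_exists_add.mp π.2.1
      rw [← π.1.parts_sum, ht, Multiset.sum_add]
      exact Nat.le_add_right _ _⟩
    simp

theorem hasSum_partitionGF {P : ℕ → Multiset ℕ → Prop}
    (hP : ∀ s m m', P m s → P m' s → m = m') :
    HasSum (fun m ↦ partitionGF (P m)) (partitionGF fun s ↦ ∃ m, P m s) := by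
  classical
  refine (WithPiTopology.hasSum_iff_hasSum_coeff ℤ).mpr fun n ↦ ?_
  simp only [coeff_partitionGF_eq_sum]
  refine hasSum_sum fun π _ ↦ ?_
  split_ifs with h
  · obtain ⟨m, hm⟩ := h
    have unique : ∀ m', P m' π.parts ↔ m' = m := fun m' ↦
      ⟨fun hm' ↦ hP _ _ _ hm' hm, fun e ↦ e ▸ hm⟩
    simpa only [unique] using hasSum_ite_eq m (1 : ℤ)
  · simp only [not_exists] at h
    simpa only [h, if_false] using hasSum_zero

/-- The factor that a part `i` contributes to the generating function of the partitions in which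
the multiplicity `c` of every occurring part `i` satisfies `p i c`. -/
noncomputable def partFactor (p : ℕ → ℕ → Prop) (i : ℕ) : ℤ⟦X⟧ :=
  open scoped Classical in 1 + ∑' c, (if p i (c + 1) then (1 : ℤ) else 0) • X ^ (i * (c + 1))

theorem hasProd_partFactor (p : ℕ → ℕ → Prop) :
    HasProd (fun i ↦ partFactor p (i + 1)) (partitionGF fun s ↦ ∀ i ∈ s, p i (s.count i)) := by
  classical
  convert! Nat.Partition.hasProd_genFun (fun i c ↦ if p i c then (1 : ℤ) else 0) using 1
  ext n
  rw [coeff_partitionGF_eq_sum, Nat.Partition.coeff_genFun]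
  refine sum_congr rfl fun π _ ↦ ?_
  rw [Finsupp.prod, prod_boole]
  simp

lemma partFactor_eq_one {p : ℕ → ℕ → Prop} {i : ℕ} (h : ∀ c, ¬p i c) : partFactor p i = 1 := by
  simp [partFactor, h]

lemma partFactor_eq_one_add {p : ℕ → ℕ → Prop} {i : ℕ} (h : ∀ c, p i c ↔ c ≤ 1) :
    partFactor p i = 1 + X ^ i := by
  rw [partFactor, tsum_eq_single 0 fun c hc ↦ by simp [h, hc]]
  simp [h]

lemma partFactor_mul_one_sub {p : ℕ → ℕ → Prop} {i : ℕ} (hi : 0 < i) (h : ∀ c, p i c) :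
    partFactor p i * (1 - X ^ i) = 1 := by
  have const_eq_zero : constantCoeff (X ^ i : ℤ⟦X⟧) = 0 := by simp [hi.ne']
  have summable := WithPiTopology.summable_pow_of_constantCoeff_eq_zero const_eq_zero
  have geometric : partFactor p i = ∑' c, (X ^ i : ℤ⟦X⟧) ^ c := by
    simp [summable.tsum_eq_zero_add, partFactor, h, pow_mul]
  rw [geometric, WithPiTopology.tsum_pow_mul_one_sub_of_constantCoeff_eq_zero const_eq_zero]

end PartitionGeneratingFunctions

section ModSeven

theorem qPochhammerInf_mul_qPochhammerInf_neg {R : Type*} [CommRing R] [TopologicalSpace R]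
    [T2Space R] [IsTopologicalRing R] {a q : R⟦X⟧} (ha : X ∣ a) (hq : X ∣ q) :
    qPochhammerInf a q * qPochhammerInf (-a) q = qPochhammerInf (a ^ 2) (q ^ 2) := by
  refine ((hasProd_qPochhammerInf ha hq).mul (hasProd_qPochhammerInf ha.neg_right hq)).unique ?_
  convert! hasProd_qPochhammerInf (dvd_pow ha two_ne_zero) (dvd_pow hq two_ne_zero) using 2
  ring

theorem hasProd_partitionGF_mul_qPochhammerInf (p : ℕ → Prop) [DecidablePred p] :
    HasProd (fun i ↦ if p (i + 1) then 1 else 1 - X ^ (i + 1))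
      (partitionGF (fun s ↦ ∀ i ∈ s, p i) * qPochhammerInf X X) := by
  convert! (hasProd_partFactor fun i _ ↦ p i).mul (hasProd_qPochhammerInf dvd_rfl dvd_rfl) using 2
    with i
  rw [← pow_succ']
  split_ifs with h
  · rw [partFactor_mul_one_sub i.succ_pos fun _ ↦ h]
  · rw [partFactor_eq_one fun _ ↦ h, one_mul]

lemma prod_range_seven_mul (k : ℕ) :
    ∏ i ∈ range (7 * k),
        (if (i + 1) % 7 ≠ 0 ∧ (i + 1) % 7 ≠ 1 ∧ (i + 1) % 7 ≠ 6 then 1 else 1 - X ^ (i + 1)) =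
      (qPochhammer X (X ^ 7) k * qPochhammer (X ^ 6) (X ^ 7) k * qPochhammer (X ^ 7) (X ^ 7) k :
        ℤ⟦X⟧) := by
  induction k with
  | zero => simp
  | succ k ih =>
    simp only [Nat.mul_succ, prod_range_succ, ih, qPochhammer_succ, add_assoc, Nat.mul_add_mod,
      Nat.reduceAdd, Nat.reduceMod, ← pow_mul, ← pow_add]
    simp only [ne_eq, one_ne_zero, not_false_eq_true, not_true_eq_false, OfNat.one_ne_ofNat,
      and_true, and_false, ↓reduceIte, OfNat.ofNat_ne_zero, OfNat.ofNat_ne_one, Nat.reduceEqDiff,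
      and_self, mul_one, zero_ne_one, OfNat.zero_ne_ofNat]
    ring

theorem partitionGF_mod_seven_mul_qPochhammerInf :
    partitionGF (fun s ↦ ∀ i ∈ s, i % 7 ≠ 0 ∧ i % 7 ≠ 1 ∧ i % 7 ≠ 6) * qPochhammerInf X X =
      qPochhammerInf X (X ^ 7) * qPochhammerInf (X ^ 6) (X ^ 7) *
        qPochhammerInf (X ^ 7) (X ^ 7) := by
  have hX : ∀ k, X ∣ (X ^ (k + 1) : ℤ⟦X⟧) := fun k ↦ dvd_pow_self X k.succ_ne_zero
  have products := (hasProd_partitionGF_mul_qPochhammerInf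
    fun i ↦ i % 7 ≠ 0 ∧ i % 7 ≠ 1 ∧ i % 7 ≠ 6).tendsto_prod_nat.comp
      (tendsto_id.const_mul_atTop' (Nat.succ_pos 6))
  refine tendsto_nhds_unique products ?_
  simp only [Function.comp_def, id, Nat.succ_eq_add_one, Nat.reduceAdd, prod_range_seven_mul]
  exact ((tendsto_qPochhammer dvd_rfl (hX 6)).mul (tendsto_qPochhammer (hX 5) (hX 6))).mul
    (tendsto_qPochhammer (hX 6) (hX 6))

end ModSeven

section RogersSelbergPartitions

lemma le_largestRepeatedPart {n : ℕ} {π : n.Partition} {j : ℕ} (h : 2 ≤ π.parts.count j) :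
    j ≤ largestRepeatedPart π :=
  le_sup (f := id) <| mem_filter.mpr
    ⟨Multiset.mem_toFinset.mpr (Multiset.count_pos.mp (by omega)), h⟩

lemma two_le_count_largestRepeatedPart {n : ℕ} {π : n.Partition} (h : largestRepeatedPart π ≠ 0) :
    2 ≤ π.parts.count (largestRepeatedPart π) := by
  have nonempty : (π.parts.toFinset.filter fun j ↦ 2 ≤ π.parts.count j).Nonempty :=
    nonempty_iff_ne_empty.mpr fun e ↦ h (by rw [largestRepeatedPart, e, sup_empty, bot_eq_zero])
  obtain ⟨j, hj, hsup⟩ := exists_mem_eq_sup _ nonempty id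
  rw [largestRepeatedPart, hsup]
  exact (mem_filter.mp hj).2

/-- The condition, on the multiset of parts of a partition counted by `A₁`, that its largest
repeated part is `2 * m`. -/
structure IsRogersSelberg (m : ℕ) (s : Multiset ℕ) : Prop where
  count_odd : ∀ j ≤ 2 * m + 1, Odd j → s.count j = 0
  two_le_count_even : ∀ j ≤ 2 * m, Even j → 0 < j → 2 ≤ s.count j
  count_le_one : ∀ j > 2 * m + 1, s.count j ≤ 1

lemma IsRogersSelberg.le {m m' : ℕ} {s : Multiset ℕ} (h : IsRogersSelberg m s)
    (h' : IsRogersSelberg m' s) : m' ≤ m := by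
  by_contra! hlt
  have := h'.two_le_count_even (2 * m') le_rfl (even_two_mul m') (by omega)
  have := h.count_le_one (2 * m') (by omega)
  omega

lemma IsRogersSelberg.largestRepeatedPart_eq {m n : ℕ} {π : n.Partition}
    (h : IsRogersSelberg m π.parts) : largestRepeatedPart π = 2 * m := by
  refine le_antisymm (not_lt.mp fun hlt ↦ ?_) ?_
  · have repeated := two_le_count_largestRepeatedPart (Nat.ne_zero_of_lt hlt)
    obtain hle | hgt := le_or_gt (largestRepeatedPart π) (2 * m + 1)
    · have := h.count_odd _ hle ⟨m, by omega⟩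
      omega
    · have := h.count_le_one _ hgt
      omega
  · obtain rfl | hm := m.eq_zero_or_pos
    · exact Nat.zero_le _
    · exact le_largestRepeatedPart (h.two_le_count_even _ le_rfl (even_two_mul m) (by omega))

theorem exists_isRogersSelberg_iff {n : ℕ} (π : n.Partition) :
    (∃ m, IsRogersSelberg m π.parts) ↔
      (∀ j, Odd j → π.parts.count j ≤ 1) ∧
        (∀ j, Odd j → j < largestRepeatedPart π + 2 → π.parts.count j = 0) ∧
        (∀ j, Even j → 0 < j → j < largestRepeatedPart π → 2 ≤ π.parts.count j) := by
  constructor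
  · rintro ⟨m, h⟩
    rw [h.largestRepeatedPart_eq]
    refine ⟨fun j hj ↦ ?_, fun j hj hlt ↦ h.count_odd j (by omega) hj,
      fun j hj hpos hlt ↦ h.two_le_count_even j hlt.le hj hpos⟩
    obtain hle | hgt := le_or_gt j (2 * m + 1)
    · exact (h.count_odd j hle hj).trans_le zero_le_one
    · exact h.count_le_one j hgt
  · rintro ⟨odd_le_one, odd_eq_zero, two_le_even⟩
    have even : Even (largestRepeatedPart π) := by
      by_contra hodd
      rw [Nat.not_even_iff_odd] at hodd
      have := odd_le_one _ hodd
      have := two_le_count_largestRepeatedPart hodd.pos.ne'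
      omega
    obtain ⟨m, hm⟩ := even.two_dvd
    refine ⟨m, fun j hle hj ↦ odd_eq_zero j hj (by omega), fun j hle hj hpos ↦ ?_, fun j hgt ↦ ?_⟩
    · obtain rfl | hlt := hle.eq_or_lt
      · exact hm ▸ two_le_count_largestRepeatedPart (by omega)
      · exact two_le_even j hj hpos (by omega)
    · by_contra! h
      have := le_largestRepeatedPart h
      omega

/-- The multiset `{2, 2, 4, 4, …, 2 * m, 2 * m}`. -/
def evenPairs (m : ℕ) : Multiset ℕ := 2 • (Multiset.range m).map fun i ↦ 2 * (i + 1)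

lemma evenPairs_succ (m : ℕ) :
    evenPairs (m + 1) = 2 • {2 * (m + 1)} + evenPairs m := by
  rw [evenPairs, Multiset.range_succ, Multiset.map_cons, ← Multiset.singleton_add, nsmul_add,
    evenPairs]

lemma sum_evenPairs (m : ℕ) : (evenPairs m).sum = 2 * m ^ 2 + 2 * m := by
  induction m with
  | zero => rfl
  | succ m ih =>
    rw [evenPairs_succ, Multiset.sum_add, ih, Multiset.sum_nsmul, Multiset.sum_singleton,
      smul_eq_mul]
    ring

lemma count_evenPairs (m j : ℕ) :
    (evenPairs m).count j = if Even j ∧ 0 < j ∧ j ≤ 2 * m then 2 else 0 := by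
  induction m with
  | zero =>
    rw [evenPairs, Multiset.range_zero, Multiset.map_zero, nsmul_zero, Multiset.count_zero,
      if_neg (by omega)]
  | succ m ih =>
    rw [evenPairs_succ, Multiset.count_add, ih, Multiset.count_nsmul, Multiset.count_singleton]
    grind

lemma isRogersSelberg_iff {m : ℕ} {s : Multiset ℕ} (hs : 0 ∉ s) :
    IsRogersSelberg m s ↔ evenPairs m ≤ s ∧ ∀ i ∈ s - evenPairs m,
      if i ≤ 2 * m + 1 then Even i else (s - evenPairs m).count i ≤ 1 := by
  rw [← Multiset.count_eq_zero] at hs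
  simp only [Multiset.le_iff_count, ← Multiset.count_pos, Multiset.count_sub, count_evenPairs]
  exact ⟨fun ⟨_, _, _⟩ ↦ ⟨by grind, by grind⟩,
    fun ⟨_, _⟩ ↦ ⟨by grind, by grind, by grind⟩⟩

lemma partitionGF_isRogersSelberg_eq_X_pow_mul (m : ℕ) :
    partitionGF (IsRogersSelberg m) = X ^ (2 * m ^ 2 + 2 * m) *
      partitionGF fun s ↦ ∀ i ∈ s, if i ≤ 2 * m + 1 then Even i else s.count i ≤ 1 := by
  rw [partitionGF_congr fun s hs ↦ isRogersSelberg_iff hs, ← sum_evenPairs m,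
    ← partitionGF_le_and_sub _ fun h0 ↦ ?_]
  have := Multiset.count_pos.mpr h0
  simp [count_evenPairs] at this

lemma mul_prod_range_eq_of_hasProd {M : Type*} [CommMonoid M] [TopologicalSpace M]
    [ContinuousMul M] [T2Space M] {f g : ℕ → M} {a b : M} (hf : HasProd f a) (hg : HasProd g b)
    {N : ℕ} (h : ∀ i ≥ N, f i = g i) :
    a * ∏ i ∈ range N, g i = b * ∏ i ∈ range N, f i := by
  refine tendsto_nhds_unique (hf.tendsto_prod_nat.mul_const _)
    ((hg.tendsto_prod_nat.mul_const _).congr' ?_)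
  filter_upwards [eventually_ge_atTop N] with n hn
  rw [← prod_range_mul_prod_Ico f hn, ← prod_range_mul_prod_Ico g hn,
    prod_congr rfl fun i hi ↦ h i (mem_Ico.mp hi).1]
  ac_rfl

lemma prod_range_even_one_sub_X_pow (m : ℕ) :
    ∏ i ∈ range (2 * m + 1), (if Even (i + 1) then 1 - X ^ (i + 1) else 1 : ℤ⟦X⟧) =
      qPochhammer (X ^ 2) (X ^ 2) m := by
  induction m with
  | zero => simp
  | succ m ih =>
    rw [show 2 * (m + 1) + 1 = 2 * m + 1 + 1 + 1 by ring, prod_range_succ, prod_range_succ, ih,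
      qPochhammer_succ, if_pos (by grind), if_neg (by grind)]
    ring

theorem partitionGF_even_or_le_one_mul_qPochhammer (m : ℕ) :
    partitionGF (fun s ↦ ∀ i ∈ s, if i ≤ 2 * m + 1 then Even i else s.count i ≤ 1) *
        (qPochhammer (X ^ 2) (X ^ 2) m * qPochhammer (-X) X (2 * m + 1)) =
      qPochhammerInf (-X) X := by
  have small : ∀ i ∈ range (2 * m + 1),
      partFactor (fun i c ↦ if i ≤ 2 * m + 1 then Even i else c ≤ 1) (i + 1) *
        (if Even (i + 1) then 1 - X ^ (i + 1) else 1) = 1 := fun i hi ↦ by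
    have hle : i + 1 ≤ 2 * m + 1 := mem_range.mp hi
    split_ifs with heven
    · exact partFactor_mul_one_sub i.succ_pos fun _ ↦ by rwa [if_pos hle]
    · rw [partFactor_eq_one fun _ ↦ by rwa [if_pos hle], one_mul]
  have large : ∀ i ≥ 2 * m + 1,
      partFactor (fun i c ↦ if i ≤ 2 * m + 1 then Even i else c ≤ 1) (i + 1) = 1 - -X * X ^ i :=
    fun i hi ↦ by
      rw [partFactor_eq_one_add fun _ ↦ by rw [if_neg (by omega)], pow_succ']
      ring
  have exchange := mul_prod_range_eq_of_hasProd (hasProd_partFactor _)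
    (hasProd_qPochhammerInf (dvd_rfl : (X : ℤ⟦X⟧) ∣ X).neg_right dvd_rfl) large
  have inverse := prod_eq_one small
  rw [prod_mul_distrib, prod_range_even_one_sub_X_pow] at inverse
  rw [← qPochhammer] at exchange
  linear_combination qPochhammer (X ^ 2) (X ^ 2) m * exchange + qPochhammerInf (-X) X * inverse

theorem partitionGF_isRogersSelberg (m : ℕ) :
    partitionGF (IsRogersSelberg m) = X ^ (2 * m ^ 2 + 2 * m) * invQPochhammer (X ^ 2) (2 * m + 1) *
      qPochhammer X (X ^ 2) (m + 1) * qPochhammerInf (-X) X := by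
  have cancel := qPochhammer_mul_invQPochhammer (dvd_pow_self (X : ℤ⟦X⟧) two_ne_zero) (2 * m + 1)
  rw [partitionGF_isRogersSelberg_eq_X_pow_mul, ← partitionGF_even_or_le_one_mul_qPochhammer m]
  rw [qPochhammer_sq_sq_two_mul_add_one] at cancel
  linear_combination (-X ^ (2 * m ^ 2 + 2 * m) * partitionGF fun s ↦
    ∀ i ∈ s, if i ≤ 2 * m + 1 then Even i else s.count i ≤ 1) * cancel

theorem partitionGF_exists_isRogersSelberg_mul_qPochhammerInf :
    partitionGF (fun s ↦ ∃ m, IsRogersSelberg m s) * qPochhammerInf X X =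
      qPochhammerInf X (X ^ 7) * qPochhammerInf (X ^ 6) (X ^ 7) *
        qPochhammerInf (X ^ 7) (X ^ 7) := by
  have by_class := hasSum_partitionGF fun s m m' (h : IsRogersSelberg m s) h' ↦
    le_antisymm (h'.le h) (h.le h')
  simp only [partitionGF_isRogersSelberg] at by_class
  have gf_eq := by_class.unique
    ((hasSum_rogers_selberg (dvd_refl (X : ℤ⟦X⟧))).mul_right (qPochhammerInf (-X) X))
  have euler := qPochhammerInf_mul_qPochhammerInf_neg (dvd_refl (X : ℤ⟦X⟧)) dvd_rfl
  have cancel := qPochhammerInf_mul_invQPochhammerInf (dvd_pow_self (X : ℤ⟦X⟧) two_ne_zero)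
  rw [← euler] at cancel
  rw [gf_eq]
  linear_combination (qPochhammerInf X (X ^ 7) * qPochhammerInf (X ^ 6) (X ^ 7) *
    qPochhammerInf (X ^ 7) (X ^ 7)) * cancel

theorem partitionGF_exists_isRogersSelberg :
    partitionGF (fun s ↦ ∃ m, IsRogersSelberg m s) =
      partitionGF fun s ↦ ∀ i ∈ s, i % 7 ≠ 0 ∧ i % 7 ≠ 1 ∧ i % 7 ≠ 6 :=
  (isUnit_qPochhammerInf dvd_rfl dvd_rfl).mul_right_cancel <|
    partitionGF_exists_isRogersSelberg_mul_qPochhammerInf.trans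
      partitionGF_mod_seven_mul_qPochhammerInf.symm

end RogersSelbergPartitions

/-- Interpretation of the first Rogers–Selberg identity: `A₁(n) = C_{3,1}(n)`.
A partition is counted by `A₁(n)` iff every odd part appears at most once, no odd part less than
(largest repeated part) + 2 appears, and every positive even integer less than the largest
repeated part appears at least twice (no part greater than the largest repeated part being
repeated, by definition). -/
theorem A1_eq_C31 (n : ℕ) :
    Nat.card {π : n.Partition //
        (∀ j, Odd j → π.parts.count j ≤ 1) ∧
        (∀ j, Odd j → j < largestRepeatedPart π + 2 → π.parts.count j = 0) ∧
        (∀ j, Even j → 0 < j → j < largestRepeatedPart π → 2 ≤ π.parts.count j)} =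
      Nat.card {π : n.Partition //
        ∀ j ∈ π.parts, j % 7 ≠ 0 ∧ j % 7 ≠ 1 ∧ j % 7 ≠ 6} := by
  have coeff_eq := congrArg (coeff n) partitionGF_exists_isRogersSelberg
  rw [coeff_partitionGF, coeff_partitionGF, Nat.cast_inj] at coeff_eq
  simpa only [exists_isRogersSelberg_iff] using coeff_eq
end
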